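/- Let U ⊂ X be a 1-quasiopen set and let u be a function with ‖Du‖(U) < ∞ (i.e. there is an open set Ω ⊃ U with u ∈ L^1_loc(Ω) and ‖Du‖(Ω) < ∞). Then ‖Du‖(U) = inf{ liminf_{i→∞} ∫_U g_{u_i} dμ : u_i ∈ N^{1,1}_loc(U), u_i → u in L^1_loc(U) }, where each g_{u_i} is the minimal 1-weak upper gradient of u_i in U. -/

import Mathlib

open MeasureTheory Filter Metric Set
open scoped Topology ENNReal NNReal symmDiff

noncomputable section

namespace PaperBV

/-- A rectifiable curve parametrized by arc-length: a `1`-Lipschitz map on `[0, len]`. -/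
structure Curve (X : Type*) [MetricSpace X] where
  len : ℝ
  len_nonneg : 0 ≤ len
  toFun : ℝ → X
  lip : LipschitzOnWith 1 toFun (Set.Icc 0 len)

variable {X : Type*} [MetricSpace X] [MeasurableSpace X] [BorelSpace X]

/-- The curve lies in the set `A`. -/
def Curve.In (γ : Curve X) (A : Set X) : Prop :=
  ∀ t ∈ Set.Icc (0 : ℝ) γ.len, γ.toFun t ∈ A

/-- The curve integral `∫_γ g ds` of a nonnegative function, for an
arc-length parametrized curve. -/
def Curve.integral (γ : Curve X) (g : X → ℝ≥0∞) : ℝ≥0∞ :=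
  ∫⁻ t in Set.Icc (0 : ℝ) γ.len, g (γ.toFun t)

/-- The upper gradient inequality `|u(x) - u(y)| ≤ ∫_γ g ds` along the curve `γ`,
where `x, y` are the endpoints of `γ`. -/
def UGIneq (u : X → ℝ) (g : X → ℝ≥0∞) (γ : Curve X) : Prop :=
  ENNReal.ofReal |u (γ.toFun 0) - u (γ.toFun γ.len)| ≤ γ.integral g

/-- `g` is an upper gradient of `u` on `X`: `g` is nonnegative (automatic in `ℝ≥0∞`),
Borel, and the upper gradient inequality holds along every curve. -/
def IsUpperGradient (u : X → ℝ) (g : X → ℝ≥0∞) : Prop :=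
  Measurable g ∧ ∀ γ : Curve X, UGIneq u g γ

/-- A family of curves has zero `1`-modulus: there is a nonnegative Borel function
`ρ ∈ L¹(X)` whose curve integral is infinite along every curve of the family. -/
def ZeroMod (μ : Measure X) (Γ : Set (Curve X)) : Prop :=
  ∃ ρ : X → ℝ≥0∞, Measurable ρ ∧ (∫⁻ x, ρ x ∂μ) < ∞ ∧ ∀ γ ∈ Γ, γ.integral ρ = ∞

/-- `g` is a `1`-weak upper gradient of `u` in `A`: `g` is nonnegative, `μ`-measurable,
and the upper gradient inequality holds along `1`-a.e. curve in `A`. -/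
def IsWeakUpperGradientOn (μ : Measure X) (u : X → ℝ) (g : X → ℝ≥0∞) (A : Set X) : Prop :=
  AEMeasurable g μ ∧ ZeroMod μ {γ : Curve X | γ.In A ∧ ¬ UGIneq u g γ}

/-- A nonnegative function `g` belongs to `L¹_loc(A)`. -/
def LIntegrableLocOn (μ : Measure X) (g : X → ℝ≥0∞) (A : Set X) : Prop :=
  ∀ x ∈ A, ∃ r > (0 : ℝ), (∫⁻ y in A ∩ Metric.ball x r, g y ∂μ) < ∞

/-- `g` is the minimal `1`-weak upper gradient of `u` in `A`: a `1`-weak upper gradient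
satisfying `g ≤ g'` `μ`-a.e. in `A` for every `1`-weak upper gradient `g' ∈ L¹_loc(A)`. -/
def IsMinimalWUG (μ : Measure X) (u : X → ℝ) (g : X → ℝ≥0∞) (A : Set X) : Prop :=
  IsWeakUpperGradientOn μ u g A ∧
    ∀ g' : X → ℝ≥0∞, IsWeakUpperGradientOn μ u g' A → LIntegrableLocOn μ g' A →
      ∀ᵐ x ∂(μ.restrict A), g x ≤ g' x

/-- The Newtonian norm `‖u‖_{N^{1,1}(A)}` (valued in `ℝ≥0∞`). -/
def NNorm (μ : Measure X) (A : Set X) (u : X → ℝ) : ℝ≥0∞ :=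
  (∫⁻ x in A, ENNReal.ofReal |u x| ∂μ) +
    ⨅ (g : X → ℝ≥0∞) (_ : IsWeakUpperGradientOn μ u g A), ∫⁻ x in A, g x ∂μ

/-- `u ∈ N^{1,1}(A)`. -/
def MemN11 (μ : Measure X) (A : Set X) (u : X → ℝ) : Prop :=
  NNorm μ A u < ∞

/-- `u ∈ N^{1,1}_loc(A)`: every point of `A` has a ball `B` with `u ∈ N^{1,1}(A ∩ B)`. -/
def MemN11Loc (μ : Measure X) (A : Set X) (u : X → ℝ) : Prop :=
  ∀ x ∈ A, ∃ r > (0 : ℝ), NNorm μ (A ∩ Metric.ball x r) u < ∞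

/-- `u ∈ N^{1,1}(Ω')` for every bounded open `Ω' ⊆ X`. -/
def MemN11LocBounded (μ : Measure X) (u : X → ℝ) : Prop :=
  ∀ Ω' : Set X, IsOpen Ω' → Bornology.IsBounded Ω' → NNorm μ Ω' u < ∞

/-- `u ∈ N^{1,1}_0(Ω)`: `u ∈ N^{1,1}(X)` and `u = 0` outside `Ω`. -/
def MemN110 (μ : Measure X) (Ω : Set X) (u : X → ℝ) : Prop :=
  MemN11 μ Set.univ u ∧ ∀ x ∉ Ω, u x = 0

/-- The `1`-capacity `capa₁(A) = inf {‖u‖_{N^{1,1}(X)} : u ∈ N^{1,1}(X), u ≥ 1 on A}`. -/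
def capa1 (μ : Measure X) (A : Set X) : ℝ≥0∞ :=
  ⨅ (u : X → ℝ) (_ : MemN11 μ Set.univ u) (_ : ∀ x ∈ A, 1 ≤ u x), NNorm μ Set.univ u

/-- `U` is `1`-quasiopen: for every `ε > 0` there is an open `G` with `capa₁(G) < ε`
such that `U ∪ G` is open. -/
def QuasiOpen (μ : Measure X) (U : Set X) : Prop :=
  ∀ ε : ℝ, 0 < ε → ∃ G : Set X, IsOpen G ∧ capa1 μ G < ENNReal.ofReal ε ∧ IsOpen (U ∪ G)

/-- `u ∈ L¹_loc(A)`. -/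
def MemL1Loc (μ : Measure X) (A : Set X) (u : X → ℝ) : Prop :=
  AEMeasurable u (μ.restrict A) ∧
    ∀ x ∈ A, ∃ r > (0 : ℝ), (∫⁻ y in A ∩ Metric.ball x r, ENNReal.ofReal |u y| ∂μ) < ∞

/-- `v i → u` in `L¹_loc(A)`: every `x ∈ A` has a ball `B` with `v i → u` in `L¹(A ∩ B)`. -/
def L1LocConv (μ : Measure X) (A : Set X) (v : ℕ → X → ℝ) (u : X → ℝ) : Prop :=
  ∀ x ∈ A, ∃ r > (0 : ℝ),
    Filter.Tendsto (fun i => ∫⁻ y in A ∩ Metric.ball x r, ENNReal.ofReal |v i y - u y| ∂μ)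
      Filter.atTop (𝓝 0)

/-- `u` is locally Lipschitz on `Ω`. -/
def LocLipOn (u : X → ℝ) (Ω : Set X) : Prop :=
  ∀ x ∈ Ω, ∃ r > (0 : ℝ), ∃ K : ℝ≥0, LipschitzOnWith K u (Ω ∩ Metric.ball x r)

/-- The total variation `‖Du‖(Ω)` of `u` in an open set `Ω`: the infimum of
`liminf_i ∫_Ω g_{v i} dμ` over sequences of locally Lipschitz functions `v i → u`
in `L¹_loc(Ω)`, where `g_{v i}` is the minimal `1`-weak upper gradient of `v i` in `Ω`. -/
def tvOpen (μ : Measure X) (Ω : Set X) (u : X → ℝ) : ℝ≥0∞ :=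
  ⨅ (v : ℕ → X → ℝ) (g : ℕ → X → ℝ≥0∞) (_ : ∀ i, LocLipOn (v i) Ω)
    (_ : ∀ i, IsMinimalWUG μ (v i) (g i) Ω) (_ : L1LocConv μ Ω v u),
    Filter.liminf (fun i => ∫⁻ x in Ω, g i x ∂μ) Filter.atTop

/-- The total variation `‖Du‖(A)` of `u` in an arbitrary set `A`:
`inf {‖Du‖(Ω) : Ω ⊇ A open}`. -/
def tv (μ : Measure X) (A : Set X) (u : X → ℝ) : ℝ≥0∞ :=
  ⨅ (Ω : Set X) (_ : IsOpen Ω) (_ : A ⊆ Ω), tvOpen μ Ω u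

/-- The perimeter `P(E, A) = ‖Dχ_E‖(A)` for arbitrary `A`. -/
def perim (μ : Measure X) (E A : Set X) : ℝ≥0∞ :=
  tv μ A (Set.indicator E (fun _ => (1 : ℝ)))

/-- The perimeter `P(E, Ω) = ‖Dχ_E‖(Ω)` for open `Ω`. -/
def perimOpen (μ : Measure X) (E Ω : Set X) : ℝ≥0∞ :=
  tvOpen μ Ω (Set.indicator E (fun _ => (1 : ℝ)))

/-- The measure `μ` is doubling with constant `Cd`. -/
def Doubling (μ : Measure X) (Cd : ℝ) : Prop :=
  1 ≤ Cd ∧ ∀ (x : X) (r : ℝ), 0 < r →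
    0 < μ (Metric.ball x (2 * r)) ∧
      μ (Metric.ball x (2 * r)) ≤ ENNReal.ofReal Cd * μ (Metric.ball x r) ∧
      μ (Metric.ball x r) < ∞

/-- The space supports a `(1,1)`-Poincaré inequality with constants `CP, lam`. -/
def Poincare (μ : Measure X) (CP lam : ℝ) : Prop :=
  1 ≤ CP ∧ 1 ≤ lam ∧ ∀ (x : X) (r : ℝ), 0 < r → ∀ (u : X → ℝ) (g : X → ℝ≥0∞),
    MemL1Loc μ Set.univ u → IsUpperGradient u g →
      ENNReal.ofReal (⨍ y in Metric.ball x r, |u y - ⨍ z in Metric.ball x r, u z ∂μ| ∂μ)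
        ≤ ENNReal.ofReal (CP * r) *
            ((∫⁻ y in Metric.ball x (lam * r), g y ∂μ) / μ (Metric.ball x (lam * r)))

/-- The restricted spherical Hausdorff content of codimension one. -/
def HR (μ : Measure X) (R : ℝ) (A : Set X) : ℝ≥0∞ :=
  ⨅ (c : ℕ → X) (r : ℕ → ℝ) (_ : ∀ i, 0 < r i ∧ r i ≤ R)
    (_ : A ⊆ ⋃ i, Metric.ball (c i) (r i)),
    ∑' i, μ (Metric.ball (c i) (r i)) / ENNReal.ofReal (r i)

/-- The codimension-one Hausdorff measure `H(A) = lim_{R → 0} H_R(A)`. -/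
def Hcodim (μ : Measure X) (A : Set X) : ℝ≥0∞ :=
  ⨆ (R : ℝ) (_ : 0 < R), HR μ R A

/-- The lower approximate limit `u^∧`. -/
def lowerApprox (μ : Measure X) (u : X → ℝ) (x : X) : EReal :=
  sSup ((fun t : ℝ => (t : EReal)) ''
    {t : ℝ | Filter.Tendsto
      (fun r => μ (Metric.ball x r ∩ {y | u y < t}) / μ (Metric.ball x r))
      (𝓝[>] (0 : ℝ)) (𝓝 0)})

/-- The upper approximate limit `u^∨`. -/
def upperApprox (μ : Measure X) (u : X → ℝ) (x : X) : EReal :=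
  sInf ((fun t : ℝ => (t : EReal)) ''
    {t : ℝ | Filter.Tendsto
      (fun r => μ (Metric.ball x r ∩ {y | t < u y}) / μ (Metric.ball x r))
      (𝓝[>] (0 : ℝ)) (𝓝 0)})

/-- `u ∈ BV_loc(X)`: `u ∈ L¹_loc(X)` with `‖Du‖(Ω') < ∞` for every bounded open `Ω'`. -/
def MemBVLoc (μ : Measure X) (u : X → ℝ) : Prop :=
  MemL1Loc μ Set.univ u ∧
    ∀ Ω' : Set X, IsOpen Ω' → Bornology.IsBounded Ω' → tvOpen μ Ω' u < ∞

/-- The measure-theoretic interior `I_E`. -/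
def mInterior (μ : Measure X) (E : Set X) : Set X :=
  {x | Filter.Tendsto (fun r => μ (Metric.ball x r \ E) / μ (Metric.ball x r))
    (𝓝[>] (0 : ℝ)) (𝓝 0)}

/-- The measure-theoretic exterior `O_E`. -/
def mExterior (μ : Measure X) (E : Set X) : Set X :=
  {x | Filter.Tendsto (fun r => μ (Metric.ball x r ∩ E) / μ (Metric.ball x r))
    (𝓝[>] (0 : ℝ)) (𝓝 0)}

/-- The measure-theoretic boundary `∂*E`: the points where both `E` and its complement
have positive upper density. -/
def mBoundary (μ : Measure X) (E : Set X) : Set X :=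
  {x | 0 < Filter.limsup (fun r => μ (Metric.ball x r ∩ E) / μ (Metric.ball x r))
        (𝓝[>] (0 : ℝ)) ∧
       0 < Filter.limsup (fun r => μ (Metric.ball x r \ E) / μ (Metric.ball x r))
        (𝓝[>] (0 : ℝ))}



set_option linter.unusedSectionVars false
set_option linter.unusedVariables false
set_option linter.deprecated false
set_option linter.style.longLine false


/-! ### One-dimensional lemmas -/

lemma loc_glob {f : ℝ → ℝ} {a : ℝ → ℝ≥0∞} {p q : ℝ}
    (h : ∀ x ∈ Icc p q, ∃ δ > 0, ∀ s t, p ≤ s → s ≤ t → t ≤ q → |s - x| < δ → |t - x| < δ →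
      ENNReal.ofReal |f s - f t| ≤ ∫⁻ r in Ioc s t, a r) :
    ∀ s t, p ≤ s → s ≤ t → t ≤ q → ENNReal.ofReal |f s - f t| ≤ ∫⁻ r in Ioc s t, a r := by
  choose! δ hδ hh using h
  obtain ⟨d, hd, hL⟩ := lebesgue_number_lemma_of_metric (s := Icc p q) (ι := Icc p q)
    (c := fun i => ball (i : ℝ) (δ i)) isCompact_Icc (fun i => isOpen_ball)
    (fun x hx => mem_iUnion.2 ⟨⟨x, hx⟩, mem_ball_self (hδ x hx)⟩)
  have key : ∀ n : ℕ, ∀ s t, p ≤ s → s ≤ t → t ≤ q → t - s ≤ n * (d / 2) →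
      ENNReal.ofReal |f s - f t| ≤ ∫⁻ r in Ioc s t, a r := by
    intro n
    induction n with
    | zero =>
      intro s t hs hst ht hn
      have : s = t := by simp at hn; linarith
      subst this; simp
    | succ n ih =>
      intro s t hs hst ht hn
      set m := max s (t - d / 2) with hm
      have hsm : s ≤ m := le_max_left _ _
      have hmt : m ≤ t := max_le hst (by linarith)
      have h1 : ENNReal.ofReal |f s - f m| ≤ ∫⁻ r in Ioc s m, a r := by
        apply ih s m hs hsm (hmt.trans ht)
        rcases le_total s (t - d/2) with h | h
        · rw [hm, max_eq_right h]; push_cast at hn; linarith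
        · rw [hm, max_eq_left h]; simp; positivity
      have h2 : ENNReal.ofReal |f m - f t| ≤ ∫⁻ r in Ioc m t, a r := by
        obtain ⟨i, hi⟩ := hL m ⟨hs.trans hsm, hmt.trans ht⟩
        have hmi : m ∈ ball (i:ℝ) (δ i) := hi (mem_ball_self hd)
        have hti : t ∈ ball (i:ℝ) (δ i) := hi (by
          rw [mem_ball, Real.dist_eq, abs_of_nonneg (by linarith)]
          have : t - d/2 ≤ m := le_max_right _ _
          linarith)
        exact hh i i.2 m t (hs.trans hsm) hmt ht hmi hti
      calc ENNReal.ofReal |f s - f t| ≤ ENNReal.ofReal (|f s - f m| + |f m - f t|) :=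
            ENNReal.ofReal_le_ofReal (abs_sub_le _ _ _)
        _ ≤ (∫⁻ r in Ioc s m, a r) + ∫⁻ r in Ioc m t, a r := by
            rw [ENNReal.ofReal_add (abs_nonneg _) (abs_nonneg _)]
            exact add_le_add h1 h2
        _ = ∫⁻ r in Ioc s t, a r := by
            rw [← Ioc_union_Ioc_eq_Ioc hsm hmt, lintegral_union measurableSet_Ioc]
            exact Ioc_disjoint_Ioc_of_le le_rfl
  intro s t hs hst ht
  obtain ⟨n, hn⟩ := exists_nat_ge ((t - s) / (d / 2))
  exact key n s t hs hst ht (by rwa [div_le_iff₀ (by positivity)] at hn)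

/-- domination of increments of `f` by integrals of `a` on `[p,q]` -/
def Dom (f : ℝ → ℝ) (a : ℝ → ℝ≥0∞) (p q : ℝ) : Prop :=
  ∀ s t, p ≤ s → s ≤ t → t ≤ q → ENNReal.ofReal |f s - f t| ≤ ∫⁻ r in Ioc s t, a r

lemma Dom.unif {f : ℝ → ℝ} {a : ℝ → ℝ≥0∞} {p q : ℝ} (h : Dom f a p q)
    (hfin : ∫⁻ r in Ioc p q, a r ≠ ∞) {κ : ℝ} (hκ : 0 < κ) :
    ∃ δ > 0, ∀ s t, p ≤ s → s ≤ q → p ≤ t → t ≤ q → |s - t| < δ → |f s - f t| ≤ κ := by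
  obtain ⟨δ, hδ, hd⟩ := exists_pos_setLIntegral_lt_of_measure_lt hfin
    (ε := ENNReal.ofReal κ) (by simpa using hκ)
  obtain ⟨d, hd0, hdδ⟩ : ∃ d : ℝ, 0 < d ∧ ENNReal.ofReal d ≤ δ := by
    obtain ⟨x, hx, hx'⟩ := ENNReal.lt_iff_exists_nnreal_btwn.1 hδ
    exact ⟨x, by exact_mod_cast hx, by simpa using hx'.le⟩
  have key : ∀ s t, p ≤ s → s ≤ t → t ≤ q → |s - t| < d → |f s - f t| ≤ κ := by
    intro s t hs hst ht hd'
    have h1 := h s t hs hst ht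
    have h2 : ∫⁻ r in Ioc s t, a r < ENNReal.ofReal κ := by
      have := hd (Ioc s t) (by
        calc (volume.restrict (Ioc p q)) (Ioc s t) ≤ volume (Ioc s t) := Measure.restrict_apply_le _ _
          _ = ENNReal.ofReal (t - s) := Real.volume_Ioc
          _ < δ := lt_of_lt_of_le ((ENNReal.ofReal_lt_ofReal_iff hd0).2 (by
              rw [abs_sub_comm, abs_of_nonneg (by linarith)] at hd'; exact hd')) hdδ)
      rwa [Measure.restrict_restrict measurableSet_Ioc,
        inter_eq_left.2 (Ioc_subset_Ioc hs ht)] at this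
    exact ((ENNReal.ofReal_lt_ofReal_iff hκ).1 (h1.trans_lt h2)).le
  refine ⟨d, hd0, fun s t hs hs' ht ht' hst => ?_⟩
  rcases le_total s t with h | h
  · exact key s t hs h ht' hst
  · rw [abs_sub_comm]; rw [abs_sub_comm] at hst; exact key t s ht h hs' hst

lemma Dom.leibniz {f1 f2 η : ℝ → ℝ} {a1 a2 b c : ℝ → ℝ≥0∞} {p q : ℝ}
    (h1 : Dom f1 a1 p q) (h2 : Dom f2 a2 p q) (h3 : Dom η b p q)
    (m1 : Measurable a1) (m2 : Measurable a2) (m3 : Measurable b)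
    (i1 : ∫⁻ r in Ioc p q, a1 r ≠ ∞) (i2 : ∫⁻ r in Ioc p q, a2 r ≠ ∞)
    (i3 : ∫⁻ r in Ioc p q, b r ≠ ∞)
    (hη : ∀ t ∈ Icc p q, 0 ≤ η t ∧ η t ≤ 1)
    (hc : ∀ t ∈ Icc p q, ENNReal.ofReal |f1 t - f2 t| ≤ c t) :
    Dom (fun t => (1 - η t) * f1 t + η t * f2 t)
      (fun t => ENNReal.ofReal (1 - η t) * a1 t + ENNReal.ofReal (η t) * a2 t + c t * b t) p q := by
  set w := fun t => (1 - η t) * f1 t + η t * f2 t with hw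
  set A := fun t => ENNReal.ofReal (1 - η t) * a1 t + ENNReal.ofReal (η t) * a2 t + c t * b t
    with hA
  have step : ∀ κ : ℝ, 0 < κ → Dom w (fun t => A t +
      ENNReal.ofReal κ * (a1 t + a2 t + b t)) p q := by
    intro κ hκ
    obtain ⟨d1, hd1, H1⟩ := h1.unif i1 (half_pos hκ)
    obtain ⟨d2, hd2, H2⟩ := h2.unif i2 (half_pos hκ)
    obtain ⟨d3, hd3, H3⟩ := h3.unif i3 hκ
    apply loc_glob
    intro x hx
    refine ⟨min d1 (min d2 d3) / 2, by positivity, fun s t hs hst ht hsx htx => ?_⟩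
    have hst' : t - s < min d1 (min d2 d3) := by
      have := abs_sub_le t x s
      rw [abs_of_nonneg (by linarith : 0 ≤ t - s), abs_sub_comm x s] at this
      linarith
    have hlt1 : t - s < d1 := hst'.trans_le (min_le_left _ _)
    have hlt2 : t - s < d2 := hst'.trans_le ((min_le_right _ _).trans (min_le_left _ _))
    have hlt3 : t - s < d3 := hst'.trans_le ((min_le_right _ _).trans (min_le_right _ _))
    have hid : |w s - w t| ≤ (1 - η t) * |f1 s - f1 t| + η t * |f2 s - f2 t|
        + |f1 s - f2 s| * |η s - η t| := by
      have e : w s - w t = (1 - η t) * (f1 s - f1 t) + η t * (f2 s - f2 t)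
        - (f1 s - f2 s) * (η s - η t) := by simp only [hw]; ring
      have hηt := hη t ⟨by linarith, ht⟩
      rw [e]
      refine (abs_sub _ _).trans (add_le_add ((abs_add_le _ _).trans (add_le_add ?_ ?_)) ?_)
      · rw [abs_mul, abs_of_nonneg (by linarith : 0 ≤ 1 - η t)]
      · rw [abs_mul, abs_of_nonneg hηt.1]
      · rw [abs_mul]
    have hηt := hη t ⟨by linarith, ht⟩
    calc ENNReal.ofReal |w s - w t|
        ≤ ENNReal.ofReal ((1 - η t) * |f1 s - f1 t| + η t * |f2 s - f2 t|
        + |f1 s - f2 s| * |η s - η t|) := ENNReal.ofReal_le_ofReal hid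
      _ = ENNReal.ofReal (1 - η t) * ENNReal.ofReal |f1 s - f1 t|
          + ENNReal.ofReal (η t) * ENNReal.ofReal |f2 s - f2 t|
          + ENNReal.ofReal |f1 s - f2 s| * ENNReal.ofReal |η s - η t| := by
        have : 0 ≤ 1 - η t := by linarith
        have := hηt.1
        rw [ENNReal.ofReal_add (by positivity) (by positivity),
          ENNReal.ofReal_add (by positivity) (by positivity),
          ENNReal.ofReal_mul (by linarith), ENNReal.ofReal_mul hηt.1,
          ENNReal.ofReal_mul (abs_nonneg _)]
      _ ≤ ENNReal.ofReal (1 - η t) * (∫⁻ r in Ioc s t, a1 r)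
          + ENNReal.ofReal (η t) * (∫⁻ r in Ioc s t, a2 r)
          + ENNReal.ofReal |f1 s - f2 s| * (∫⁻ r in Ioc s t, b r) := by
        gcongr
        · exact h1 s t hs hst ht
        · exact h2 s t hs hst ht
        · exact h3 s t hs hst ht
      _ = ∫⁻ r in Ioc s t, (ENNReal.ofReal (1 - η t) * a1 r + ENNReal.ofReal (η t) * a2 r
            + ENNReal.ofReal |f1 s - f2 s| * b r) := by
        rw [lintegral_add_left (by fun_prop), lintegral_add_left (by fun_prop),
          lintegral_const_mul _ m1, lintegral_const_mul _ m2, lintegral_const_mul _ m3]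
      _ ≤ ∫⁻ r in Ioc s t, (A r + ENNReal.ofReal κ * (a1 r + a2 r + b r)) := by
        refine setLIntegral_mono' measurableSet_Ioc fun r hr => ?_
        have hr1 : p ≤ r := by linarith [hr.1]
        have hr2 : r ≤ q := by linarith [hr.2]
        have hηr := hη r ⟨hr1, hr2⟩
        have e3 := abs_le.1 (H3 r t hr1 hr2 (by linarith) ht
          (by rw [abs_sub_comm, abs_of_nonneg (by linarith [hr.2])]; linarith [hr.1]))
        have e1 := H1 s r hs (by linarith) hr1 hr2
          (by rw [abs_sub_comm, abs_of_nonneg (by linarith [hr.1])]; linarith [hr.2])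
        have e2 := H2 r s hr1 hr2 hs (by linarith)
          (by rw [abs_of_nonneg (by linarith [hr.1])]; linarith [hr.2])
        have c1 : ENNReal.ofReal (1 - η t) ≤ ENNReal.ofReal (1 - η r) + ENNReal.ofReal κ := by
          rw [← ENNReal.ofReal_add (by linarith) hκ.le]
          exact ENNReal.ofReal_le_ofReal (by linarith)
        have c2 : ENNReal.ofReal (η t) ≤ ENNReal.ofReal (η r) + ENNReal.ofReal κ := by
          rw [← ENNReal.ofReal_add (by linarith) hκ.le]
          exact ENNReal.ofReal_le_ofReal (by linarith)
        have c3 : ENNReal.ofReal |f1 s - f2 s| ≤ c r + ENNReal.ofReal κ := by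
          refine le_trans ?_ (add_le_add_left (hc r ⟨hr1, hr2⟩) _)
          rw [← ENNReal.ofReal_add (abs_nonneg _) hκ.le]
          apply ENNReal.ofReal_le_ofReal
          have : f1 s - f2 s = (f1 r - f2 r) + (f1 s - f1 r) + (f2 r - f2 s) := by ring
          rw [this]
          refine (abs_add_le _ _).trans ?_
          have := abs_add_le (f1 r - f2 r) (f1 s - f1 r)
          linarith
        calc _ ≤ (ENNReal.ofReal (1 - η r) + ENNReal.ofReal κ) * a1 r
              + (ENNReal.ofReal (η r) + ENNReal.ofReal κ) * a2 r
              + (c r + ENNReal.ofReal κ) * b r := by gcongr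
          _ = _ := by simp only [hA]; ring
  intro s t hs hst ht
  have hI : ∫⁻ r in Ioc s t, (a1 r + a2 r + b r) ≠ ∞ := by
    rw [lintegral_add_left (by fun_prop), lintegral_add_left (by fun_prop)]
    have hsub := Ioc_subset_Ioc hs ht
    have := (lintegral_mono_set (f := a1) hsub (μ := volume)).trans_lt i1.lt_top
    have := (lintegral_mono_set (f := a2) hsub (μ := volume)).trans_lt i2.lt_top
    have := (lintegral_mono_set (f := b) hsub (μ := volume)).trans_lt i3.lt_top
    simp only [ne_eq, ENNReal.add_eq_top, not_or]
    exact ⟨⟨by simp_all [lt_top_iff_ne_top], by simp_all [lt_top_iff_ne_top]⟩,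
      by simp_all [lt_top_iff_ne_top]⟩
  set I := ∫⁻ r in Ioc s t, (a1 r + a2 r + b r)
  have hlim : Tendsto (fun κ : ℝ => (∫⁻ r in Ioc s t, A r) + ENNReal.ofReal κ * I) (𝓝[>] 0)
      (𝓝 ((∫⁻ r in Ioc s t, A r) + 0 * I)) := by
    apply Tendsto.const_add
    apply ENNReal.Tendsto.mul_const _ (Or.inr hI)
    have : Tendsto (fun κ : ℝ => ENNReal.ofReal κ) (𝓝 0) (𝓝 (ENNReal.ofReal 0)) :=
      (ENNReal.continuous_ofReal.tendsto 0)
    rw [ENNReal.ofReal_zero] at this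
    exact this.mono_left nhdsWithin_le_nhds
  rw [zero_mul, add_zero] at hlim
  refine ge_of_tendsto hlim ?_
  filter_upwards [self_mem_nhdsWithin] with κ hκ
  have := step κ hκ s t hs hst ht
  rwa [lintegral_add_right _ (by fun_prop), lintegral_const_mul _ (by fun_prop)] at this

lemma dom_min {f : ℝ → ℝ} {a1 a2 : ℝ → ℝ≥0∞} {p q : ℝ}
    (h1 : Dom f a1 p q) (h2 : Dom f a2 p q)
    (m1 : Measurable a1) (m2 : Measurable a2)
    (i1 : ∫⁻ r in Ioc p q, a1 r ≠ ∞) (i2 : ∫⁻ r in Ioc p q, a2 r ≠ ∞) :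
    Dom f (fun t => min (a1 t) (a2 t)) p q := by
  have hI : ∫⁻ r in Ioc p q, (a1 r + a2 r) ≠ ∞ := by
    rw [lintegral_add_left m1]; exact ENNReal.add_ne_top.2 ⟨i1, i2⟩
  set ν := (volume.restrict (Ioc p q)).withDensity (fun r => a1 r + a2 r) with hν
  have : IsFiniteMeasure ν := isFiniteMeasure_withDensity hI
  set E := {r | a1 r ≤ a2 r} with hE
  have mE : MeasurableSet E := measurableSet_le m1 m2
  intro s t hs hst ht
  refine ENNReal.le_of_forall_pos_le_add fun ε hε hlt => ?_
  have hε2 : ((ε / 2 : ℝ≥0) : ℝ≥0∞) ≠ 0 := by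
    have : (ε / 2 : ℝ≥0) ≠ 0 := (half_pos hε).ne'
    exact_mod_cast this
  obtain ⟨V, hEV, hVo, hV1, hV2⟩ := mE.exists_isOpen_sdiff_lt (measure_ne_top ν E) hε2
  obtain ⟨V', hEV', hVo', hV1', hV2'⟩ := mE.compl.exists_isOpen_sdiff_lt (measure_ne_top ν Eᶜ) hε2
  have key : Dom f (fun r => min (a1 r) (a2 r) + ((V \ E).indicator a1 r +
      (V' \ Eᶜ).indicator a2 r)) p q := by
    apply loc_glob
    intro x hx
    by_cases hxE : x ∈ E
    · obtain ⟨δ, hδ, hB⟩ := Metric.isOpen_iff.1 hVo x (hEV hxE)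
      refine ⟨δ, hδ, fun s t hs hst ht hsx htx => (h1 s t hs hst ht).trans ?_⟩
      refine setLIntegral_mono' measurableSet_Ioc fun r hr => ?_
      have hrV : r ∈ V := hB (by
        rw [mem_ball, Real.dist_eq, abs_lt]; rw [abs_lt] at hsx htx
        constructor <;> linarith [hr.1, hr.2])
      by_cases hrE : r ∈ E
      · rw [min_eq_left hrE]; exact le_self_add
      · rw [indicator_of_mem (show r ∈ V \ E from ⟨hrV, hrE⟩)]
        exact le_add_left le_self_add
    · obtain ⟨δ, hδ, hB⟩ := Metric.isOpen_iff.1 hVo' x (hEV' hxE)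
      refine ⟨δ, hδ, fun s t hs hst ht hsx htx => (h2 s t hs hst ht).trans ?_⟩
      refine setLIntegral_mono' measurableSet_Ioc fun r hr => ?_
      have hrV : r ∈ V' := hB (by
        rw [mem_ball, Real.dist_eq, abs_lt]; rw [abs_lt] at hsx htx
        constructor <;> linarith [hr.1, hr.2])
      by_cases hrE : r ∈ E
      · rw [indicator_of_mem (show r ∈ V' \ Eᶜ from ⟨hrV, by simpa using hrE⟩)]
        exact le_add_left le_add_self
      · rw [min_eq_right (le_of_lt (not_le.1 hrE))]; exact le_self_add
  refine (key s t hs hst ht).trans ?_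
  have mV : MeasurableSet (V \ E) := hVo.measurableSet.diff mE
  have mV' : MeasurableSet (V' \ Eᶜ) := hVo'.measurableSet.diff mE.compl
  rw [lintegral_add_left (by fun_prop), lintegral_add_left (m1.indicator mV)]
  gcongr
  have aux : ∀ (S : Set ℝ) (a : ℝ → ℝ≥0∞), MeasurableSet S → (∀ r, a r ≤ a1 r + a2 r) →
      ∫⁻ r in Ioc s t, S.indicator a r ≤ ν S := by
    intro S a hS ha
    rw [hν, withDensity_apply _ hS, lintegral_indicator hS, Measure.restrict_restrict hS,
      Measure.restrict_restrict hS]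
    exact (lintegral_mono ha).trans
      (lintegral_mono_set (inter_subset_inter_right _ (Ioc_subset_Ioc hs ht)))
  calc _ ≤ ν (V \ E) + ν (V' \ Eᶜ) := add_le_add (aux _ _ mV fun r => le_self_add)
          (aux _ _ mV' fun r => le_add_self)
    _ ≤ ((ε / 2 : ℝ≥0) : ℝ≥0∞) + ((ε / 2 : ℝ≥0) : ℝ≥0∞) := add_le_add hV2.le hV2'.le
    _ = ε := by rw [← ENNReal.coe_add, add_halves]


/-! ### Curves -/

lemma Curve.exists_cont (γ : Curve X) :
    ∃ c : ℝ → X, Continuous c ∧ ∀ t ∈ Icc (0 : ℝ) γ.len, c t = γ.toFun t := by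
  refine ⟨IccExtend γ.len_nonneg ((Icc 0 γ.len).restrict γ.toFun),
    (γ.lip.continuousOn.restrict).Icc_extend', fun t ht => ?_⟩
  rw [IccExtend_of_mem _ _ ht]; rfl

/-- subcurve -/
def Curve.sub (γ : Curve X) (s t : ℝ) (hs : 0 ≤ s) (hst : s ≤ t) (ht : t ≤ γ.len) : Curve X where
  len := t - s
  len_nonneg := by linarith
  toFun := fun r => γ.toFun (r + s)
  lip := by
    have : LipschitzOnWith 1 (fun r : ℝ => r + s) (Icc 0 (t - s)) := by
      refine LipschitzWith.lipschitzOnWith ?_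
      exact (LipschitzWith.of_dist_le_mul fun x y => by simp)
    have h2 := γ.lip.comp this (fun r hr => ⟨by linarith [hr.1], by linarith [hr.2]⟩)
    rwa [one_mul] at h2

lemma Curve.integral_Ioc (γ : Curve X) (g : X → ℝ≥0∞) :
    γ.integral g = ∫⁻ t in Ioc (0 : ℝ) γ.len, g (γ.toFun t) :=
  (setLIntegral_congr Ioc_ae_eq_Icc).symm

lemma Curve.sub_integral (γ : Curve X) (s t : ℝ) (hs : 0 ≤ s) (hst : s ≤ t) (ht : t ≤ γ.len)
    (g : X → ℝ≥0∞) :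
    (γ.sub s t hs hst ht).integral g = ∫⁻ r in Ioc s t, g (γ.toFun r) := by
  rw [Curve.integral_Ioc]
  have h := (measurePreserving_add_right (volume : Measure ℝ) s).setLIntegral_comp_preimage_emb
    (MeasurableEquiv.addRight s).measurableEmbedding (fun r => g (γ.toFun r)) (Ioc s t)
  rw [← h]
  simp [Curve.sub]

/-- upper gradient along all curves in `A` -/
def UGOn (u : X → ℝ) (g : X → ℝ≥0∞) (A : Set X) : Prop :=
  ∀ γ : Curve X, γ.In A → UGIneq u g γ

lemma dom_of_sub {u : X → ℝ} {g : X → ℝ≥0∞} (γ : Curve X) {p q : ℝ} (hp : 0 ≤ p)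
    (hq : q ≤ γ.len)
    (h : ∀ s t (hs : 0 ≤ s) (hst : s ≤ t) (ht : t ≤ γ.len), p ≤ s → t ≤ q →
      UGIneq u g (γ.sub s t hs hst ht)) :
    Dom (fun t => u (γ.toFun t)) (fun t => g (γ.toFun t)) p q := by
  intro s t hs hst ht
  have := h s t (hp.trans hs) hst (ht.trans hq) hs ht
  unfold UGIneq at this
  rw [Curve.sub_integral] at this
  simpa [Curve.sub] using this

lemma UGOn.dom {u : X → ℝ} {g : X → ℝ≥0∞} {A : Set X} (h : UGOn u g A) (γ : Curve X) {p q : ℝ}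
    (hp : 0 ≤ p) (hq : q ≤ γ.len) (hA : ∀ t ∈ Icc p q, γ.toFun t ∈ A) :
    Dom (fun t => u (γ.toFun t)) (fun t => g (γ.toFun t)) p q := by
  refine dom_of_sub γ hp hq fun s t hs hst ht hs' ht' => h _ fun r hr => hA _ ?_
  have h1 : 0 ≤ r := hr.1
  have h2 : r ≤ t - s := hr.2
  constructor <;> linarith

lemma ugineq_of_dom {u : X → ℝ} {g : X → ℝ≥0∞} {γ : Curve X}
    (h : Dom (fun t => u (γ.toFun t)) (fun t => g (γ.toFun t)) 0 γ.len) : UGIneq u g γ := by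
  unfold UGIneq
  rw [Curve.integral_Ioc]
  exact h 0 γ.len le_rfl γ.len_nonneg le_rfl

lemma Dom.congr {f f' : ℝ → ℝ} {a a' : ℝ → ℝ≥0∞} {p q : ℝ} (h : Dom f a p q)
    (hf : ∀ t ∈ Icc p q, f t = f' t) (ha : ∀ᵐ t ∂(volume.restrict (Ioc p q)), a t = a' t) :
    Dom f' a' p q := by
  intro s t hs hst ht
  rw [← hf s ⟨hs, hst.trans ht⟩, ← hf t ⟨hs.trans hst, ht⟩]
  refine (h s t hs hst ht).trans (le_of_eq (lintegral_congr_ae ?_))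
  exact ae_mono (Measure.restrict_mono (Ioc_subset_Ioc hs ht) le_rfl) ha

lemma Dom.mono_right {f : ℝ → ℝ} {a a' : ℝ → ℝ≥0∞} {p q : ℝ} (h : Dom f a p q)
    (ha : ∀ t ∈ Icc p q, a t ≤ a' t) : Dom f a' p q := by
  intro s t hs hst ht
  exact (h s t hs hst ht).trans (setLIntegral_mono' measurableSet_Ioc fun r hr =>
    ha r ⟨by linarith [hr.1], by linarith [hr.2]⟩)

lemma Dom.sub {f : ℝ → ℝ} {a : ℝ → ℝ≥0∞} {p q p' q' : ℝ} (h : Dom f a p q)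
    (hp : p ≤ p') (hq : q' ≤ q) : Dom f a p' q' :=
  fun s t hs hst ht => h s t (hp.trans hs) hst (ht.trans hq)

lemma Curve.integral_mono (γ : Curve X) {g h : X → ℝ≥0∞} (H : ∀ x, g x ≤ h x) :
    γ.integral g ≤ γ.integral h := lintegral_mono fun _ => H _

lemma Curve.measurable_comp (γ : Curve X) {g : X → ℝ≥0∞} (hg : Measurable g) :
    AEMeasurable (fun t => g (γ.toFun t)) (volume.restrict (Icc (0:ℝ) γ.len)) := by
  obtain ⟨c, hc, hcγ⟩ := γ.exists_cont
  refine ⟨fun t => g (c t), hg.comp hc.measurable, ?_⟩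
  filter_upwards [ae_restrict_mem measurableSet_Icc] with t ht
  rw [hcγ t ht]

lemma Curve.integral_const_mul (γ : Curve X) {g : X → ℝ≥0∞} (hg : Measurable g) (c : ℝ≥0∞) :
    γ.integral (fun x => c * g x) = c * γ.integral g :=
  lintegral_const_mul'' _ (γ.measurable_comp hg)

lemma small_mul {I ε : ℝ≥0∞} (hI : I ≠ ∞) (hε : ε ≠ 0) : ∃ c : ℝ≥0∞, c ≠ 0 ∧ c * I ≤ ε := by
  obtain ⟨n, hn, h⟩ := ENNReal.exists_nnreal_pos_mul_lt hI hε
  exact ⟨n, by exact_mod_cast hn.ne', h.le⟩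

lemma countable_mod (μ : Measure X) (ρ : ℕ → X → ℝ≥0∞) (hm : ∀ k, Measurable (ρ k))
    (hi : ∀ k, ∫⁻ x, ρ k x ∂μ ≠ ∞) : ∃ r : X → ℝ≥0∞, Measurable r ∧ ∫⁻ x, r x ∂μ < ∞ ∧
      ∀ γ : Curve X, γ.integral r ≠ ∞ → ∀ k, γ.integral (ρ k) ≠ ∞ := by
  obtain ⟨e, he, hes⟩ := ENNReal.exists_pos_sum_of_countable (ε := 1) one_ne_zero ℕ
  choose c hc0 hc using fun k => small_mul (hi k) (ENNReal.coe_ne_zero.2 (he k).ne')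
  refine ⟨fun x => ∑' k, c k * ρ k x, Measurable.ennreal_tsum fun k => (hm k).const_mul _, ?_, ?_⟩
  · rw [lintegral_tsum fun k => ((hm k).const_mul _).aemeasurable]
    refine lt_of_le_of_lt (ENNReal.tsum_le_tsum fun k => ?_) (hes.trans ENNReal.one_lt_top)
    rw [lintegral_const_mul _ (hm k)]
    exact hc k
  · intro γ hγ k hk
    apply hγ
    have : γ.integral (fun x => c k * ρ k x) ≤ γ.integral (fun x => ∑' k, c k * ρ k x) :=
      γ.integral_mono fun x => ENNReal.le_tsum (f := fun k => c k * ρ k x) k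
    rw [γ.integral_const_mul (hm k), hk, ENNReal.mul_top (hc0 k)] at this
    exact top_le_iff.1 this

/-- combine two exceptional functions -/
lemma integral_add_ne_top {γ : Curve X} {r s : X → ℝ≥0∞}
    (h : γ.integral (fun x => r x + s x) ≠ ∞) : γ.integral r ≠ ∞ ∧ γ.integral s ≠ ∞ := by
  constructor
  · exact ne_top_of_le_ne_top h (γ.integral_mono fun x => le_self_add)
  · exact ne_top_of_le_ne_top h (γ.integral_mono fun x => le_add_self)

lemma zeroMod_of {μ : Measure X} {Γ : Set (Curve X)} (r : X → ℝ≥0∞) (hr : Measurable r)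
    (hi : ∫⁻ x, r x ∂μ < ∞) (h : ∀ γ ∈ Γ, γ.integral r ≠ ∞ → False) : ZeroMod μ Γ :=
  ⟨r, hr, hi, fun γ hγ => by_contra fun hn => h γ hγ hn⟩

lemma null_mod (γ : Curve X) {N : Set X} (hN : MeasurableSet N)
    (h : γ.integral (N.indicator fun _ => ∞) ≠ ∞) :
    ∀ᵐ t ∂(volume.restrict (Icc (0:ℝ) γ.len)), γ.toFun t ∉ N := by
  have := ae_lt_top' (γ.measurable_comp (measurable_const.indicator hN)) h
  filter_upwards [this] with t ht hN
  simp [hN] at ht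

lemma UGOn.wug {μ : Measure X} {u : X → ℝ} {g : X → ℝ≥0∞} {A : Set X} (h : UGOn u g A)
    (hg : AEMeasurable g μ) : IsWeakUpperGradientOn μ u g A :=
  ⟨hg, zeroMod_of 0 measurable_const (by simp) fun γ hγ _ => hγ.2 (h γ hγ.1)⟩

lemma IsWeakUpperGradientOn.mono {μ : Measure X} {u : X → ℝ} {g : X → ℝ≥0∞} {A B : Set X}
    (h : IsWeakUpperGradientOn μ u g A) (hBA : B ⊆ A) : IsWeakUpperGradientOn μ u g B := by
  obtain ⟨hg, ρ, h1, h2, h3⟩ := h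
  exact ⟨hg, ρ, h1, h2, fun γ hγ => h3 γ ⟨fun t ht => hBA (hγ.1 t ht), hγ.2⟩⟩

/-- A weak upper gradient has a Borel representative dominating on a.e. curve. -/
lemma IsWeakUpperGradientOn.rep {μ : Measure X} {u : X → ℝ} {g : X → ℝ≥0∞} {A : Set X}
    (h : IsWeakUpperGradientOn μ u g A) :
    ∃ g' : X → ℝ≥0∞, Measurable g' ∧ g =ᵐ[μ] g' ∧ ∃ r : X → ℝ≥0∞, Measurable r ∧
      ∫⁻ x, r x ∂μ ≠ ∞ ∧ ∀ γ : Curve X, γ.In A → γ.integral r ≠ ∞ →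
        (∀ᵐ t ∂(volume.restrict (Icc (0:ℝ) γ.len)), g (γ.toFun t) = g' (γ.toFun t)) ∧
        Dom (fun t => u (γ.toFun t)) (fun t => g' (γ.toFun t)) 0 γ.len := by
  obtain ⟨hg, ρ, h1, h2, h3⟩ := h
  set N := toMeasurable μ {x | g x ≠ hg.mk g x} with hN
  have hN0 : μ N = 0 := by rw [hN, measure_toMeasurable]; exact hg.ae_eq_mk
  have mN : MeasurableSet N := measurableSet_toMeasurable _ _
  refine ⟨hg.mk g, hg.measurable_mk, hg.ae_eq_mk, fun x => ρ x + N.indicator (fun _ => ∞) x,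
    h1.add (measurable_const.indicator mN), ?_, ?_⟩
  · rw [lintegral_add_left h1, lintegral_indicator mN]
    simp [hN0, h2.ne]
  · intro γ hγ hfin
    obtain ⟨f1, f2⟩ := integral_add_ne_top hfin
    have ae : ∀ᵐ t ∂(volume.restrict (Icc (0:ℝ) γ.len)),
        g (γ.toFun t) = hg.mk g (γ.toFun t) := by
      filter_upwards [null_mod γ mN f2] with t ht
      by_contra hne
      exact ht (subset_toMeasurable _ _ hne)
    refine ⟨ae, ?_⟩
    have D : Dom (fun t => u (γ.toFun t)) (fun t => g (γ.toFun t)) 0 γ.len := by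
      refine dom_of_sub γ le_rfl le_rfl fun s t hs hst ht _ _ => ?_
      by_contra hneg
      have := h3 (γ.sub s t hs hst ht) ⟨fun r hr => hγ _ ?_, hneg⟩
      · rw [Curve.sub_integral] at this
        apply f1
        rw [Curve.integral_Ioc]
        exact top_le_iff.1 (this ▸ lintegral_mono_set (Ioc_subset_Ioc hs ht))
      · have h1 : 0 ≤ r := hr.1
        have h2 : r ≤ t - s := hr.2
        constructor <;> linarith
    exact D.congr (fun _ _ => rfl) (ae_mono (Measure.restrict_mono Ioc_subset_Icc_self le_rfl) ae)

lemma LIntegrableLocOn.curve {μ : Measure X} [SecondCountableTopology X] [SigmaFinite μ]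
    {g : X → ℝ≥0∞} {A : Set X}
    (h : LIntegrableLocOn μ g A) (hg : Measurable g) :
    ∃ r : X → ℝ≥0∞, Measurable r ∧
      ∫⁻ x, r x ∂μ ≠ ∞ ∧ ∀ γ : Curve X, γ.In A → γ.integral r ≠ ∞ → γ.integral g ≠ ∞ := by
  choose! R hR hI using h
  rcases A.eq_empty_or_nonempty with rfl | ⟨a0, ha0⟩
  · exact ⟨0, measurable_const, by simp, fun γ hγ => (hγ 0 ⟨le_rfl, γ.len_nonneg⟩).elim⟩
  obtain ⟨T, hT, hTA⟩ := TopologicalSpace.isOpen_iUnion_countable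
    (fun x : A => ball (x : X) (R x)) (fun x => isOpen_ball)
  have hTne : T.Nonempty := by
    have : a0 ∈ ⋃ x : A, ball (x : X) (R x) := mem_iUnion.2 ⟨⟨a0, ha0⟩, mem_ball_self (hR a0 ha0)⟩
    rw [← hTA] at this
    obtain ⟨i, hi, _⟩ := mem_iUnion₂.1 this
    exact ⟨i, hi⟩
  obtain ⟨e, he⟩ := hT.exists_eq_range hTne
  set A' := toMeasurable μ A
  have mA' : MeasurableSet A' := measurableSet_toMeasurable _ _
  set ρ : ℕ → X → ℝ≥0∞ := fun k => (A' ∩ ball (e k : X) (R (e k))).indicator g with hρ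
  have mS : ∀ k, MeasurableSet (A' ∩ ball (e k : X) (R (e k))) := fun k =>
    mA'.inter measurableSet_ball
  obtain ⟨r, hr, hri, hrγ⟩ := countable_mod μ ρ (fun k => hg.indicator (mS k)) (fun k => by
    simp only [hρ]
    rw [lintegral_indicator (mS k), inter_comm, ← Measure.restrict_restrict measurableSet_ball,
      Measure.restrict_toMeasurable_of_sFinite, Measure.restrict_restrict measurableSet_ball,
      inter_comm]
    exact (hI _ (e k).2).ne)
  refine ⟨r, hr, hri.ne, fun γ hγ hfin => ?_⟩
  have hk := hrγ γ hfin
  have hcomp : IsCompact (γ.toFun '' Icc 0 γ.len) := isCompact_Icc.image_of_continuousOn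
    γ.lip.continuousOn
  obtain ⟨F, hF⟩ := hcomp.elim_finite_subcover (fun k : ℕ => ball (e k : X) (R (e k)))
    (fun k => isOpen_ball) (by
      rintro _ ⟨t, ht, rfl⟩
      have : γ.toFun t ∈ ⋃ x : A, ball (x : X) (R x) :=
        mem_iUnion.2 ⟨⟨_, hγ t ht⟩, mem_ball_self (hR _ (hγ t ht))⟩
      rw [← hTA] at this
      obtain ⟨i, hi, hti⟩ := mem_iUnion₂.1 this
      rw [he] at hi
      obtain ⟨k, rfl⟩ := hi
      exact mem_iUnion.2 ⟨k, hti⟩)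
  have : γ.integral g ≤ ∑ k ∈ F, γ.integral (ρ k) := by
    unfold Curve.integral
    rw [← lintegral_finsetSum' _ fun k _ => γ.measurable_comp (hg.indicator (mS k))]
    refine setLIntegral_mono' measurableSet_Icc fun t ht => ?_
    obtain ⟨k, hkF, hk⟩ := mem_iUnion₂.1 (hF ⟨t, ht, rfl⟩)
    refine le_trans (le_of_eq ?_) (Finset.single_le_sum (f := fun k => ρ k (γ.toFun t))
      (fun _ _ => by simp) hkF)
    exact (indicator_of_mem (show γ.toFun t ∈ A' ∩ ball (e k : X) (R (e k)) from
      ⟨subset_toMeasurable _ _ (hγ t ht), hk⟩) g).symm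
  exact ne_top_of_le_ne_top (ENNReal.sum_ne_top.2 fun k _ => hk k) this

lemma LIntegrableLocOn.congr {μ : Measure X} {g g' : X → ℝ≥0∞} {A : Set X}
    (h : LIntegrableLocOn μ g A) (hg : g =ᵐ[μ] g') : LIntegrableLocOn μ g' A := by
  intro x hx
  obtain ⟨r, hr, hi⟩ := h x hx
  exact ⟨r, hr, by rwa [← lintegral_congr_ae (ae_restrict_of_ae hg)]⟩

lemma lintLoc_of_int {μ : Measure X} {g : X → ℝ≥0∞} {A : Set X}
    (h : ∫⁻ x in A, g x ∂μ < ∞) : LIntegrableLocOn μ g A :=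
  fun x _ => ⟨1, one_pos, (lintegral_mono_set inter_subset_left).trans_lt h⟩

lemma IsWeakUpperGradientOn.min {μ : Measure X} [SecondCountableTopology X] [SigmaFinite μ]
    {u : X → ℝ} {g1 g2 : X → ℝ≥0∞} {A : Set X}
    (h1 : IsWeakUpperGradientOn μ u g1 A) (h2 : IsWeakUpperGradientOn μ u g2 A)
    (l1 : LIntegrableLocOn μ g1 A) (l2 : LIntegrableLocOn μ g2 A) :
    IsWeakUpperGradientOn μ u (fun x => Min.min (g1 x) (g2 x)) A := by
  refine ⟨h1.1.min h2.1, ?_⟩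
  obtain ⟨g1', m1, e1, r1, mr1, ir1, H1⟩ := h1.rep
  obtain ⟨g2', m2, e2, r2, mr2, ir2, H2⟩ := h2.rep
  obtain ⟨s1, ms1, is1, S1⟩ := (l1.congr e1).curve m1
  obtain ⟨s2, ms2, is2, S2⟩ := (l2.congr e2).curve m2
  refine zeroMod_of (fun x => (r1 x + r2 x) + (s1 x + s2 x)) (by fun_prop) ?_ ?_
  · rw [lintegral_add_left (by fun_prop), lintegral_add_left (by fun_prop),
      lintegral_add_left (by fun_prop)]
    simp [lt_top_iff_ne_top, ir1, ir2, is1, is2]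
  · rintro γ ⟨hγ, hneg⟩ hfin
    obtain ⟨f1, f2⟩ := integral_add_ne_top hfin
    obtain ⟨f3, f4⟩ := integral_add_ne_top f1
    obtain ⟨f5, f6⟩ := integral_add_ne_top f2
    obtain ⟨A1, D1⟩ := H1 γ hγ f3
    obtain ⟨A2, D2⟩ := H2 γ hγ f4
    have I1 := S1 γ hγ f5
    have I2 := S2 γ hγ f6
    apply hneg
    apply ugineq_of_dom
    obtain ⟨c, hc, hcγ⟩ := γ.exists_cont
    have hc' : ∀ g : X → ℝ≥0∞, ∀ᵐ t ∂(volume.restrict (Ioc (0:ℝ) γ.len)),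
        g (γ.toFun t) = g (c t) := fun g => by
      filter_upwards [ae_restrict_mem measurableSet_Ioc] with t ht
      rw [hcγ t (Ioc_subset_Icc_self ht)]
    rw [Curve.integral_Ioc] at I1 I2
    rw [lintegral_congr_ae (hc' _)] at I1 I2
    have := dom_min (D1.congr (fun _ _ => rfl) (hc' _)) (D2.congr (fun _ _ => rfl) (hc' _))
      (m1.comp hc.measurable) (m2.comp hc.measurable) I1 I2
    refine this.congr (fun _ _ => rfl) ?_
    filter_upwards [hc' g1', hc' g2',
      ae_mono (Measure.restrict_mono Ioc_subset_Icc_self le_rfl) A1,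
      ae_mono (Measure.restrict_mono Ioc_subset_Icc_self le_rfl) A2] with t a1 a2 a3 a4
    rw [← a1, ← a2, a3, a4]

lemma exists_minimal {μ : Measure X} [SecondCountableTopology X] [SigmaFinite μ]
    {u : X → ℝ} {g0 : X → ℝ≥0∞} {A : Set X}
    (h0 : IsWeakUpperGradientOn μ u g0 A) (hi : ∫⁻ x in A, g0 x ∂μ < ∞) :
    ∃ m, IsMinimalWUG μ u m A ∧ ∫⁻ x in A, m x ∂μ ≤ ∫⁻ x in A, g0 x ∂μ := by
  suffices ∃ m, IsMinimalWUG μ u m A by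
    obtain ⟨m, hm⟩ := this
    exact ⟨m, hm, lintegral_mono_ae (hm.2 g0 h0 (lintLoc_of_int hi))⟩
  set S : Set ℝ≥0∞ := (fun g : X → ℝ≥0∞ => ∫⁻ x in A, g x ∂μ) ''
    {g | IsWeakUpperGradientOn μ u g A} with hS
  have hSne : S.Nonempty := ⟨_, g0, h0, rfl⟩
  have hmem : ∀ h, IsWeakUpperGradientOn μ u h A → ∫⁻ x in A, h x ∂μ ∈ S := fun h hh =>
    mem_image_of_mem (fun g : X → ℝ≥0∞ => ∫⁻ x in A, g x ∂μ) hh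
  have hSI : sInf S < ∞ := (sInf_le (hmem _ h0)).trans_lt hi
  obtain ⟨y, -, hyt, hyS⟩ := exists_seq_tendsto_sInf hSne (OrderBot.bddBelow S)
  choose g hg hgy using hyS
  have hmin : ∀ (f h : X → ℝ≥0∞), IsWeakUpperGradientOn μ u f A → ∫⁻ x in A, f x ∂μ < ∞ →
      IsWeakUpperGradientOn μ u h A → LIntegrableLocOn μ h A →
      IsWeakUpperGradientOn μ u (fun x => Min.min (f x) (h x)) A :=
    fun f h hf hfi hh hhl => hf.min hh (lintLoc_of_int hfi) hhl
  obtain ⟨N, hN⟩ : ∃ N, ∀ n, N ≤ n → ∫⁻ x in A, g n x ∂μ < ∞ := by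
    have : ∀ᶠ n in atTop, y n < ∞ := hyt.eventually (gt_mem_nhds hSI)
    obtain ⟨N, hN⟩ := eventually_atTop.1 this
    exact ⟨N, fun n hn => by have := hN n hn; rw [← hgy n] at this; exact this⟩
  set g' : ℕ → X → ℝ≥0∞ := fun n => g (n + N) with hg'
  set H : ℕ → X → ℝ≥0∞ := fun k => Nat.rec g0 (fun n f => fun x => Min.min (f x) (g' n x)) k with hH
  have HS : ∀ n, H (n+1) = fun x => Min.min (H n x) (g' n x) := fun n => rfl
  have Hle0 : ∀ n x, H n x ≤ g0 x := by
    intro n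
    induction n with
    | zero => intro x; exact le_rfl
    | succ n ih => intro x; rw [HS]; exact (min_le_left _ _).trans (ih x)
  have Hanti : ∀ x, Antitone fun n => H n x := fun x => antitone_nat_of_succ_le fun n => by
    rw [HS]; exact min_le_left _ _
  have HW : ∀ n, IsWeakUpperGradientOn μ u (H n) A := by
    intro n
    induction n with
    | zero => exact h0
    | succ n ih =>
      rw [HS]
      exact hmin _ _ ih ((lintegral_mono (Hle0 n)).trans_lt hi) (hg _)
        (lintLoc_of_int (hN _ (Nat.le_add_left _ _)))
  set m : X → ℝ≥0∞ := fun x => ⨅ n, H n x with hm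
  have mW : IsWeakUpperGradientOn μ u m A := by
    refine ⟨AEMeasurable.iInf fun n => (HW n).1, ?_⟩
    choose G' mG' eG' r mr ir HH using fun n => (HW n).rep
    obtain ⟨s, ms, is, S1⟩ := ((lintLoc_of_int hi).congr (eG' 0)).curve (mG' 0)
    obtain ⟨r', mr', ir', hr'⟩ := countable_mod μ r mr ir
    refine zeroMod_of (fun x => r' x + s x) (mr'.add ms) ?_ ?_
    · rw [lintegral_add_left mr']
      exact ENNReal.add_lt_top.2 ⟨ir', is.lt_top⟩
    · rintro γ ⟨hγ, hneg⟩ hfin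
      obtain ⟨f1, f2⟩ := integral_add_ne_top hfin
      have f3 := hr' γ f1
      apply hneg
      have hme : ∀ n, AEMeasurable (fun t => H n (γ.toFun t))
          (volume.restrict (Icc (0:ℝ) γ.len)) := fun n =>
        (γ.measurable_comp (mG' n)).congr
          ((HH n γ hγ (f3 n)).1.mono fun t ht => ht.symm)
      have hfin0 : ∫⁻ t in Icc (0:ℝ) γ.len, H 0 (γ.toFun t) ≠ ∞ := by
        rw [lintegral_congr_ae (HH 0 γ hγ (f3 0)).1]
        exact S1 γ hγ f2
      have : γ.integral m = ⨅ n, γ.integral (H n) := by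
        unfold Curve.integral
        exact lintegral_iInf' hme (ae_of_all _ fun t => Hanti _) hfin0
      unfold UGIneq
      rw [this]
      refine le_iInf fun n => ?_
      have := ugineq_of_dom (HH n γ hγ (f3 n)).2
      refine this.trans (le_of_eq ?_)
      exact (lintegral_congr_ae (HH n γ hγ (f3 n)).1).symm
  have mint : ∫⁻ x in A, m x ∂μ ≤ sInf S := by
    refine ge_of_tendsto (hyt.comp (tendsto_add_atTop_nat N)) (Eventually.of_forall fun n => ?_)
    rw [Function.comp_apply, ← hgy]
    exact lintegral_mono fun x => (iInf_le _ (n+1)).trans (by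
      show H (n+1) x ≤ _
      rw [HS]; exact min_le_right _ _)
  have mfin : ∫⁻ x in A, m x ∂μ < ∞ := mint.trans_lt hSI
  refine ⟨m, mW, fun h hh hhl => ?_⟩
  have hw := hmin m h mW mfin hh hhl
  have hle : ∫⁻ x in A, m x ∂μ ≤ ∫⁻ x in A, Min.min (m x) (h x) ∂μ :=
    mint.trans (sInf_le (hmem _ hw))
  have := ae_eq_of_ae_le_of_lintegral_le (μ := μ.restrict A)
    (ae_of_all _ fun x => min_le_left (m x) (h x))
    (ne_top_of_le_ne_top mfin.ne (lintegral_mono fun x => min_le_left _ _)) mW.1.restrict hle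
  filter_upwards [this] with x hx
  exact min_eq_left_iff.1 hx


/-! ### Setup -/

lemma Doubling.pow {μ : Measure X} {Cd : ℝ} (h : Doubling μ Cd) (x : X) (k : ℕ) {r : ℝ}
    (hr : 0 < r) : μ (ball x (2 ^ k * r)) ≤ ENNReal.ofReal Cd ^ k * μ (ball x r) := by
  induction k with
  | zero => simp
  | succ k ih =>
    rw [pow_succ', mul_assoc]
    refine ((h.2 x (2 ^ k * r) (by positivity)).2.1).trans ?_
    rw [pow_succ', mul_assoc]
    gcongr

lemma Doubling.pos {μ : Measure X} {Cd : ℝ} (h : Doubling μ Cd) (x : X) {r : ℝ}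
    (hr : 0 < r) : 0 < μ (ball x r) := by
  have := (h.2 x (r / 2) (by positivity)).1
  rwa [mul_div_cancel₀ _ (two_ne_zero)] at this

lemma Doubling.locFin {μ : Measure X} {Cd : ℝ} (h : Doubling μ Cd) : IsLocallyFiniteMeasure μ :=
  ⟨fun x => ⟨ball x 1, ball_mem_nhds x one_pos, (h.2 x 1 one_pos).2.2⟩⟩

lemma Doubling.unifLoc {μ : Measure X} {Cd : ℝ} (h : Doubling μ Cd) :
    IsUnifLocDoublingMeasure μ := by
  refine ⟨Real.toNNReal Cd ^ 2, ?_⟩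
  filter_upwards [self_mem_nhdsWithin] with e he x
  have he' : (0 : ℝ) < e := he
  have := h.pow x 2 he'
  refine (measure_mono (closedBall_subset_ball (by linarith))).trans (this.trans ?_)
  push_cast
  exact mul_le_mul' le_rfl (measure_mono ball_subset_closedBall)

lemma Doubling.proper {μ : Measure X} {Cd : ℝ} (h : Doubling μ Cd) (hc : CompleteSpace X) :
    ProperSpace X := by
  refine ⟨fun x R => ?_⟩
  refine TotallyBounded.isCompact_of_isClosed ?_ isClosed_closedBall
  by_contra hnt
  rw [Metric.totallyBounded_iff] at hnt
  push Not at hnt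
  obtain ⟨ε, hε, hnt⟩ := hnt
  have : Std.Symm (fun y z : X => ε ≤ dist y z) := ⟨fun a b hab => by rwa [dist_comm]⟩
  obtain ⟨f, hf, hff⟩ := exists_seq_of_forall_finset_exists' (fun y => y ∈ closedBall x R)
    (fun y z => ε ≤ dist y z) (by
      intro s hs
      have := hnt s s.finite_toSet
      rw [not_subset] at this
      obtain ⟨y, hy, hyn⟩ := this
      refine ⟨y, hy, fun z hz => ?_⟩
      by_contra hlt
      push Not at hlt
      rw [dist_comm] at hlt
      exact hyn (mem_iUnion₂.2 ⟨z, hz, hlt⟩))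
  have hR : 0 ≤ R := dist_nonneg.trans (hf 0)
  have hdisj : Pairwise (Function.onFun Disjoint fun n => ball (f n) (ε / 2)) := by
    intro m n hmn
    exact ball_disjoint_ball (by have h9 : ε ≤ dist (f m) (f n) := hff hmn; linarith)
  obtain ⟨k, hk⟩ := pow_unbounded_of_one_lt ((2 * R + ε) / (ε / 2)) (one_lt_two)
  rw [div_lt_iff₀ (by positivity)] at hk
  have key : ∀ n, μ (ball x (R + ε)) ≤ ENNReal.ofReal Cd ^ k * μ (ball (f n) (ε / 2)) := by
    intro n
    refine (measure_mono ?_).trans (h.pow (f n) k (half_pos hε))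
    refine ball_subset_ball' ?_
    have := hf n
    rw [mem_closedBall, dist_comm] at this
    linarith
  have hfin := (h.2 x (R + ε) (by positivity)).2.2
  have hpos := h.pos x (r := R + ε) (by positivity)
  have hsum : ∑' n, μ (ball (f n) (ε / 2)) ≤ μ (ball x (R + ε)) := by
    rw [← measure_iUnion hdisj fun n => measurableSet_ball]
    refine measure_mono (iUnion_subset fun n => ball_subset_ball' ?_)
    have := hf n
    rw [mem_closedBall] at this
    linarith
  have hC : ENNReal.ofReal Cd ^ k * ∑' n, μ (ball (f n) (ε / 2)) < ∞ :=
    ENNReal.mul_lt_top (by simp) (hsum.trans_lt hfin)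
  rw [← ENNReal.tsum_mul_left] at hC
  have h2 := (ENNReal.tsum_le_tsum key).trans_lt hC
  rw [ENNReal.tsum_const_eq_top_of_ne_zero hpos.ne'] at h2
  exact lt_irrefl _ h2

lemma lemmaR {μ : Measure X} [ProperSpace X] [IsLocallyFiniteMeasure μ]
    {u : X → ℝ} {g : X → ℝ≥0∞} {A : Set X} (h : IsWeakUpperGradientOn μ u g A)
    {ε : ℝ≥0∞} (hε : ε ≠ 0) :
    ∃ ρ : X → ℝ≥0∞, LowerSemicontinuous ρ ∧ (∀ x, 0 < ρ x) ∧
      ∫⁻ x, ρ x ∂μ ≤ ∫⁻ x in A, g x ∂μ + ε ∧ UGOn u ρ A := by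
  have he : ε / 3 ≠ 0 := by simp [hε]
  obtain ⟨g', mg', eg', r, mr, ir, H⟩ := h.rep
  obtain ⟨κ, hκ0, hκ⟩ := small_mul ir he
  obtain ⟨w, hw, mw, iw⟩ := exists_pos_lintegral_lt_of_sigmaFinite μ he
  set A' := toMeasurable μ A
  have mA' : MeasurableSet A' := measurableSet_toMeasurable _ _
  obtain ⟨ρ, hρ, lρ, iρ⟩ := exists_le_lowerSemicontinuous_lintegral_ge μ
    (fun x => A'.indicator g' x + (κ * r x + w x))
    ((mg'.indicator mA').add ((mr.const_mul κ).add mw.coe_nnreal_ennreal)) he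
  refine ⟨ρ, lρ, fun x => ?_, ?_, ?_⟩
  · refine lt_of_lt_of_le ?_ (hρ x)
    have : (0 : ℝ≥0∞) < w x := by exact_mod_cast hw x
    exact this.trans_le (le_add_self.trans le_add_self)
  · refine iρ.trans ?_
    rw [lintegral_add_left (mg'.indicator mA'), lintegral_add_left (mr.const_mul κ),
      lintegral_const_mul _ mr, lintegral_indicator mA',
      Measure.restrict_toMeasurable_of_sFinite, ← lintegral_congr_ae (ae_restrict_of_ae eg')]
    rw [add_assoc]
    refine add_le_add le_rfl ?_
    calc _ ≤ ε / 3 + ε / 3 + ε / 3 := by gcongr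
      _ = ε := ENNReal.add_thirds ε
  · intro γ hγ
    by_cases htop : γ.integral ρ = ∞
    · unfold UGIneq; rw [htop]; exact le_top
    have hr : γ.integral r ≠ ∞ := by
      intro hr
      apply htop
      have : γ.integral (fun x => κ * r x) ≤ γ.integral ρ := γ.integral_mono fun x =>
        (le_self_add.trans le_add_self).trans (hρ x)
      rw [γ.integral_const_mul mr, hr, ENNReal.mul_top hκ0] at this
      exact top_le_iff.1 this
    have D := (H γ hγ hr).2
    refine ugineq_of_dom (D.mono_right fun t ht => ?_)
    refine le_trans ?_ (le_self_add.trans (hρ _))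
    rw [indicator_of_mem]
    exact subset_toMeasurable _ _ (hγ t ht)


/-! ### Lipschitz approximation of lower semicontinuous functions -/

/-- inf-convolution -/
def Rn (ρ : X → ℝ≥0∞) (n : ℕ) (x : X) : ℝ :=
  ⨅ y : X, ((min (ρ y) (n + 1 : ℕ)).toReal + (n + 1 : ℝ) * dist x y)

lemma Rn_bdd (ρ : X → ℝ≥0∞) (n : ℕ) (x : X) :
    BddBelow (range fun y : X => ((min (ρ y) (n + 1 : ℕ)).toReal + (n + 1 : ℝ) * dist x y)) :=
  ⟨0, by rintro _ ⟨y, rfl⟩; positivity⟩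

lemma Rn_le (ρ : X → ℝ≥0∞) (n : ℕ) (x y : X) :
    Rn ρ n x ≤ (min (ρ y) (n + 1 : ℕ)).toReal + (n + 1 : ℝ) * dist x y :=
  ciInf_le (Rn_bdd ρ n x) y

lemma le_Rn {ρ : X → ℝ≥0∞} {n : ℕ} {x : X} {c : ℝ}
    (h : ∀ y, c ≤ (min (ρ y) (n + 1 : ℕ)).toReal + (n + 1 : ℝ) * dist x y) : c ≤ Rn ρ n x :=
  haveI : Nonempty X := ⟨x⟩
  le_ciInf h

lemma Rn_nonneg (ρ : X → ℝ≥0∞) (n : ℕ) (x : X) : 0 ≤ Rn ρ n x :=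
  le_Rn fun y => by positivity

lemma Rn_le_nat (ρ : X → ℝ≥0∞) (n : ℕ) (x : X) : Rn ρ n x ≤ n + 1 := by
  refine (Rn_le ρ n x x).trans ?_
  simp only [dist_self, mul_zero, add_zero]
  have : (min (ρ x) (n + 1 : ℕ)).toReal ≤ ((n + 1 : ℕ) : ℝ≥0∞).toReal :=
    ENNReal.toReal_mono (ENNReal.natCast_ne_top _) (min_le_right _ _)
  rw [ENNReal.toReal_natCast] at this
  exact_mod_cast this

lemma ofReal_Rn_le (ρ : X → ℝ≥0∞) (n : ℕ) (x : X) : ENNReal.ofReal (Rn ρ n x) ≤ ρ x := by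
  have h := Rn_le ρ n x x
  simp only [dist_self, mul_zero, add_zero] at h
  refine (ENNReal.ofReal_le_ofReal h).trans ?_
  rw [ENNReal.ofReal_toReal]
  · exact min_le_left _ _
  · exact ne_top_of_le_ne_top (ENNReal.natCast_ne_top _) (min_le_right _ _)

lemma Rn_lip (ρ : X → ℝ≥0∞) (n : ℕ) (x y : X) : Rn ρ n x ≤ Rn ρ n y + (n + 1) * dist x y := by
  rw [← sub_le_iff_le_add]
  refine le_Rn fun z => ?_
  have := Rn_le ρ n x z
  have h2 := dist_triangle x y z
  have h3 : (n + 1 : ℝ) * dist x z ≤ (n + 1 : ℝ) * (dist x y + dist y z) := by gcongr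
  linarith

lemma Rn_cont (ρ : X → ℝ≥0∞) (n : ℕ) : Continuous (Rn ρ n) := by
  have : LipschitzWith (n + 1 : ℝ≥0) (Rn ρ n) := by
    refine LipschitzWith.of_le_add_mul _ fun x y => ?_
    exact_mod_cast Rn_lip ρ n x y
  exact this.continuous

lemma Rn_mono (ρ : X → ℝ≥0∞) (x : X) : Monotone fun n => Rn ρ n x := by
  intro m n hmn
  refine le_Rn fun y => (Rn_le ρ m x y).trans ?_
  have hmn' : (m : ℝ) ≤ n := by exact_mod_cast hmn
  refine add_le_add (ENNReal.toReal_mono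
    (ne_top_of_le_ne_top (ENNReal.natCast_ne_top _) (min_le_right _ _)) ?_) ?_
  · refine min_le_min le_rfl ?_
    exact_mod_cast Nat.succ_le_succ hmn
  · gcongr

lemma Rn_sup {ρ : X → ℝ≥0∞} (hρ : LowerSemicontinuous ρ) (x : X) :
    ρ x = ⨆ n, ENNReal.ofReal (Rn ρ n x) := by
  refine le_antisymm ?_ (iSup_le fun n => ofReal_Rn_le ρ n x)
  refine le_of_forall_lt fun c hc => ?_
  obtain ⟨c', hcc', hc'⟩ := ENNReal.lt_iff_exists_nnreal_btwn.1 hc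
  obtain ⟨δ, hδ, hB⟩ := Metric.eventually_nhds_iff.1 (hρ x c' hc')
  obtain ⟨n, hn⟩ := exists_nat_ge (max (c' : ℝ) (c' / δ))
  have h1 : (c' : ℝ) ≤ n := (le_max_left _ _).trans hn
  have h2 : (c' : ℝ) ≤ n * δ := by
    have := (le_max_right _ _).trans hn
    rwa [div_le_iff₀ hδ] at this
  refine lt_of_lt_of_le hcc' (le_trans ?_ (le_iSup _ n))
  rw [← ENNReal.ofReal_coe_nnreal]
  refine ENNReal.ofReal_le_ofReal (le_Rn fun y => ?_)
  by_cases hy : dist y x < δ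
  · have := hB hy
    have h3 : (c' : ℝ≥0∞) ≤ min (ρ y) (n + 1 : ℕ) := by
      refine le_min this.le ?_
      have : (c' : ℝ) ≤ (n + 1 : ℕ) := by push_cast; linarith
      exact_mod_cast this
    have h4 := ENNReal.toReal_mono
      (ne_top_of_le_ne_top (ENNReal.natCast_ne_top _) (min_le_right _ _)) h3
    simp only [ENNReal.coe_toReal] at h4
    have : 0 ≤ (n + 1 : ℝ) * dist x y := by positivity
    linarith
  · push Not at hy
    rw [dist_comm] at hy
    have h5 : (n : ℝ) * δ ≤ (n + 1 : ℝ) * dist x y := by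
      gcongr; linarith
    have : 0 ≤ (min (ρ y) (n + 1 : ℕ)).toReal := by positivity
    linarith

lemma Rn_pos {ρ : X → ℝ≥0∞} (hρ : LowerSemicontinuous ρ) {x : X} (hx : 0 < ρ x) :
    0 < Rn ρ 0 x := by
  obtain ⟨c', hcc', hc'⟩ := ENNReal.lt_iff_exists_nnreal_btwn.1 hx
  obtain ⟨δ, hδ, hB⟩ := Metric.eventually_nhds_iff.1 (hρ x c' hc')
  have hc0 : 0 < c' := by exact_mod_cast hcc'
  refine lt_of_lt_of_le (b := min δ (min (c' : ℝ) 1)) (by positivity) (le_Rn fun y => ?_)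
  by_cases hy : dist y x < δ
  · have := hB hy
    have h3 : ((min c' 1 : ℝ≥0) : ℝ≥0∞) ≤ min (ρ y) (0 + 1 : ℕ) := by
      refine le_min (le_trans ?_ this.le) ?_
      · exact_mod_cast min_le_left _ _
      · simp
    have h4 := ENNReal.toReal_mono
      (ne_top_of_le_ne_top (ENNReal.natCast_ne_top _) (min_le_right _ _)) h3
    simp only [ENNReal.coe_toReal, NNReal.coe_min, NNReal.coe_one] at h4
    have h6 := min_le_right δ (min (c' : ℝ) 1)
    have : 0 ≤ ((0 : ℕ) + 1 : ℝ) * dist x y := by positivity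
    linarith
  · push Not at hy
    rw [dist_comm] at hy
    have h6 := min_le_left δ (min (c' : ℝ) 1)
    have : 0 ≤ (min (ρ y) (0 + 1 : ℕ)).toReal := by positivity
    simp only [Nat.cast_zero, zero_add, one_mul] at *
    linarith

lemma one_le_Rn {ρ : X → ℝ≥0∞} (hρ : ∀ x, 1 ≤ ρ x) (n : ℕ) (x : X) : 1 ≤ Rn ρ n x := by
  refine le_Rn fun y => ?_
  have h3 : (1 : ℝ≥0∞) ≤ min (ρ y) (n + 1 : ℕ) := le_min (hρ y) (by simp)
  have h4 := ENNReal.toReal_mono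
      (ne_top_of_le_ne_top (ENNReal.natCast_ne_top _) (min_le_right _ _)) h3
  have : 0 ≤ (n + 1 : ℝ) * dist x y := by positivity
  simp only [ENNReal.toReal_one] at h4
  linarith

/-! ### Quasi-curves -/

/-- quasi-curve -/
structure QC (e : ℝ) (C : Set X) (L : ℝ) (γ : ℝ → X) : Prop where
  nonneg : 0 ≤ L
  mem : ∀ t ∈ Icc 0 L, γ t ∈ C
  qlip : ∀ s t, 0 ≤ s → s ≤ t → t ≤ L → dist (γ s) (γ t) ≤ t - s + e

/-- cost of a quasi-curve -/
def qcost (R : X → ℝ) (L : ℝ) (γ : ℝ → X) : ℝ≥0∞ := ∫⁻ t in Icc 0 L, ENNReal.ofReal (R (γ t))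

/-- minimal cost -/
def qd (R : X → ℝ) (e : ℝ) (C K0 : Set X) (F : X → ℝ≥0∞) (x : X) : ℝ≥0∞ :=
  ⨅ (L : ℝ) (γ : ℝ → X) (_ : QC e C L γ) (_ : γ 0 ∈ K0) (_ : γ L = x), F (γ 0) + qcost R L γ

lemma qd_le {R : X → ℝ} {e : ℝ} {C K0 : Set X} {F : X → ℝ≥0∞} {x : X} {L : ℝ} {γ : ℝ → X}
    (h : QC e C L γ) (h0 : γ 0 ∈ K0) (h1 : γ L = x) : qd R e C K0 F x ≤ F (γ 0) + qcost R L γ :=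
  iInf_le_of_le L (iInf_le_of_le γ (iInf_le_of_le h (iInf_le_of_le h0 (iInf_le_of_le h1 le_rfl))))

lemma exists_of_qd_lt {R : X → ℝ} {e : ℝ} {C K0 : Set X} {F : X → ℝ≥0∞} {x : X} {c : ℝ≥0∞}
    (h : qd R e C K0 F x < c) : ∃ L γ, QC e C L γ ∧ γ 0 ∈ K0 ∧ γ L = x ∧
      F (γ 0) + qcost R L γ < c := by
  simp only [qd, iInf_lt_iff] at h
  obtain ⟨L, γ, h1, h2, h3, h4⟩ := h
  exact ⟨L, γ, h1, h2, h3, h4⟩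

lemma qd_self_le {R : X → ℝ} {e : ℝ} (he : 0 ≤ e) {C K0 : Set X} {F : X → ℝ≥0∞} {x : X}
    (hC : x ∈ C) (hx : x ∈ K0) : qd R e C K0 F x ≤ F x := by
  unfold qd
  refine iInf_le_of_le 0 (iInf_le_of_le (fun _ => x) (iInf_le_of_le ⟨le_rfl, fun _ _ => hC, ?_⟩
    (iInf_le_of_le hx (iInf_le_of_le rfl ?_))))
  · intro s t h1 h2 h3
    simp; linarith
  · simp [qcost]

lemma qd_step {R : X → ℝ} {e : ℝ} {C K0 : Set X} {F : X → ℝ≥0∞} {x x' : X}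
    (hx' : x' ∈ C) (hd : dist x x' ≤ e) :
    qd R e C K0 F x' ≤ qd R e C K0 F x + ENNReal.ofReal (R x) * ENNReal.ofReal (dist x x') := by
  rcases eq_or_ne x x' with rfl | hne
  · exact le_self_add
  have hd0 : 0 < dist x x' := dist_pos.2 hne
  set d := dist x x' with hdd
  conv_rhs => unfold qd
  simp only [ENNReal.iInf_add]
  refine le_iInf fun L => le_iInf fun γ => le_iInf fun hq => le_iInf fun h0 => le_iInf fun hL => ?_
  have hL0 := hq.nonneg
  set γ' : ℝ → X := fun t => if t ≤ L then γ t else if t < L + d then x else x' with hγ'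
  have e1 : ∀ t, t ≤ L → γ' t = γ t := fun t ht => by simp [hγ', ht]
  have e2 : ∀ t, L < t → t < L + d → γ' t = x := fun t ht ht' => by
    simp [hγ', not_le.2 ht, ht']
  have e3 : γ' (L + d) = x' := by
    have : ¬ (L + d ≤ L) := by linarith
    simp [hγ', this]
  have hxC : x ∈ C := hL ▸ hq.mem L ⟨hL0, le_rfl⟩
  have hQ : QC e C (L + d) γ' := by
    refine ⟨by positivity, fun t ht => ?_, fun s t hs hst ht => ?_⟩
    · rcases le_or_gt t L with h | h
      · rw [e1 t h]; exact hq.mem t ⟨ht.1, h⟩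
      · rcases ht.2.lt_or_eq with h2 | h2
        · rw [e2 t h h2]; exact hxC
        · rw [h2, e3]; exact hx'
    · rcases le_or_gt t L with h | h
      · rw [e1 t h, e1 s (hst.trans h)]; exact hq.qlip s t hs hst h
      · rcases le_or_gt s L with hsL | hsL
        · have := hq.qlip s L hs hsL le_rfl
          rw [hL] at this
          rw [e1 s hsL]
          rcases ht.lt_or_eq with h2 | h2
          · rw [e2 t h h2]; linarith
          · rw [h2, e3]
            have := dist_triangle (γ s) x x'
            linarith
        · rcases ht.lt_or_eq with h2 | h2
          · rw [e2 t h h2, e2 s hsL (by linarith), dist_self]; linarith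
          · rcases (hst.trans ht).lt_or_eq with h3 | h3
            · rw [h2, e3, e2 s hsL h3]; linarith
            · rw [h2, h3, e3, dist_self]; linarith
  refine (qd_le hQ (by rwa [e1 0 hL0]) e3).trans ?_
  rw [e1 0 hL0, add_assoc]
  refine add_le_add le_rfl ?_
  unfold qcost
  rw [← setLIntegral_congr (Ico_ae_eq_Icc (a := 0) (b := L + d))]
  have hsub : Ico 0 (L + d) ⊆ Icc 0 L ∪ Ioo L (L + d) := by
    intro t ht
    rcases le_or_gt t L with h | h
    · exact Or.inl ⟨ht.1, h⟩
    · exact Or.inr ⟨h, ht.2⟩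
  refine (lintegral_mono_set hsub).trans ((lintegral_union_le _ _ _).trans ?_)
  refine add_le_add (le_of_eq ?_) (le_of_eq ?_)
  · exact setLIntegral_congr_fun measurableSet_Icc fun t ht => by simp only [e1 t ht.2]
  · rw [setLIntegral_congr_fun (g := fun _ => ENNReal.ofReal (R x)) measurableSet_Ioo
      fun t ht => by simp only [e2 t ht.1 ht.2]]
    simp

/-- truncated real version -/
def qf (R : X → ℝ) (e : ℝ) (C K0 : Set X) (F : X → ℝ≥0∞) (M : ℝ≥0) (x : X) : ℝ :=
  (min (qd R e C K0 F x) M).toReal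

lemma qf_nonneg {R : X → ℝ} {e : ℝ} {C K0 : Set X} {F : X → ℝ≥0∞} {M : ℝ≥0} {x : X} :
    0 ≤ qf R e C K0 F M x := ENNReal.toReal_nonneg

lemma qf_ne (a : ℝ≥0∞) (M : ℝ≥0) : min a (M : ℝ≥0∞) ≠ ∞ :=
  ne_top_of_le_ne_top ENNReal.coe_ne_top (min_le_right _ _)

lemma qf_le {R : X → ℝ} {e : ℝ} {C K0 : Set X} {F : X → ℝ≥0∞} {M : ℝ≥0} {x : X} :
    qf R e C K0 F M x ≤ M := by
  have := ENNReal.toReal_mono (ENNReal.coe_ne_top) (min_le_right (qd R e C K0 F x) (M : ℝ≥0∞))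
  simpa [qf] using this

lemma qf_step {R : X → ℝ} (hR : ∀ x, 0 ≤ R x) {e : ℝ} {C K0 : Set X} {F : X → ℝ≥0∞} {M : ℝ≥0}
    {x x' : X} (hx' : x' ∈ C) (hd : dist x x' ≤ e) :
    qf R e C K0 F M x' ≤ qf R e C K0 F M x + R x * dist x x' := by
  have h := qd_step (R := R) (K0 := K0) (F := F) hx' hd
  have h2 : min (qd R e C K0 F x') M ≤
      min (qd R e C K0 F x) M + ENNReal.ofReal (R x * dist x x') := by
    rw [ENNReal.ofReal_mul (hR x)]
    rcases le_total (qd R e C K0 F x) M with h3 | h3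
    · rw [min_eq_left h3]; exact (min_le_left _ _).trans h
    · rw [min_eq_right h3]; exact (min_le_right _ _).trans le_self_add
  have h3 := ENNReal.toReal_mono (ENNReal.add_ne_top.2 ⟨qf_ne _ _, ENNReal.ofReal_ne_top⟩) h2
  rwa [ENNReal.toReal_add (qf_ne _ _) ENNReal.ofReal_ne_top,
    ENNReal.toReal_ofReal (mul_nonneg (hR x) dist_nonneg)] at h3

lemma ug_of_step {f R : X → ℝ} (hR : ∀ x, 0 ≤ R x) {Λ e : ℝ} (hΛ : 0 ≤ Λ) (he : 0 < e)
    (hlip : ∀ x y, R x ≤ R y + Λ * dist x y) (hc : Continuous R) {C : Set X}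
    (hstep : ∀ x ∈ C, ∀ x' ∈ C, dist x x' ≤ e → f x' ≤ f x + R x * dist x x') :
    UGOn f (fun x => ENNReal.ofReal (R x)) C := by
  intro γ hγ
  apply ugineq_of_dom
  have key : ∀ κ : ℝ≥0, 0 < κ → Dom (fun t => f (γ.toFun t))
      (fun t => ENNReal.ofReal (R (γ.toFun t)) + κ) 0 γ.len := by
    intro κ hκ
    refine loc_glob fun x hx => ⟨min (e / 2) (κ / (4 * (Λ + 1))), by positivity, ?_⟩
    intro s t hs hst ht h1 h2
    have h1' := lt_min_iff.1 h1
    have h2' := lt_min_iff.1 h2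
    rw [abs_lt, abs_lt] at h1' h2'
    have hts : t - s ≤ e := by linarith
    have hts2 : Λ * (t - s) ≤ κ := by
      have : t - s ≤ κ / (2 * (Λ + 1)) := by
        have : (κ : ℝ) / (2 * (Λ + 1)) = 2 * (κ / (4 * (Λ + 1))) := by field_simp; ring
        linarith
      rw [le_div_iff₀ (by positivity)] at this
      nlinarith [κ.2]
    have hd : ∀ a b, s ≤ a → a ≤ b → b ≤ t → dist (γ.toFun a) (γ.toFun b) ≤ b - a := by
      intro a b ha hab hb
      have := γ.lip.dist_le_mul a ⟨by linarith, by linarith⟩ b ⟨by linarith, by linarith⟩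
      rw [Real.dist_eq, abs_sub_comm, abs_of_nonneg (by linarith)] at this
      simpa using this
    have hdst := hd s t le_rfl hst le_rfl
    have a1 := hstep _ (hγ s ⟨hs, by linarith⟩) _ (hγ t ⟨by linarith, ht⟩) (hdst.trans hts)
    have a2 := hstep _ (hγ t ⟨by linarith, ht⟩) _ (hγ s ⟨hs, by linarith⟩)
      (by rw [dist_comm]; exact hdst.trans hts)
    rw [dist_comm] at a2
    set P := max (R (γ.toFun s)) (R (γ.toFun t))
    have b0 : 0 ≤ P := (hR _).trans (le_max_left _ _)
    have b1 : |f (γ.toFun s) - f (γ.toFun t)| ≤ P * (t - s) := by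
      have c1 : R (γ.toFun s) * dist (γ.toFun s) (γ.toFun t) ≤ P * (t - s) :=
        mul_le_mul (le_max_left _ _) hdst dist_nonneg b0
      have c2 : R (γ.toFun t) * dist (γ.toFun s) (γ.toFun t) ≤ P * (t - s) :=
        mul_le_mul (le_max_right _ _) hdst dist_nonneg b0
      rw [abs_le]; constructor <;> linarith
    have b2 : ∀ r ∈ Ioc s t, P ≤ R (γ.toFun r) + κ := by
      intro r hr
      refine max_le ?_ ?_
      · have := hlip (γ.toFun s) (γ.toFun r)
        have h5 := hd s r le_rfl hr.1.le hr.2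
        have : Λ * dist (γ.toFun s) (γ.toFun r) ≤ Λ * (t - s) := by
          gcongr; linarith [hr.2]
        linarith
      · have := hlip (γ.toFun t) (γ.toFun r)
        have h5 := hd r t hr.1.le hr.2 le_rfl
        rw [dist_comm] at h5
        have : Λ * dist (γ.toFun t) (γ.toFun r) ≤ Λ * (t - s) := by
          gcongr; linarith [hr.1]
        linarith
    calc ENNReal.ofReal |f (γ.toFun s) - f (γ.toFun t)| ≤ ENNReal.ofReal (P * (t - s)) :=
          ENNReal.ofReal_le_ofReal b1
      _ = ∫⁻ r in Ioc s t, ENNReal.ofReal P := by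
          rw [ENNReal.ofReal_mul b0]; simp
      _ ≤ _ := setLIntegral_mono' measurableSet_Ioc fun r hr => by
          refine (ENNReal.ofReal_le_ofReal (b2 r hr)).trans ?_
          refine ENNReal.ofReal_add_le.trans ?_
          simp
  intro s t hs hst ht
  refine ENNReal.le_of_forall_pos_le_add fun κ hκ _ => ?_
  have hpos : (0 : ℝ) < t - s + 1 := by linarith
  set κ' : ℝ≥0 := κ / Real.toNNReal (t - s + 1) with hκ'
  have hκ'0 : 0 < κ' := div_pos hκ (Real.toNNReal_pos.2 hpos)
  refine (key κ' hκ'0 s t hs hst ht).trans ?_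
  rw [lintegral_add_right _ measurable_const]
  refine add_le_add le_rfl ?_
  simp only [lintegral_const, MeasurableSet.univ, Measure.restrict_apply, univ_inter,
    Real.volume_Ioc]
  calc (κ' : ℝ≥0∞) * ENNReal.ofReal (t - s) ≤ κ' * ENNReal.ofReal (t - s + 1) := by
        gcongr; linarith
    _ = κ := by
        rw [ENNReal.ofReal, ← ENNReal.coe_mul, hκ', div_mul_cancel₀]
        exact (Real.toNNReal_pos.2 hpos).ne'


lemma exists_ultra {P : ℕ → Prop} (h : ∃ᶠ n in atTop, P n) :
    ∃ 𝒰 : Ultrafilter ℕ, (𝒰 : Filter ℕ) ≤ atTop ∧ ∀ᶠ n in (𝒰 : Filter ℕ), P n := by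
  have : NeBot (atTop ⊓ 𝓟 {n | P n}) := Filter.frequently_mem_iff_neBot.1 h
  refine ⟨Ultrafilter.of (atTop ⊓ 𝓟 {n | P n}), (Ultrafilter.of_le _).trans inf_le_left, ?_⟩
  exact ((Ultrafilter.of_le _).trans inf_le_right) (mem_principal_self _)

lemma ultra_lim {Y : Type*} [TopologicalSpace Y] (𝒰 : Ultrafilter ℕ) {K : Set Y} (hK : IsCompact K)
    {f : ℕ → Y} (h : ∀ᶠ n in (𝒰 : Filter ℕ), f n ∈ K) :
    ∃ y ∈ K, Tendsto f 𝒰 (𝓝 y) := by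
  obtain ⟨y, hy, hle⟩ := hK.ultrafilter_le_nhds (𝒰.map f) (by
    rw [Ultrafilter.coe_map, le_principal_iff]; exact h)
  exact ⟨y, hy, hle⟩

lemma qc_limit {ρ : X → ℝ≥0∞} (hρ : LowerSemicontinuous ρ) (𝒰 : Ultrafilter ℕ)
    (h𝒰 : (𝒰 : Filter ℕ) ≤ atTop) {K : Set X} (hK : IsCompact K) {Λ : ℝ} {c : ℝ≥0∞}
    {L : ℕ → ℝ} {γ : ℕ → ℝ → X}
    (hq : ∀ᶠ n : ℕ in (𝒰 : Filter ℕ), QC (1 / (n + 1 : ℝ)) K (L n) (γ n))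
    (hL : ∀ᶠ n in (𝒰 : Filter ℕ), L n ≤ Λ)
    (hcost : ∀ c' > c, ∀ᶠ n in (𝒰 : Filter ℕ), qcost (Rn ρ n) (L n) (γ n) ≤ c') :
    ∃ Γ : Curve X, Γ.In K ∧ Γ.integral ρ ≤ c ∧ Γ.len ≤ Λ ∧
      Tendsto (fun n => γ n 0) 𝒰 (𝓝 (Γ.toFun 0)) ∧
      Tendsto (fun n => γ n (L n)) 𝒰 (𝓝 (Γ.toFun Γ.len)) := by
  -- clamped curves
  set G : ℕ → ℝ → X := fun n t => γ n (max 0 (min t (L n))) with hG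
  have hcl : ∀ n : ℕ, QC (1 / (n + 1 : ℝ)) K (L n) (γ n) → ∀ t, max 0 (min t (L n)) ∈ Icc 0 (L n) :=
    fun n h t => ⟨le_max_left _ _, max_le h.nonneg (min_le_right _ _)⟩
  have hGK : ∀ t, ∀ᶠ n in (𝒰 : Filter ℕ), G n t ∈ K := fun t => by
    filter_upwards [hq] with n h
    exact h.mem _ (hcl n h t)
  have hGl : ∀ n : ℕ, QC (1 / (n + 1 : ℝ)) K (L n) (γ n) → ∀ s t,
      dist (G n s) (G n t) ≤ |s - t| + 1 / (n + 1 : ℝ) := by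
    intro n h
    have key : ∀ s t, s ≤ t → dist (G n s) (G n t) ≤ |s - t| + 1 / (n + 1 : ℝ) := by
      intro s t hst
      have h1 : max 0 (min s (L n)) ≤ max 0 (min t (L n)) :=
        max_le_max le_rfl (min_le_min hst le_rfl)
      refine (h.qlip _ _ (hcl n h s).1 h1 (hcl n h t).2).trans ?_
      have : max 0 (min t (L n)) - max 0 (min s (L n)) ≤ |s - t| := by
        rw [abs_sub_comm, abs_of_nonneg (by linarith)]
        simp only [max_def, min_def]
        split_ifs <;> linarith [h.nonneg]
      linarith
    intro s t
    rcases le_total s t with h1 | h1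
    · exact key s t h1
    · rw [dist_comm, abs_sub_comm]; exact key t s h1
  choose Γ hΓK hΓ using fun t => ultra_lim 𝒰 hK (hGK t)
  obtain ⟨ℓ, hℓ, hLℓ⟩ := ultra_lim 𝒰 (isCompact_Icc (a := (0:ℝ)) (b := Λ)) (f := L) (by
    filter_upwards [hq, hL] with n h1 h2
    exact ⟨h1.nonneg, h2⟩)
  have he : Tendsto (fun n : ℕ => 1 / (n + 1 : ℝ)) 𝒰 (𝓝 0) :=
    tendsto_one_div_add_atTop_nhds_zero_nat.mono_left h𝒰
  have hΓl : ∀ s t, dist (Γ s) (Γ t) ≤ |s - t| := by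
    intro s t
    have h1 : Tendsto (fun n : ℕ => |s - t| + 1 / (n + 1 : ℝ)) 𝒰 (𝓝 (|s - t| + 0)) :=
      tendsto_const_nhds.add he
    rw [add_zero] at h1
    refine le_of_tendsto_of_tendsto ((hΓ s).dist (hΓ t)) h1 ?_
    filter_upwards [hq] with n h
    exact hGl n h s t
  have hΓL : LipschitzWith 1 Γ := LipschitzWith.of_dist_le_mul fun s t => by
    simpa [Real.dist_eq] using hΓl s t
  refine ⟨⟨ℓ, hℓ.1, Γ, hΓL.lipschitzOnWith⟩, fun t _ => hΓK t, ?_, hℓ.2, ?_, ?_⟩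
  rotate_left
  · refine (hΓ 0).congr' ?_
    filter_upwards [hq] with n h
    simp [hG, h.nonneg]
  · show Tendsto _ _ (𝓝 (Γ ℓ))
    rw [tendsto_iff_dist_tendsto_zero]
    have h1 : Tendsto (fun n : ℕ => (|L n - ℓ| + 1 / (n + 1 : ℝ)) + dist (G n ℓ) (Γ ℓ)) 𝒰 (𝓝 0) := by
      have h2 := (tendsto_iff_dist_tendsto_zero.1 hLℓ).add he
      have h3 := h2.add (tendsto_iff_dist_tendsto_zero.1 (hΓ ℓ))
      simpa [Real.dist_eq] using h3
    refine squeeze_zero' (Eventually.of_forall fun n => dist_nonneg) ?_ h1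
    filter_upwards [hq] with n h
    have e1 : γ n (L n) = G n (L n) := by simp [hG, h.nonneg]
    rw [e1]
    refine (dist_triangle _ (G n ℓ) _).trans ?_
    gcongr
    exact hGl n h _ _
  -- uniform convergence
  have hunif : ∀ κ > 0, ∀ᶠ n in (𝒰 : Filter ℕ), ∀ t ∈ Icc 0 ℓ, dist (G n t) (Γ t) ≤ κ := by
    intro κ hκ
    obtain ⟨T, hTs, hTf, hT⟩ := (isCompact_Icc (a := (0:ℝ)) (b := ℓ)).finite_cover_balls
      (e := κ / 4) (by positivity)
    have h1 : ∀ᶠ n in (𝒰 : Filter ℕ), ∀ τ ∈ T, dist (G n τ) (Γ τ) < κ / 4 := by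
      rw [hTf.eventually_all]
      intro τ _
      exact (tendsto_iff_dist_tendsto_zero.1 (hΓ τ)).eventually (gt_mem_nhds (by positivity))
    have h2 : ∀ᶠ n : ℕ in (𝒰 : Filter ℕ), 1 / (n + 1 : ℝ) < κ / 4 :=
      he.eventually (gt_mem_nhds (by positivity))
    filter_upwards [hq, h1, h2] with n h a1 a2 t ht
    obtain ⟨τ, hτ, htτ⟩ := mem_iUnion₂.1 (hT ht)
    rw [mem_ball, Real.dist_eq] at htτ
    have b1 := hGl n h t τ
    have b2 := hΓl τ t
    rw [abs_sub_comm] at b2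
    have b3 := a1 τ hτ
    have := dist_triangle4 (G n t) (G n τ) (Γ τ) (Γ t)
    linarith
  show ∫⁻ t in Icc 0 ℓ, ρ (Γ t) ≤ c
  have hmeas : ∀ m, Measurable fun t => ENNReal.ofReal (Rn ρ m (Γ t)) := fun m =>
    ((Rn_cont ρ m).comp hΓL.continuous).measurable.ennreal_ofReal
  have step : ∀ m, ∫⁻ t in Icc 0 ℓ, ENNReal.ofReal (Rn ρ m (Γ t)) ≤ c := by
    intro m
    refine le_of_forall_gt_imp_ge_of_dense fun c' hc' => ?_
    -- bound with κ
    have bound : ∀ κ : ℝ, 0 < κ → ∫⁻ t in Icc 0 ℓ, ENNReal.ofReal (Rn ρ m (Γ t)) ≤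
        c' + ENNReal.ofReal ((m + 1) * κ * ℓ + (m + 1) * κ) := by
      intro κ hκ
      have hev : ∀ᶠ n in (𝒰 : Filter ℕ), ℓ - κ < L n := hLℓ.eventually (lt_mem_nhds (by linarith))
      have hm : ∀ᶠ n in (𝒰 : Filter ℕ), m ≤ n := h𝒰 (eventually_ge_atTop m)
      obtain ⟨n, a1, a2, a3, a4, a5⟩ :=
        (hev.and (hm.and ((hunif κ hκ).and ((hcost c' hc').and hq)))).exists
      have s1 : ∫⁻ t in Icc 0 (ℓ - κ), ENNReal.ofReal (Rn ρ m (Γ t)) ≤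
          c' + ENNReal.ofReal ((m + 1) * κ * ℓ) := by
        calc ∫⁻ t in Icc 0 (ℓ - κ), ENNReal.ofReal (Rn ρ m (Γ t))
            ≤ ∫⁻ t in Icc 0 (ℓ - κ), (ENNReal.ofReal (Rn ρ n (γ n t))
                + ENNReal.ofReal ((m + 1) * κ)) := by
              refine setLIntegral_mono' measurableSet_Icc fun t ht => ?_
              rw [← ENNReal.ofReal_add (Rn_nonneg _ _ _) (by positivity)]
              refine ENNReal.ofReal_le_ofReal ?_
              have e1 : γ n t = G n t := by
                simp [hG, min_eq_left (show t ≤ L n by linarith [ht.2]), ht.1]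
              have b1 := Rn_lip ρ m (Γ t) (G n t)
              have b2 := a3 t ⟨ht.1, by linarith [ht.2]⟩
              rw [dist_comm] at b2
              have b3 : (m + 1 : ℝ) * dist (Γ t) (G n t) ≤ (m + 1) * κ := by gcongr
              have b4 := Rn_mono ρ (G n t) a2
              simp only at b4
              rw [e1]
              linarith
          _ = (∫⁻ t in Icc 0 (ℓ - κ), ENNReal.ofReal (Rn ρ n (γ n t))) +
                ENNReal.ofReal ((m + 1) * κ) * ENNReal.ofReal (ℓ - κ) := by
              rw [lintegral_add_right _ measurable_const]; simp
          _ ≤ c' + ENNReal.ofReal ((m + 1) * κ * ℓ) := by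
              rw [← ENNReal.ofReal_mul (by positivity)]
              refine add_le_add ((lintegral_mono_set (Icc_subset_Icc le_rfl a1.le)).trans a4)
                (ENNReal.ofReal_le_ofReal ?_)
              have : (m + 1) * κ * (ℓ - κ) ≤ (m + 1) * κ * ℓ := by gcongr; linarith
              exact this
      have s2 : ∫⁻ t in Ioc (ℓ - κ) ℓ, ENNReal.ofReal (Rn ρ m (Γ t)) ≤
          ENNReal.ofReal ((m + 1) * κ) := by
        calc _ ≤ ∫⁻ t in Ioc (ℓ - κ) ℓ, ENNReal.ofReal (m + 1) :=
              lintegral_mono fun t => ENNReal.ofReal_le_ofReal (Rn_le_nat _ _ _)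
          _ = _ := by
              rw [ENNReal.ofReal_mul (by positivity)]; simp
      have hsub : Icc 0 ℓ ⊆ Icc 0 (ℓ - κ) ∪ Ioc (ℓ - κ) ℓ := by
        intro t ht
        rcases le_or_gt t (ℓ - κ) with h | h
        · exact Or.inl ⟨ht.1, h⟩
        · exact Or.inr ⟨h, ht.2⟩
      refine (lintegral_mono_set hsub).trans ((lintegral_union_le _ _ _).trans ?_)
      rw [ENNReal.ofReal_add (by have := hℓ.1; positivity) (by positivity), ← add_assoc]
      exact add_le_add s1 s2
    have hlim : Tendsto (fun κ : ℝ => c' + ENNReal.ofReal ((m + 1) * κ * ℓ + (m + 1) * κ))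
        (𝓝[>] 0) (𝓝 (c' + ENNReal.ofReal ((m + 1) * 0 * ℓ + (m + 1) * 0))) := by
      refine Tendsto.add tendsto_const_nhds (ENNReal.tendsto_ofReal ?_)
      refine Tendsto.mono_left (Continuous.tendsto (by fun_prop) _) nhdsWithin_le_nhds
    simp only [mul_zero, zero_mul, add_zero, ENNReal.ofReal_zero] at hlim
    refine ge_of_tendsto hlim ?_
    filter_upwards [self_mem_nhdsWithin] with κ hκ
    exact bound κ hκ
  have : ∀ t, ρ (Γ t) = ⨆ m, ENNReal.ofReal (Rn ρ m (Γ t)) := fun t => Rn_sup hρ _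
  simp_rw [this]
  rw [lintegral_iSup hmeas fun m n hmn t => ENNReal.ofReal_le_ofReal (Rn_mono ρ _ hmn)]
  exact iSup_le step


/-! ### Poincare telescoping -/

lemma avg_diff {μ : Measure X} {f : X → ℝ} {B B' : Set X} {D c : ℝ} (hB' : B' ⊆ B)
    (mB : MeasurableSet B) (hf : IntegrableOn f B μ) (h0 : 0 < μ B') (hfin : μ B < ∞)
    (hD0 : 0 ≤ D) (hD : μ B ≤ ENNReal.ofReal D * μ B') :
    |(⨍ y in B', f y ∂μ) - c| ≤ D * ⨍ y in B, |f y - c| ∂μ := by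
  have hfin' : μ B' < ∞ := (measure_mono hB').trans_lt hfin
  have hBp : 0 < μ B := h0.trans_le (measure_mono hB')
  have hr' : 0 < μ.real B' := ENNReal.toReal_pos h0.ne' hfin'.ne
  have hr : 0 < μ.real B := ENNReal.toReal_pos hBp.ne' hfin.ne
  have hD' : μ.real B ≤ D * μ.real B' := by
    have := ENNReal.toReal_mono (ENNReal.mul_ne_top ENNReal.ofReal_ne_top hfin'.ne) hD
    rwa [ENNReal.toReal_mul, ENNReal.toReal_ofReal hD0] at this
  have hi : IntegrableOn (fun y => f y - c) B μ :=
    hf.sub (integrableOn_const hfin.ne)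
  have hi' := hi.mono_set hB'
  have e1 : (⨍ y in B', f y ∂μ) - c = (μ.real B')⁻¹ * ∫ y in B', (f y - c) ∂μ := by
    rw [setAverage_eq, integral_sub (hf.mono_set hB') (integrableOn_const hfin'.ne)]
    simp only [smul_eq_mul, setIntegral_const]
    field_simp
  rw [e1, abs_mul, abs_of_pos (inv_pos.2 hr'), setAverage_eq, smul_eq_mul, ← mul_assoc]
  have h1 : |∫ y in B', (f y - c) ∂μ| ≤ ∫ y in B, |f y - c| ∂μ := by
    refine (abs_integral_le_integral_abs).trans ?_
    exact setIntegral_mono_set hi.abs (ae_of_all _ fun y => abs_nonneg _) hB'.eventuallyLE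
  have h2 : (μ.real B')⁻¹ ≤ D * (μ.real B)⁻¹ := by
    rw [← div_eq_mul_inv, le_div_iff₀ hr, inv_mul_le_iff₀ hr']
    linarith
  exact mul_le_mul h2 h1 (abs_nonneg _) (by positivity)

lemma telescope {μ : Measure X} {Cd CP lam : ℝ} (hd : Doubling μ Cd) (hp : Poincare μ CP lam)
    {f : X → ℝ} (hf : Continuous f) {M : ℝ} (hM : ∀ x, |f x| ≤ M) {h : X → ℝ≥0∞}
    (hh : IsUpperGradient f h) {m : ℝ} (hm : 0 ≤ m) {x y : X}
    (hx : ∀ r > 0, ∫⁻ z in ball x r, h z ∂μ ≤ ENNReal.ofReal m * μ (ball x r))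
    (hy : ∀ r > 0, ∫⁻ z in ball y r, h z ∂μ ≤ ENNReal.ofReal m * μ (ball y r)) :
    |f x - f y| ≤ 8 * Cd ^ 2 * CP * m * dist x y := by
  obtain ⟨hCP, hlam, hP⟩ := hp
  have hCd := hd.1
  have hint : ∀ z r, 0 < r → IntegrableOn f (ball z r) μ := fun z r hr =>
    Measure.integrableOn_of_bounded (M := M) (hd.2 z r hr).2.2.ne hf.aestronglyMeasurable
      (ae_of_all _ fun z => by rw [Real.norm_eq_abs]; exact hM z)
  have hL1 : MemL1Loc μ univ f := by
    refine ⟨hf.measurable.aemeasurable, fun z _ => ⟨1, one_pos, ?_⟩⟩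
    rw [univ_inter]
    have := (hint z 1 one_pos).2
    unfold HasFiniteIntegral at this
    refine lt_of_eq_of_lt (lintegral_congr fun y => ?_) this
    rw [← ofReal_norm_eq_enorm, Real.norm_eq_abs]
  have hPr : ∀ z, (∀ r > 0, ∫⁻ w in ball z r, h w ∂μ ≤ ENNReal.ofReal m * μ (ball z r)) →
      ∀ r > 0, ⨍ w in ball z r, |f w - ⨍ w in ball z r, f w ∂μ| ∂μ ≤ CP * r * m := by
    intro z hz r hr
    have h1 := hP z r hr f h hL1 hh
    have hlr : 0 < lam * r := by positivity
    have h2 : (∫⁻ y in ball z (lam * r), h y ∂μ) / μ (ball z (lam * r)) ≤ ENNReal.ofReal m :=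
      ENNReal.div_le_of_le_mul (hz _ hlr)
    have h3 := h1.trans (mul_le_mul' le_rfl h2)
    rw [← ENNReal.ofReal_mul (by positivity)] at h3
    exact (ENNReal.ofReal_le_ofReal_iff (by positivity)).1 h3
  have hdist : ∀ z, (∀ r > 0, ∫⁻ w in ball z r, h w ∂μ ≤ ENNReal.ofReal m * μ (ball z r)) →
      ∀ r > 0, |(⨍ w in ball z r, f w ∂μ) - f z| ≤ 2 * (Cd * CP * r * m) := by
    intro z hz r hr
    set a : ℕ → ℝ := fun n => ⨍ w in ball z ((1 / 2) ^ n * r), f w ∂μ with ha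
    have hrn : ∀ n : ℕ, 0 < (1 / 2 : ℝ) ^ n * r := fun n => by positivity
    have hstep : ∀ n, |a (n + 1) - a n| ≤ Cd * CP * r * m * (1 / 2) ^ n := by
      intro n
      have e : (1 / 2 : ℝ) ^ n * r = 2 * ((1 / 2) ^ (n + 1) * r) := by rw [pow_succ]; ring
      have h1 := avg_diff (μ := μ) (f := f) (B := ball z ((1 / 2) ^ n * r))
        (B' := ball z ((1 / 2) ^ (n + 1) * r)) (D := Cd) (c := a n)
        (ball_subset_ball (by rw [e]; linarith [hrn (n + 1)])) measurableSet_ball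
        (hint _ _ (hrn n)) (hd.pos _ (hrn _)) (hd.2 _ _ (hrn n)).2.2 (by linarith)
        (by rw [e]; exact (hd.2 _ _ (hrn (n + 1))).2.1)
      refine h1.trans ?_
      have h2 := hPr z hz _ (hrn n)
      calc _ ≤ Cd * (CP * ((1 / 2) ^ n * r) * m) := by
            refine mul_le_mul_of_nonneg_left h2 (by linarith)
        _ = _ := by ring
    have hA : 0 ≤ Cd * CP * r * m := by positivity
    have htel : ∀ n, |a 0 - a n| ≤ Cd * CP * r * m * (2 - 2 * (1 / 2) ^ n) := by
      intro n
      induction n with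
      | zero => simp
      | succ n ih =>
        have := abs_sub_le (a 0) (a n) (a (n + 1))
        have h2 := hstep n
        rw [abs_sub_comm] at h2
        rw [pow_succ]
        nlinarith
    refine le_of_forall_pos_le_add fun ε hε => ?_
    obtain ⟨δ, hδ, hB⟩ := Metric.continuous_iff.1 hf z ε hε
    obtain ⟨n, hn⟩ := exists_pow_lt_of_lt_one (show 0 < δ / r by positivity)
      (show (1 / 2 : ℝ) < 1 by norm_num)
    have hnδ : (1 / 2) ^ n * r < δ := by rwa [lt_div_iff₀ hr] at hn
    have h3 : |a n - f z| ≤ ε := by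
      have h1 := avg_diff (μ := μ) (f := f) (B := ball z ((1 / 2) ^ n * r))
        (B' := ball z ((1 / 2) ^ n * r)) (D := 1) (c := f z) Subset.rfl measurableSet_ball
        (hint _ _ (hrn n)) (hd.pos _ (hrn _)) (hd.2 _ _ (hrn n)).2.2 (by norm_num) (by simp)
      rw [one_mul] at h1
      refine h1.trans ?_
      have hμr : 0 < μ.real (ball z ((1 / 2) ^ n * r)) :=
        ENNReal.toReal_pos (hd.pos _ (hrn n)).ne' (hd.2 _ _ (hrn n)).2.2.ne
      rw [setAverage_eq, smul_eq_mul, inv_mul_le_iff₀ hμr, mul_comm]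
      have h5 : ∫ w in ball z ((1 / 2) ^ n * r), |f w - f z| ∂μ ≤
          ∫ w in ball z ((1 / 2) ^ n * r), ε ∂μ := by
        refine setIntegral_mono_on ?_ (integrableOn_const (hd.2 _ _ (hrn n)).2.2.ne)
          measurableSet_ball fun w hw => ?_
        · exact ((hint _ _ (hrn n)).sub (integrableOn_const (hd.2 _ _ (hrn n)).2.2.ne)).abs
        · have := hB w (lt_trans hw hnδ)
          rw [Real.dist_eq] at this
          exact this.le
      simpa [mul_comm] using h5
    have h4 := htel n
    have h5 : (0 : ℝ) < (1 / 2) ^ n := by positivity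
    have e0 : (⨍ w in ball z r, f w ∂μ) = a 0 := by simp [ha]
    rw [e0]
    have := abs_sub_le (a 0) (a n) (f z)
    nlinarith
  rcases eq_or_ne x y with rfl | hne
  · simp
  have hr : 0 < dist x y := dist_pos.2 hne
  set r := dist x y with hrd
  have a1 := hdist x hx (2 * r) (by positivity)
  have a2 := hdist y hy r hr
  have a3 := avg_diff (μ := μ) (f := f) (B := ball x (2 * r)) (B' := ball y r) (D := Cd ^ 2)
    (c := ⨍ w in ball x (2 * r), f w ∂μ)
    (ball_subset_ball' (by rw [dist_comm, ← hrd]; linarith)) measurableSet_ball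
    (hint _ _ (by positivity)) (hd.pos _ hr) (hd.2 _ _ (by positivity)).2.2 (by positivity) (by
      rw [ENNReal.ofReal_pow (by linarith)]
      refine (measure_mono (ball_subset_ball' ?_)).trans (hd.pow y 2 hr)
      rw [← hrd]; linarith)
  have a4 := hPr x hx (2 * r) (by positivity)
  have a5 : Cd ^ 2 * (⨍ w in ball x (2 * r), |f w - ⨍ w in ball x (2 * r), f w ∂μ| ∂μ) ≤
      Cd ^ 2 * (CP * (2 * r) * m) := by gcongr
  have t1 := abs_sub_le (f x) (⨍ w in ball x (2 * r), f w ∂μ) (f y)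
  have t2 := abs_sub_le (⨍ w in ball x (2 * r), f w ∂μ) (⨍ w in ball y r, f w ∂μ) (f y)
  rw [abs_sub_comm] at a1 a3
  have hP0 : 0 ≤ CP * r * m := by positivity
  have hC2 : Cd ≤ Cd ^ 2 := by nlinarith
  have hfin : Cd * (CP * r * m) ≤ Cd ^ 2 * (CP * r * m) := by gcongr
  nlinarith

lemma chainCurve {μ : Measure X} [ProperSpace X] {Cd CP lam : ℝ} (hd : Doubling μ Cd)
    (hp : Poincare μ CP lam) {ρ : X → ℝ≥0∞} (hρ : LowerSemicontinuous ρ) (h1 : ∀ x, 1 ≤ ρ x)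
    {m : ℝ} (hm : 0 ≤ m) {x y : X}
    (hx : ∀ r > 0, ∫⁻ z in ball x r, ρ z ∂μ ≤ ENNReal.ofReal m * μ (ball x r))
    (hy : ∀ r > 0, ∫⁻ z in ball y r, ρ z ∂μ ≤ ENNReal.ofReal m * μ (ball y r)) :
    ∃ Γ : Curve X, Γ.toFun 0 = x ∧ Γ.toFun Γ.len = y ∧
      Γ.integral ρ ≤ ENNReal.ofReal (8 * Cd ^ 2 * CP * m * dist x y) := by
  have hCd := hd.1
  have hCP := hp.1
  set c : ℝ := 8 * Cd ^ 2 * CP * m * dist x y with hc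
  have hc0 : 0 ≤ c := by positivity
  set N : ℝ≥0 := Real.toNNReal (c + 1) with hN
  have hNc : (N : ℝ) = c + 1 := Real.coe_toNNReal _ (by positivity)
  have hqd : ∀ n : ℕ, qd (Rn ρ n) (1 / (n + 1 : ℝ)) univ {x} 0 y ≤ ENNReal.ofReal c := by
    intro n
    have he : (0 : ℝ) < 1 / (n + 1 : ℝ) := by positivity
    set f := qf (Rn ρ n) (1 / (n + 1 : ℝ)) univ {x} 0 N with hf
    have hstep : ∀ a b, dist a b ≤ 1 / (n + 1 : ℝ) → f b ≤ f a + Rn ρ n a * dist a b :=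
      fun a b hab => qf_step (Rn_nonneg ρ n) (mem_univ _) hab
    have hstep' : ∀ a b, dist a b ≤ 1 / (n + 1 : ℝ) → f b ≤ f a + (n + 1) * dist a b := by
      intro a b hab
      refine (hstep a b hab).trans ?_
      gcongr
      exact Rn_le_nat ρ n a
    have hcont : Continuous f := by
      refine Metric.continuous_iff.2 fun a ε hε => ⟨min (1 / (n + 1 : ℝ)) (ε / (n + 1)),
        by positivity, fun b hb => ?_⟩
      have hb1 := hb.trans_le (min_le_left _ _)
      have hb2 := hb.trans_le (min_le_right _ _)
      rw [lt_div_iff₀ (by positivity)] at hb2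
      have s1 := hstep' b a hb1.le
      have s2 := hstep' a b (by rw [dist_comm]; exact hb1.le)
      rw [dist_comm a b] at s2
      rw [Real.dist_eq, abs_lt]
      constructor <;> linarith
    have hUG : IsUpperGradient f ρ := by
      refine ⟨hρ.measurable, fun γ => ?_⟩
      have := ug_of_step (f := f) (R := Rn ρ n) (Λ := n + 1) (C := univ) (Rn_nonneg ρ n)
        (by positivity) he (Rn_lip ρ n) (Rn_cont ρ n) (fun a _ b _ hab => hstep a b hab) γ
        (fun _ _ => mem_univ _)
      exact le_trans this (γ.integral_mono fun z => ofReal_Rn_le ρ n z)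
    have ht := telescope hd hp hcont (M := N) (fun z => by
      rw [abs_of_nonneg qf_nonneg]; exact qf_le) hUG hm hx hy
    have hfx : f x = 0 := by
      have h0 := qd_self_le (R := Rn ρ n) he.le (C := univ) (K0 := {x}) (F := 0) (mem_univ x)
        (mem_singleton x)
      have h0' : qd (Rn ρ n) (1 / (n + 1 : ℝ)) univ {x} 0 x = 0 := le_antisymm h0 bot_le
      rw [hf]; unfold qf; rw [h0']; simp
    rw [hfx, zero_sub, abs_neg, abs_of_nonneg qf_nonneg] at ht
    have hlt : min (qd (Rn ρ n) (1 / (n + 1 : ℝ)) univ {x} 0 y) N ≤ ENNReal.ofReal c := by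
      rw [ENNReal.le_ofReal_iff_toReal_le (qf_ne _ _) hc0]
      exact ht
    rcases min_le_iff.1 hlt with h | h
    · exact h
    · exfalso
      have : (N : ℝ) ≤ c := by
        have h2 := ENNReal.toReal_mono ENNReal.ofReal_ne_top h
        rwa [ENNReal.toReal_ofReal hc0, ENNReal.coe_toReal] at h2
      linarith
  have hex : ∀ n : ℕ, ∃ L γ, QC (1 / (n + 1 : ℝ)) (univ : Set X) L γ ∧ γ 0 ∈ ({x} : Set X) ∧
      γ L = y ∧ (0 : X → ℝ≥0∞) (γ 0) + qcost (Rn ρ n) L γ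
        < ENNReal.ofReal (c + 1 / (n + 1 : ℝ)) := by
    intro n
    refine exists_of_qd_lt ((hqd n).trans_lt ?_)
    have he : (0 : ℝ) < 1 / (n + 1 : ℝ) := by positivity
    exact (ENNReal.ofReal_lt_ofReal_iff (by positivity)).2 (by linarith)
  choose L γ hQ h0 hL hcost using hex
  have hcost' : ∀ n : ℕ, qcost (Rn ρ n) (L n) (γ n) ≤ ENNReal.ofReal (c + 1 / (n + 1 : ℝ)) := by
    intro n; have := (hcost n).le; simpa using this
  have hone : ∀ n : ℕ, 1 / (n + 1 : ℝ) ≤ 1 := fun n => by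
    rw [div_le_one (by positivity)]; linarith [(Nat.cast_nonneg n : (0 : ℝ) ≤ n)]
  have hLb : ∀ n, L n ≤ c + 1 := by
    intro n
    have e1 : ENNReal.ofReal (L n) ≤ qcost (Rn ρ n) (L n) (γ n) := by
      calc ENNReal.ofReal (L n) = ∫⁻ t in Icc 0 (L n), 1 := by simp
        _ ≤ _ := lintegral_mono fun t => by
            rw [← ENNReal.ofReal_one]
            exact ENNReal.ofReal_le_ofReal (one_le_Rn h1 n _)
    have e2 := e1.trans (hcost' n)
    have he : (0 : ℝ) < 1 / (n + 1 : ℝ) := by positivity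
    have := (ENNReal.ofReal_le_ofReal_iff (by positivity)).1 e2
    linarith [hone n]
  have hQ' : ∀ n : ℕ, QC (1 / (n + 1 : ℝ)) (closedBall x (c + 2)) (L n) (γ n) := by
    intro n
    refine ⟨(hQ n).nonneg, fun t ht => ?_, (hQ n).qlip⟩
    have := (hQ n).qlip 0 t le_rfl ht.1 ht.2
    rw [mem_singleton_iff.1 (h0 n)] at this
    rw [mem_closedBall, dist_comm]
    linarith [hone n, ht.2, hLb n]
  obtain ⟨𝒰, h𝒰, -⟩ := exists_ultra (P := fun _ => True) (Frequently.of_forall fun _ => trivial)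
  obtain ⟨Γ, -, hΓi, -, hΓ0, hΓ1⟩ := qc_limit hρ 𝒰 h𝒰 (isCompact_closedBall x (c + 2))
    (Λ := c + 1) (c := ENNReal.ofReal c) (Eventually.of_forall hQ') (Eventually.of_forall hLb) (by
      intro c' hc'
      have hlim : Tendsto (fun n : ℕ => ENNReal.ofReal (c + 1 / (n + 1 : ℝ))) atTop
          (𝓝 (ENNReal.ofReal (c + 0))) :=
        ENNReal.tendsto_ofReal (tendsto_const_nhds.add tendsto_one_div_add_atTop_nhds_zero_nat)
      rw [add_zero] at hlim
      filter_upwards [(hlim.mono_left h𝒰).eventually (gt_mem_nhds hc')] with n hn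
      exact (hcost' n).trans hn.le)
  refine ⟨Γ, ?_, ?_, hΓi⟩
  · have : (fun n => γ n 0) = fun _ => x := funext fun n => h0 n
    rw [this] at hΓ0
    exact tendsto_nhds_unique hΓ0 tendsto_const_nhds
  · have : (fun n => γ n (L n)) = fun _ => y := funext fun n => hL n
    rw [this] at hΓ1
    exact tendsto_nhds_unique hΓ1 tendsto_const_nhds


lemma max_fin {μ : Measure X} [ProperSpace X] {Cd : ℝ} (hd : Doubling μ Cd) {ρ : X → ℝ≥0∞}
    (hρ : Measurable ρ) (hi : ∫⁻ x, ρ x ∂μ < ∞) :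
    ∀ᵐ x ∂μ, ∃ m : ℝ≥0, ∀ r > 0, ∫⁻ z in ball x r, ρ z ∂μ ≤ m * μ (ball x r) := by
  have := hd.locFin
  have := hd.unifLoc
  filter_upwards [(IsUnifLocDoublingMeasure.vitaliFamily μ 1).ae_tendsto_lintegral_div
    hρ.aemeasurable hi.ne, ae_lt_top hρ hi.ne] with x hx hfx
  have h1 := hx.comp (IsUnifLocDoublingMeasure.tendsto_closedBall_filterAt μ (K := 1) (x := x)
    (l := 𝓝[>] (0 : ℝ)) (fun _ => x) (fun r => r) tendsto_id (by
      filter_upwards [self_mem_nhdsWithin] with r hr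
      simpa using (le_of_lt hr : (0 : ℝ) ≤ r)))
  have h2 : ∀ᶠ r in 𝓝[>] (0 : ℝ), (∫⁻ y in closedBall x r, ρ y ∂μ) / μ (closedBall x r)
      < ρ x + 1 := h1.eventually (gt_mem_nhds (ENNReal.lt_add_right hfx.ne one_ne_zero))
  obtain ⟨r0, hr0, h3⟩ := (mem_nhdsGT_iff_exists_Ioo_subset).1 h2
  have hr0' : (0 : ℝ) < r0 := hr0
  set r1 := r0 / 2 with hr1
  have hr1' : 0 < r1 := by positivity
  have hp := hd.pos x hr1'
  set a : ℝ≥0∞ := (ρ x + 1) * ENNReal.ofReal Cd + (∫⁻ x, ρ x ∂μ) / μ (ball x r1) with ha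
  have ha' : a ≠ ∞ := by
    rw [ha]
    refine ENNReal.add_ne_top.2 ⟨ENNReal.mul_ne_top (ENNReal.add_ne_top.2 ⟨hfx.ne, by simp⟩)
      ENNReal.ofReal_ne_top, ENNReal.div_ne_top hi.ne hp.ne'⟩
  refine ⟨a.toNNReal, fun r hr => ?_⟩
  rw [ENNReal.coe_toNNReal ha', ha, add_mul]
  rcases lt_or_ge r r0 with h | h
  · refine le_trans ?_ le_self_add
    have h4 : (∫⁻ y in closedBall x r, ρ y ∂μ) / μ (closedBall x r) < ρ x + 1 := h3 ⟨hr, h⟩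
    have hcb : μ (closedBall x r) ≤ μ (ball x (2 * r)) :=
      measure_mono (closedBall_subset_ball (by linarith))
    have hc0 : μ (closedBall x r) ≠ 0 :=
      ((hd.pos x hr).trans_le (measure_mono ball_subset_closedBall)).ne'
    have hct : μ (closedBall x r) ≠ ∞ := (hcb.trans_lt (hd.2 x (2 * r) (by linarith)).2.2).ne
    calc ∫⁻ z in ball x r, ρ z ∂μ ≤ ∫⁻ z in closedBall x r, ρ z ∂μ :=
          lintegral_mono_set ball_subset_closedBall
      _ ≤ (ρ x + 1) * μ (closedBall x r) :=
          (ENNReal.div_le_iff hc0 hct).1 h4.le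
      _ ≤ (ρ x + 1) * (ENNReal.ofReal Cd * μ (ball x r)) := by
          gcongr; exact hcb.trans (hd.2 x r hr).2.1
      _ = _ := by ring
  · refine le_trans ?_ le_add_self
    calc ∫⁻ z in ball x r, ρ z ∂μ ≤ ∫⁻ z, ρ z ∂μ := setLIntegral_le_lintegral _ _
      _ = (∫⁻ x, ρ x ∂μ) / μ (ball x r1) * μ (ball x r1) :=
          (ENNReal.div_mul_cancel hp.ne' (hd.2 x r1 hr1').2.2.ne).symm
      _ ≤ _ := by
          gcongr
          linarith

lemma mec {μ : Measure X} [ProperSpace X] {Cd CP lam : ℝ} (hd : Doubling μ Cd)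
    (hp : Poincare μ CP lam) {W : Set X} (hW : IsOpen W) {w : X → ℝ} {M : ℝ}
    (hM : ∀ x ∈ W, |w x| ≤ M) {ρ : X → ℝ≥0∞} (hρ : LowerSemicontinuous ρ)
    (hi : ∫⁻ x, ρ x ∂μ < ∞) (hUG : UGOn w ρ W) : AEMeasurable w (μ.restrict W) := by
  rcases W.eq_empty_or_nonempty with rfl | ⟨x0, hx0⟩
  · simp
  have hM0 : 0 ≤ M := (abs_nonneg _).trans (hM x0 hx0)
  have hCd : 1 ≤ Cd := hd.1
  have hCP : 1 ≤ CP := hp.1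
  set ρ' : X → ℝ≥0∞ := fun x => ρ x + 1 with hρ'
  have hl' : LowerSemicontinuous ρ' := hρ.add lowerSemicontinuous_const
  set K : ℝ := 8 * Cd ^ 2 * CP with hK
  have hK0 : 0 < K := by positivity
  set E : ℕ → Set X := fun m => {x | ball x (1 / (m + 1 : ℝ)) ⊆ W ∧
    ∀ r > 0, ∫⁻ z in ball x r, ρ' z ∂μ ≤ ENNReal.ofReal (m + 1 : ℝ) * μ (ball x r)} with hE
  have hlip : ∀ m : ℕ, LipschitzOnWith (Real.toNNReal (K * (m + 1) + 2 * M * (K * (m + 1) * (m + 1))))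
      w (E m) := by
    intro m
    refine LipschitzOnWith.of_dist_le_mul fun x hx y hy => ?_
    rw [Real.coe_toNNReal _ (by positivity), Real.dist_eq]
    have hxW : x ∈ W := hx.1 (mem_ball_self (by positivity))
    have hyW : y ∈ W := hy.1 (mem_ball_self (by positivity))
    have hd0 : 0 ≤ dist x y := dist_nonneg
    rcases lt_or_ge (K * (m + 1) * dist x y) (1 / (m + 1 : ℝ)) with h | h
    · obtain ⟨Γ, h0, hl, hint⟩ := chainCurve hd hp hl' (fun x => le_add_self) (m := m + 1)
        (by positivity) hx.2 hy.2
      rw [← hK] at hint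
      have hlen : Γ.len < 1 / (m + 1 : ℝ) := by
        refine lt_of_le_of_lt ?_ h
        rw [← ENNReal.ofReal_le_ofReal_iff (by positivity)]
        refine le_trans ?_ hint
        calc ENNReal.ofReal Γ.len = ∫⁻ t in Icc 0 Γ.len, 1 := by simp
          _ ≤ _ := lintegral_mono fun t => le_add_self
      have hin : Γ.In W := by
        intro t ht
        refine hx.1 ?_
        rw [← h0, mem_ball]
        refine lt_of_le_of_lt ?_ hlen
        have := Γ.lip.dist_le_mul t ht 0 ⟨le_rfl, Γ.len_nonneg⟩
        rw [Real.dist_eq, sub_zero, abs_of_nonneg ht.1] at this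
        simp only [NNReal.coe_one, one_mul] at this
        exact this.trans ht.2
      have hu := hUG Γ hin
      unfold UGIneq at hu
      rw [h0, hl] at hu
      have hu2 : ENNReal.ofReal |w x - w y| ≤ ENNReal.ofReal (K * (m + 1) * dist x y) :=
        (hu.trans (Γ.integral_mono fun z => le_self_add)).trans hint
      rw [ENNReal.ofReal_le_ofReal_iff (by positivity)] at hu2
      have : 0 ≤ 2 * M * (K * (m + 1) * (m + 1)) * dist x y := by positivity
      linarith
    · rw [div_le_iff₀ (by positivity)] at h
      have h1 := hM x hxW
      have h2 := hM y hyW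
      have h3 : |w x - w y| ≤ 2 * M := by
        rw [abs_le] at *; constructor <;> linarith
      have h4 : 2 * M * 1 ≤ 2 * M * (K * (m + 1) * dist x y * (m + 1)) := by gcongr
      have : 0 ≤ K * (m + 1) * dist x y := by positivity
      nlinarith
  choose f hf hfe using fun m => (hlip m).extend_real
  refine aemeasurable_of_tendsto_metrizable_ae atTop (f := f)
    (fun m => (hf m).continuous.measurable.aemeasurable) ?_
  rw [ae_restrict_iff' hW.measurableSet]
  filter_upwards [max_fin hd hρ.measurable hi] with x hx hxW
  obtain ⟨m, hm⟩ := hx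
  obtain ⟨r, hr, hrW⟩ := Metric.isOpen_iff.1 hW x hxW
  obtain ⟨n1, hn1⟩ := exists_nat_gt (m : ℝ)
  obtain ⟨n2, hn2⟩ := exists_nat_one_div_lt hr
  refine tendsto_const_nhds.congr' ?_
  filter_upwards [eventually_ge_atTop (max n1 n2)] with n hn
  refine hfe n ⟨?_, fun s hs => ?_⟩
  · refine (ball_subset_ball ?_).trans hrW
    refine le_trans ?_ hn2.le
    have : (n2 : ℝ) ≤ n := by exact_mod_cast (le_max_right n1 n2).trans hn
    gcongr
  · have h5 : (n1 : ℝ) ≤ n := by exact_mod_cast (le_max_left n1 n2).trans hn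
    have h6 : (m : ℝ≥0∞) + 1 ≤ ENNReal.ofReal (n + 1 : ℝ) := by
      rw [ENNReal.ofReal_add (by positivity) zero_le_one, ENNReal.ofReal_one]
      gcongr
      rw [← ENNReal.ofReal_coe_nnreal]
      exact ENNReal.ofReal_le_ofReal (by linarith)
    calc ∫⁻ z in ball x s, ρ' z ∂μ = (∫⁻ z in ball x s, ρ z ∂μ) + μ (ball x s) := by
          simp only [hρ']
          rw [lintegral_add_right _ measurable_const]; simp
      _ ≤ m * μ (ball x s) + 1 * μ (ball x s) := by rw [one_mul]; gcongr; exact hm s hs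
      _ = (m + 1) * μ (ball x s) := by rw [add_mul]
      _ ≤ _ := by gcongr


lemma loc_point {C K : Set X} (hC : IsCompact C) (hK : IsCompact K) (hKC : K ⊆ C) {ρ : X → ℝ≥0∞}
    (hρ : LowerSemicontinuous ρ) (hpos : ∀ x, 0 < ρ x) {w F : X → ℝ} (hUG : UGOn w ρ C)
    {M : ℝ≥0} (h0 : ∀ x ∈ C, 0 ≤ w x) (hM : ∀ x ∈ C, w x ≤ M) (hF : Continuous F) {e : ℝ}
    (he : 0 < e) (hFw : ∀ x ∈ K, |F x - w x| ≤ e) {x : X} (hx : x ∈ K) :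
    ∀ᶠ n : ℕ in atTop, |qf (Rn ρ n) (1 / (n + 1 : ℝ)) C K (fun y => ENNReal.ofReal (F y)) M x - w x|
      ≤ 2 * e := by
  have hxC := hKC hx
  have hwx := h0 x hxC
  have hup : ∀ n : ℕ, qf (Rn ρ n) (1 / (n + 1 : ℝ)) C K (fun y => ENNReal.ofReal (F y)) M x
      ≤ w x + e := by
    intro n
    have h1 := qd_self_le (R := Rn ρ n) (e := 1 / (n + 1 : ℝ)) (by positivity)
      (F := fun y => ENNReal.ofReal (F y)) hxC hx
    have h2 := ENNReal.toReal_mono ENNReal.ofReal_ne_top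
      ((min_le_left _ (M : ℝ≥0∞)).trans h1)
    refine le_trans h2 ?_
    have := abs_le.1 (hFw x hx)
    rw [ENNReal.toReal_ofReal']
    exact max_le (by linarith) (by linarith)
  by_contra hcon
  rw [Filter.not_eventually] at hcon
  have hfr : ∃ᶠ n : ℕ in atTop, qd (Rn ρ n) (1 / (n + 1 : ℝ)) C K (fun y => ENNReal.ofReal (F y)) x
      < ENNReal.ofReal (w x - 2 * e) := by
    refine hcon.mono fun n hn => ?_
    have h1 := hup n
    have hlow : qf (Rn ρ n) (1 / (n + 1 : ℝ)) C K (fun y => ENNReal.ofReal (F y)) M x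
        < w x - 2 * e := by
      by_contra h2
      exact hn (abs_le.2 ⟨by linarith, by linarith⟩)
    have h3 := (ENNReal.lt_ofReal_iff_toReal_lt (qf_ne _ _)).2 hlow
    rcases min_lt_iff.1 h3 with h | h
    · exact h
    · exfalso
      have h4 := hM x hxC
      have : ENNReal.ofReal (w x - 2 * e) ≤ M := by
        rw [← ENNReal.ofReal_coe_nnreal]
        exact ENNReal.ofReal_le_ofReal (by linarith)
      exact absurd h (not_lt.2 this)
  obtain ⟨𝒰, h𝒰, hev⟩ := exists_ultra hfr
  have hev2 : ∀ n : ℕ, ∃ L γ, qd (Rn ρ n) (1 / (n + 1 : ℝ)) C K (fun y => ENNReal.ofReal (F y)) x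
      < ENNReal.ofReal (w x - 2 * e) → (QC (1 / (n + 1 : ℝ)) C L γ ∧ γ 0 ∈ K ∧ γ L = x ∧
        ENNReal.ofReal (F (γ 0)) + qcost (Rn ρ n) L γ < ENNReal.ofReal (w x - 2 * e)) := by
    intro n
    by_cases h : qd (Rn ρ n) (1 / (n + 1 : ℝ)) C K (fun y => ENNReal.ofReal (F y)) x
      < ENNReal.ofReal (w x - 2 * e)
    · obtain ⟨L, γ, h1, h2, h3, h4⟩ := exists_of_qd_lt h
      exact ⟨L, γ, fun _ => ⟨h1, h2, h3, h4⟩⟩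
    · exact ⟨0, fun _ => x, fun h' => absurd h' h⟩
  choose L γ hLγ using hev2
  have hev3 := hev.mono fun n hn => hLγ n hn
  obtain ⟨z, hzC, hz⟩ := hC.exists_isMinOn ⟨x, hxC⟩ (Rn_cont ρ 0).continuousOn
  set δ := Rn ρ 0 z with hδ
  have hδ0 : 0 < δ := Rn_pos hρ (hpos z)
  have hLb : ∀ᶠ n in (𝒰 : Filter ℕ), L n ≤ w x / δ := by
    filter_upwards [hev3] with n ⟨h1, h2, h3, h4⟩
    rw [le_div_iff₀ hδ0]
    have e1 : ENNReal.ofReal δ * ENNReal.ofReal (L n) ≤ qcost (Rn ρ n) (L n) (γ n) := by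
      calc ENNReal.ofReal δ * ENNReal.ofReal (L n) = ∫⁻ t in Icc 0 (L n), ENNReal.ofReal δ := by
            simp
        _ ≤ _ := setLIntegral_mono' measurableSet_Icc fun t ht =>
            ENNReal.ofReal_le_ofReal ((hz (h1.mem t ht)).trans (Rn_mono ρ _ (Nat.zero_le n)))
    have e2 : ENNReal.ofReal δ * ENNReal.ofReal (L n) ≤ ENNReal.ofReal (w x) :=
      (e1.trans (le_add_self.trans h4.le)).trans (ENNReal.ofReal_le_ofReal (by linarith))
    rw [← ENNReal.ofReal_mul hδ0.le, ENNReal.ofReal_le_ofReal_iff hwx] at e2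
    linarith
  obtain ⟨y, hyK, hy⟩ := ultra_lim 𝒰 hK (hev3.mono fun n h => h.2.1)
  have hFy : Tendsto (fun n => ENNReal.ofReal (F (γ n 0))) 𝒰 (𝓝 (ENNReal.ofReal (F y))) :=
    ENNReal.tendsto_ofReal ((hF.tendsto y).comp hy)
  set c : ℝ≥0∞ := ENNReal.ofReal (w x - 2 * e) - ENNReal.ofReal (F y) with hc
  obtain ⟨Γ, hΓC, hΓi, -, hΓ0, hΓ1⟩ := qc_limit hρ 𝒰 h𝒰 hC (c := c)
    (hev3.mono fun n h => h.1) hLb (by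
      intro c' hc'
      have hlim : Tendsto (fun n => ENNReal.ofReal (w x - 2 * e) - ENNReal.ofReal (F (γ n 0))) 𝒰
          (𝓝 c) := ENNReal.Tendsto.sub tendsto_const_nhds hFy (Or.inl ENNReal.ofReal_ne_top)
      filter_upwards [hlim.eventually (gt_mem_nhds hc'), hev3] with n h1 ⟨_, _, _, h4⟩
      refine le_trans ?_ h1.le
      refine ENNReal.le_sub_of_add_le_left ENNReal.ofReal_ne_top h4.le)
  have hΓ0' : Γ.toFun 0 = y := tendsto_nhds_unique hΓ0 hy
  have hΓ1' : Γ.toFun Γ.len = x := by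
    refine tendsto_nhds_unique hΓ1 (tendsto_const_nhds.congr' ?_)
    filter_upwards [hev3] with n h
    exact h.2.2.1.symm
  have hu := hUG Γ hΓC
  unfold UGIneq at hu
  rw [hΓ0', hΓ1'] at hu
  have hu2 := hu.trans hΓi
  rw [hc] at hu2
  have hyF := abs_le.1 (hFw y hyK)
  have hFle : ENNReal.ofReal (F y) ≤ ENNReal.ofReal (w x - 2 * e) := by
    refine le_of_tendsto hFy ?_
    filter_upwards [hev3] with n h
    exact le_self_add.trans h.2.2.2.le
  have hx2 : 0 < w x - 2 * e := by
    obtain ⟨n, hn⟩ := hev3.exists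
    exact ENNReal.ofReal_pos.1 (lt_of_le_of_lt bot_le hn.2.2.2)
  have h5 : ENNReal.ofReal (F y) + ENNReal.ofReal |w y - w x| ≤ ENNReal.ofReal (w x - 2 * e) := by
    calc _ ≤ ENNReal.ofReal (F y) + (ENNReal.ofReal (w x - 2 * e) - ENNReal.ofReal (F y)) := by
          gcongr
      _ = _ := add_tsub_cancel_of_le hFle
  have h6 : ENNReal.ofReal (F y + |w y - w x|) ≤ ENNReal.ofReal (w x - 2 * e) :=
    ENNReal.ofReal_add_le.trans h5
  rw [ENNReal.ofReal_le_ofReal_iff hx2.le] at h6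
  have := neg_abs_le (w y - w x)
  linarith

lemma loc_lip {C K : Set X} {ρ : X → ℝ≥0∞} {F : X → ℝ≥0∞} {M : ℝ≥0} (n : ℕ) :
    LipschitzOnWith ((n + 1) * (1 + M)) (qf (Rn ρ n) (1 / (n + 1 : ℝ)) C K F M) C := by
  refine LipschitzOnWith.of_dist_le_mul fun x hx y hy => ?_
  rw [Real.dist_eq]
  push_cast
  have hd0 : 0 ≤ dist x y := dist_nonneg
  have hM0 : (0 : ℝ) ≤ M := M.2
  rcases le_or_gt (dist x y) (1 / (n + 1 : ℝ)) with h | h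
  · have s1 := qf_step (Rn_nonneg ρ n) (K0 := K) (F := F) (M := M) hy h
    have s2 := qf_step (Rn_nonneg ρ n) (K0 := K) (F := F) (M := M) (e := 1 / (n + 1 : ℝ)) hx (by rwa [dist_comm])
    have t1 : Rn ρ n x * dist x y ≤ (n + 1) * dist x y := by gcongr; exact Rn_le_nat ρ n x
    have t2 : Rn ρ n y * dist y x ≤ (n + 1) * dist x y := by
      rw [dist_comm]; gcongr; exact Rn_le_nat ρ n y
    have t3 : 0 ≤ (n + 1) * (M : ℝ) * dist x y := by positivity
    rw [abs_le]
    constructor <;> nlinarith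
  · rw [div_lt_iff₀ (by positivity)] at h
    have a1 := qf_nonneg (R := Rn ρ n) (e := 1 / (n + 1 : ℝ)) (C := C) (K0 := K) (F := F) (M := M) (x := x)
    have a2 := qf_nonneg (R := Rn ρ n) (e := 1 / (n + 1 : ℝ)) (C := C) (K0 := K) (F := F) (M := M) (x := y)
    have b1 := qf_le (R := Rn ρ n) (e := 1 / (n + 1 : ℝ)) (C := C) (K0 := K) (F := F) (M := M) (x := x)
    have b2 := qf_le (R := Rn ρ n) (e := 1 / (n + 1 : ℝ)) (C := C) (K0 := K) (F := F) (M := M) (x := y)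
    have t3 : 0 ≤ (n + 1) * dist x y := by positivity
    have t4 : (M : ℝ) * 1 ≤ M * (dist x y * (n + 1)) := by gcongr
    rw [abs_le]
    constructor <;> nlinarith

lemma loc_ug {C K : Set X} {ρ : X → ℝ≥0∞} {F : X → ℝ≥0∞} {M : ℝ≥0} (n : ℕ) :
    UGOn (qf (Rn ρ n) (1 / (n + 1 : ℝ)) C K F M) ρ C := by
  intro γ hγ
  have := ug_of_step (f := qf (Rn ρ n) (1 / (n + 1 : ℝ)) C K F M) (R := Rn ρ n) (Λ := n + 1)
    (C := C) (e := 1 / (n + 1 : ℝ)) (Rn_nonneg ρ n)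
    (by positivity) (by positivity) (Rn_lip ρ n) (Rn_cont ρ n)
    (fun a _ b hb hab => qf_step (Rn_nonneg ρ n) hb hab) γ hγ
  exact le_trans this (γ.integral_mono fun z => ofReal_Rn_le ρ n z)

lemma loc_set {μ : Measure X} [ProperSpace X] [IsLocallyFiniteMeasure μ] {C : Set X}
    (hC : IsCompact C) {w : X → ℝ} {M : ℝ} (hM : ∀ x ∈ C, |w x| ≤ M)
    (hm : AEMeasurable w (μ.restrict C)) {e : ℝ} (he : 0 < e) {δ : ℝ≥0∞} (hδ : δ ≠ 0) :
    ∃ (K : Set X) (F : X → ℝ), IsCompact K ∧ K ⊆ C ∧ Continuous F ∧ (∀ x ∈ K, |F x - w x| ≤ e) ∧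
      μ (C \ K) ≤ δ := by
  have hCf : μ C < ∞ := hC.measure_lt_top
  have : IsFiniteMeasure (μ.restrict C) := ⟨by simpa using hCf⟩
  have hmC := hC.measurableSet
  have hint : Integrable (hm.mk w) (μ.restrict C) := by
    refine Integrable.congr ?_ hm.ae_eq_mk
    refine Integrable.of_bound hm.aestronglyMeasurable M ?_
    filter_upwards [ae_restrict_mem hmC] with x hx using hM x hx
  have hδ2 : δ / 2 ≠ 0 := by simp [hδ]
  have he' : ENNReal.ofReal e ≠ 0 := by simp [he]
  obtain ⟨F, hF, -⟩ := hint.exists_boundedContinuous_lintegral_sub_le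
    (ε := ENNReal.ofReal e * (δ / 2)) (mul_ne_zero he' hδ2)
  set N := toMeasurable (μ.restrict C) {x | w x ≠ hm.mk w x} with hN
  have hN0 : (μ.restrict C) N = 0 := by
    rw [hN, measure_toMeasurable]; exact hm.ae_eq_mk
  set B : Set X := {x | ENNReal.ofReal e ≤ ‖hm.mk w x - F x‖ₑ} with hB
  have hBm : MeasurableSet B := measurableSet_le measurable_const
    (hm.measurable_mk.sub F.continuous.measurable).enorm
  have hB1 : (μ.restrict C) B ≤ δ / 2 := by
    have h1 := mul_meas_ge_le_lintegral (μ := μ.restrict C)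
      (hm.measurable_mk.sub F.continuous.measurable).enorm (ENNReal.ofReal e)
    have h2 := h1.trans hF
    exact (ENNReal.mul_le_mul_iff_right he' ENNReal.ofReal_ne_top).1 h2
  set S := C \ (B ∪ N) with hS
  have hSm : MeasurableSet S := hmC.diff (hBm.union (measurableSet_toMeasurable _ _))
  obtain ⟨K, hKS, hKc, hKd⟩ := hSm.exists_isCompact_diff_lt
    ((measure_mono diff_subset).trans_lt hCf).ne hδ2
  refine ⟨K, F, hKc, hKS.trans diff_subset, F.continuous, fun x hx => ?_, ?_⟩
  · have hxS := hKS hx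
    have h1 : x ∉ B := fun h => hxS.2 (Or.inl h)
    have h2 : w x = hm.mk w x := by
      by_contra h
      exact hxS.2 (Or.inr (subset_toMeasurable _ _ h))
    have h3 : ‖hm.mk w x - F x‖ₑ < ENNReal.ofReal e := not_le.1 h1
    rw [Real.enorm_eq_ofReal_abs, ENNReal.ofReal_lt_ofReal_iff he, abs_sub_comm, ← h2] at h3
    exact h3.le
  · have hsub : C \ K ⊆ (S \ K) ∪ ((B ∪ N) ∩ C) := by
      rintro x ⟨h1, h2⟩
      by_cases h : x ∈ B ∪ N
      · exact Or.inr ⟨h, h1⟩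
      · exact Or.inl ⟨⟨h1, h⟩, h2⟩
    calc μ (C \ K) ≤ μ (S \ K) + μ ((B ∪ N) ∩ C) := (measure_mono hsub).trans (measure_union_le _ _)
      _ ≤ δ / 2 + (μ.restrict C) (B ∪ N) := by
          rw [Measure.restrict_apply (hBm.union (measurableSet_toMeasurable _ _))]; gcongr
      _ ≤ δ / 2 + (δ / 2 + 0) := by
          gcongr
          refine (measure_union_le _ _).trans ?_
          rw [hN0]; gcongr
      _ = δ := by rw [add_zero, ENNReal.add_halves]

lemma loc_approx {μ : Measure X} [ProperSpace X] [IsLocallyFiniteMeasure μ] {C : Set X}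
    (hC : IsCompact C) {ρ : X → ℝ≥0∞}
    (hρ : LowerSemicontinuous ρ) (hpos : ∀ x, 0 < ρ x) {w : X → ℝ} (hUG : UGOn w ρ C)
    {M : ℝ≥0} (h0 : ∀ x ∈ C, 0 ≤ w x) (hM : ∀ x ∈ C, w x ≤ M)
    (hm : AEMeasurable w (μ.restrict C)) {ε : ℝ≥0∞} (hε : ε ≠ 0) :
    ∃ (φ : X → ℝ) (L : ℝ≥0), LipschitzOnWith L φ C ∧ (∀ x, 0 ≤ φ x) ∧ (∀ x, φ x ≤ M) ∧
      UGOn φ ρ C ∧ ∫⁻ x in C, ENNReal.ofReal |φ x - w x| ∂μ ≤ ε := by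
  have hCf : μ C < ∞ := hC.measure_lt_top
  have hmC := hC.measurableSet
  -- constants
  obtain ⟨e, he, he2⟩ : ∃ e : ℝ, 0 < e ∧ ENNReal.ofReal (2 * e) * μ C ≤ ε / 3 := by
    have hlim : Tendsto (fun e : ℝ => ENNReal.ofReal (2 * e) * μ C) (𝓝[>] 0) (𝓝 0) := by
      have h1 : Tendsto (fun e : ℝ => ENNReal.ofReal (2 * e) * μ C) (𝓝 0)
          (𝓝 (ENNReal.ofReal (2 * 0) * μ C)) :=
        ENNReal.Tendsto.mul_const (ENNReal.tendsto_ofReal (tendsto_const_nhds.mul tendsto_id))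
          (Or.inr hCf.ne)
      simpa using h1.mono_left nhdsWithin_le_nhds
    have h3 : (0 : ℝ≥0∞) < ε / 3 := by simp [pos_iff_ne_zero, hε]
    obtain ⟨e, h1, h2⟩ := ((hlim.eventually (gt_mem_nhds h3)).and self_mem_nhdsWithin).exists
    exact ⟨e, h2, h1.le⟩
  have hδ : ε / 3 / (M + 1) ≠ 0 := by simp [hε]
  obtain ⟨K, F, hK, hKC, hF, hFw, hKμ⟩ := loc_set (μ := μ) hC (M := M)
    (fun x hx => by rw [abs_of_nonneg (h0 x hx)]; exact hM x hx) hm he hδ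
  set h : ℕ → X → ℝ := fun n => qf (Rn ρ n) (1 / (n + 1 : ℝ)) C K (fun y => ENNReal.ofReal (F y)) M
    with hh
  have hb : ∀ n, ∀ x ∈ C, |h n x - w x| ≤ M := by
    intro n x hx
    have a1 : 0 ≤ h n x := qf_nonneg
    have a2 : h n x ≤ M := qf_le
    have := h0 x hx
    have := hM x hx
    rw [abs_le]; constructor <;> linarith
  have hmeas : ∀ n, AEMeasurable (h n) (μ.restrict C) := fun n =>
    (loc_lip n).continuousOn.aemeasurable hmC
  have hdct : Tendsto (fun n => ∫⁻ x in K, ENNReal.ofReal (|h n x - w x| - 2 * e) ∂μ) atTop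
      (𝓝 (∫⁻ x in K, 0 ∂μ)) := by
    refine tendsto_lintegral_of_dominated_convergence' (fun _ => (M : ℝ≥0∞)) (fun n => ?_)
      (fun n => ?_) ?_ ?_
    · have : AEMeasurable (fun x => ENNReal.ofReal (|h n x - w x| - 2 * e)) (μ.restrict C) :=
        ((((hmeas n).sub hm).abs).sub_const _).ennreal_ofReal
      exact this.mono_set hKC
    · filter_upwards [ae_restrict_mem hK.measurableSet] with x hx
      rw [← ENNReal.ofReal_coe_nnreal]
      exact ENNReal.ofReal_le_ofReal (by linarith [hb n x (hKC hx)])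
    · simp only [lintegral_const, Measure.restrict_apply MeasurableSet.univ, univ_inter]
      exact ENNReal.mul_ne_top ENNReal.coe_ne_top hK.measure_lt_top.ne
    · filter_upwards [ae_restrict_mem hK.measurableSet] with x hx
      refine tendsto_const_nhds.congr' ?_
      filter_upwards [loc_point hC hK hKC hρ hpos hUG h0 hM hF he hFw hx] with n hn
      rw [ENNReal.ofReal_of_nonpos]
      linarith
  rw [lintegral_zero] at hdct
  have h3 : (0 : ℝ≥0∞) < ε / 3 := by simp [pos_iff_ne_zero, hε]
  obtain ⟨n, hn⟩ := (hdct.eventually (gt_mem_nhds h3)).exists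
  refine ⟨h n, _, loc_lip n, fun x => qf_nonneg, fun x => qf_le, loc_ug n, ?_⟩
  calc ∫⁻ x in C, ENNReal.ofReal |h n x - w x| ∂μ
      = ∫⁻ x in K ∪ (C \ K), ENNReal.ofReal |h n x - w x| ∂μ := by
        rw [union_diff_cancel hKC]
    _ ≤ ∫⁻ x in K, ENNReal.ofReal |h n x - w x| ∂μ + ∫⁻ x in C \ K, ENNReal.ofReal |h n x - w x| ∂μ :=
        lintegral_union_le _ _ _
    _ ≤ (ε / 3 + ε / 3) + ε / 3 := by
        gcongr
        · calc ∫⁻ x in K, ENNReal.ofReal |h n x - w x| ∂μ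
              ≤ ∫⁻ x in K, (ENNReal.ofReal (|h n x - w x| - 2 * e) + ENNReal.ofReal (2 * e)) ∂μ := by
                refine lintegral_mono fun x => ?_
                refine le_trans (ENNReal.ofReal_le_ofReal ?_) ENNReal.ofReal_add_le
                linarith
            _ = ∫⁻ x in K, ENNReal.ofReal (|h n x - w x| - 2 * e) ∂μ + ENNReal.ofReal (2 * e) * μ K := by
                rw [lintegral_add_right _ measurable_const]; simp
            _ ≤ _ := by
                gcongr
                exact le_trans (by gcongr) he2
        · calc ∫⁻ x in C \ K, ENNReal.ofReal |h n x - w x| ∂μ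
              ≤ ∫⁻ x in C \ K, (M : ℝ≥0∞) ∂μ := by
                refine setLIntegral_mono' (hmC.diff hK.measurableSet) fun x hx => ?_
                rw [← ENNReal.ofReal_coe_nnreal]
                exact ENNReal.ofReal_le_ofReal (hb n x hx.1)
            _ = M * μ (C \ K) := by simp
            _ ≤ (M + 1) * (ε / 3 / (M + 1)) := by gcongr; exact le_self_add
            _ ≤ ε / 3 := ENNReal.mul_div_le
    _ = ε := ENNReal.add_thirds ε


lemma dom_cover (γ : Curve X) {f : X → ℝ} {a : X → ℝ≥0∞}
    (h : ∀ t0 ∈ Icc 0 γ.len, ∃ P : Set X,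
      (∃ δ > 0, ∀ t ∈ Icc 0 γ.len, |t - t0| < δ → γ.toFun t ∈ P) ∧
      ∀ p q, 0 ≤ p → p ≤ q → q ≤ γ.len → (∀ t ∈ Icc p q, γ.toFun t ∈ P) →
        Dom (fun t => f (γ.toFun t)) (fun t => a (γ.toFun t)) p q) :
    Dom (fun t => f (γ.toFun t)) (fun t => a (γ.toFun t)) 0 γ.len := by
  refine loc_glob fun t0 ht0 => ?_
  obtain ⟨P, ⟨δ, hδ, h1⟩, h2⟩ := h t0 ht0
  refine ⟨δ, hδ, fun s t hs hst ht hs' ht' => ?_⟩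
  refine h2 s t hs hst ht (fun r hr => h1 r ⟨hs.trans hr.1, hr.2.trans ht⟩ ?_) s t le_rfl hst le_rfl
  rw [abs_lt] at *
  constructor <;> linarith [hr.1, hr.2]

lemma Curve.nhd (γ : Curve X) {P : Set X} (hP : IsOpen P) {t0 : ℝ} (ht0 : t0 ∈ Icc 0 γ.len)
    (h : γ.toFun t0 ∈ P) : ∃ δ > 0, ∀ t ∈ Icc 0 γ.len, |t - t0| < δ → γ.toFun t ∈ P := by
  obtain ⟨r, hr, hrP⟩ := Metric.isOpen_iff.1 hP _ h
  refine ⟨r, hr, fun t ht hlt => hrP ?_⟩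
  have := γ.lip.dist_le_mul t ht t0 ht0
  rw [Real.dist_eq, NNReal.coe_one, one_mul] at this
  exact lt_of_le_of_lt this hlt

lemma dom_lip (γ : Curve X) {f : X → ℝ} {A : Set X} {L : ℝ≥0} (hf : LipschitzOnWith L f A) {p q : ℝ}
    (hp : 0 ≤ p) (hq : q ≤ γ.len) (hA : ∀ t ∈ Icc p q, γ.toFun t ∈ A) :
    Dom (fun t => f (γ.toFun t)) (fun _ => (L : ℝ≥0∞)) p q := by
  intro s t hs hst ht
  have h1 := hf.dist_le_mul _ (hA s ⟨hs, hst.trans ht⟩) _ (hA t ⟨hs.trans hst, ht⟩)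
  have h2 := γ.lip.dist_le_mul s ⟨hp.trans hs, (hst.trans ht).trans hq⟩ t
    ⟨hp.trans (hs.trans hst), ht.trans hq⟩
  rw [Real.dist_eq, abs_sub_comm s t, abs_of_nonneg (sub_nonneg.2 hst), NNReal.coe_one, one_mul] at h2
  rw [Real.dist_eq] at h1
  simp only [lintegral_const, Measure.restrict_apply MeasurableSet.univ, univ_inter, Real.volume_Ioc]
  rw [← ENNReal.ofReal_coe_nnreal, ← ENNReal.ofReal_mul L.coe_nonneg]
  refine ENNReal.ofReal_le_ofReal (h1.trans ?_)
  gcongr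

lemma curve_leibniz (γ : Curve X) {f1 f2 η : X → ℝ} {a1 a2 b c : X → ℝ≥0∞} {p q : ℝ} (hp : 0 ≤ p)
    (hq : q ≤ γ.len)
    (h1 : Dom (fun t => f1 (γ.toFun t)) (fun t => a1 (γ.toFun t)) p q)
    (h2 : Dom (fun t => f2 (γ.toFun t)) (fun t => a2 (γ.toFun t)) p q)
    (h3 : Dom (fun t => η (γ.toFun t)) (fun t => b (γ.toFun t)) p q)
    (m1 : Measurable a1) (m2 : Measurable a2) (m3 : Measurable b)
    (i1 : γ.integral a1 ≠ ∞) (i2 : γ.integral a2 ≠ ∞) (i3 : γ.integral b ≠ ∞)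
    (hη : ∀ t ∈ Icc p q, 0 ≤ η (γ.toFun t) ∧ η (γ.toFun t) ≤ 1)
    (hc : ∀ t ∈ Icc p q, ENNReal.ofReal |f1 (γ.toFun t) - f2 (γ.toFun t)| ≤ c (γ.toFun t)) :
    Dom (fun t => (1 - η (γ.toFun t)) * f1 (γ.toFun t) + η (γ.toFun t) * f2 (γ.toFun t))
      (fun t => ENNReal.ofReal (1 - η (γ.toFun t)) * a1 (γ.toFun t) +
        ENNReal.ofReal (η (γ.toFun t)) * a2 (γ.toFun t) + c (γ.toFun t) * b (γ.toFun t)) p q := by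
  obtain ⟨k, hk, hkγ⟩ := γ.exists_cont
  have hmem : ∀ t ∈ Icc p q, k t = γ.toFun t := fun t ht => hkγ t ⟨hp.trans ht.1, ht.2.trans hq⟩
  have key : ∀ {f : X → ℝ} {a : X → ℝ≥0∞}, Dom (fun t => f (γ.toFun t)) (fun t => a (γ.toFun t)) p q →
      Dom (fun t => f (γ.toFun t)) (fun t => a (k t)) p q := fun h =>
    h.mono_right fun t ht => by rw [hmem t ht]
  have hi : ∀ {a : X → ℝ≥0∞}, γ.integral a ≠ ∞ → ∫⁻ r in Ioc p q, a (k r) ≠ ∞ := by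
    intro a ha
    refine ne_top_of_le_ne_top ha ?_
    unfold Curve.integral
    calc ∫⁻ r in Ioc p q, a (k r) ≤ ∫⁻ r in Icc 0 γ.len, a (k r) :=
          lintegral_mono_set fun r hr => ⟨hp.trans hr.1.le, hr.2.trans hq⟩
      _ ≤ _ := setLIntegral_mono' measurableSet_Icc fun t ht => by rw [hkγ t ht]
  have := Dom.leibniz (key h1) (key h2) (key h3) (m1.comp hk.measurable) (m2.comp hk.measurable)
    (m3.comp hk.measurable) (hi i1) (hi i2) (hi i3) hη hc
  exact this.mono_right fun t ht => by simp [hmem t ht]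

lemma exhaust [ProperSpace X] {W : Set X} (hW : IsOpen W) (x0 : X) :
    ∃ (τ : X → ℝ) (C : ℕ → Set X) (L : ℕ → ℝ≥0), (∀ x, 0 ≤ τ x) ∧ ContinuousOn τ W ∧
      (∀ k, IsCompact (C k)) ∧ (∀ k, C k ⊆ W) ∧ (∀ k : ℕ, ∀ x ∈ W, τ x < k + 2 → x ∈ C k) ∧
      ∀ k, LipschitzOnWith (L k) τ (C k) := by
  rcases (Wᶜ).eq_empty_or_nonempty with he | hne
  · refine ⟨fun x => dist x x0, fun k => closedBall x0 (k + 2), fun _ => 1, fun x => dist_nonneg,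
      by fun_prop, fun k => isCompact_closedBall _ _, fun k x _ => ?_, fun k x _ h => h.le,
      fun k => (LipschitzWith.dist_left x0).lipschitzOnWith⟩
    by_contra h
    have : x ∈ Wᶜ := h
    rw [he] at this; exact this
  have hpos : ∀ x ∈ W, 0 < infDist x Wᶜ := fun x hx =>
    (hW.isClosed_compl.notMem_iff_infDist_pos hne).1 (by simpa using hx)
  refine ⟨fun x => (infDist x Wᶜ)⁻¹ + dist x x0,
    fun k => closedBall x0 (k + 2) ∩ {x | 1 / (k + 2 : ℝ) ≤ infDist x Wᶜ},
    fun k => (k + 2) ^ 2 + 1, fun x => ?_, ?_, fun k => ?_, fun k x hx => ?_, fun k x hx h => ?_,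
    fun k => ?_⟩
  · have : 0 ≤ infDist x Wᶜ := infDist_nonneg
    positivity
  · refine ContinuousOn.add (ContinuousOn.inv₀ (continuous_infDist_pt _).continuousOn
      fun x hx => (hpos x hx).ne') (by fun_prop)
  · exact (isCompact_closedBall _ _).inter_right
      (isClosed_le continuous_const (continuous_infDist_pt _))
  · by_contra h
    have h0 : infDist x Wᶜ = 0 := infDist_zero_of_mem h
    have h1 : 1 / (k + 2 : ℝ) ≤ infDist x Wᶜ := hx.2
    rw [h0] at h1
    have : 0 < 1 / (k + 2 : ℝ) := by positivity
    linarith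
  · have hp := hpos x hx
    have h1 : 0 < (infDist x Wᶜ)⁻¹ := by positivity
    have h2 : 0 ≤ dist x x0 := dist_nonneg
    simp only at h
    refine ⟨mem_closedBall.2 (by linarith), ?_⟩
    change 1 / (k + 2 : ℝ) ≤ _
    rw [one_div]
    exact inv_le_of_inv_le₀ hp (by linarith)
  · refine LipschitzOnWith.of_dist_le_mul fun x hx y hy => ?_
    have hk : 0 < 1 / (k + 2 : ℝ) := by positivity
    have ha : 1 / (k + 2 : ℝ) ≤ infDist x Wᶜ := hx.2
    have hb : 1 / (k + 2 : ℝ) ≤ infDist y Wᶜ := hy.2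
    have ha0 := hk.trans_le ha
    have hb0 := hk.trans_le hb
    have hl : |infDist y Wᶜ - infDist x Wᶜ| ≤ dist x y := by
      have := (lipschitz_infDist_pt Wᶜ).dist_le_mul y x
      rw [Real.dist_eq, NNReal.coe_one, one_mul, dist_comm] at this
      exact this
    have hd1 : |dist x x0 - dist y x0| ≤ dist x y := abs_dist_sub_le x y x0
    rw [Real.dist_eq]
    push_cast
    have e1 : (infDist x Wᶜ)⁻¹ - (infDist y Wᶜ)⁻¹
        = (infDist y Wᶜ - infDist x Wᶜ) * ((infDist x Wᶜ)⁻¹ * (infDist y Wᶜ)⁻¹) := by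
      field_simp
    have i1 : (infDist x Wᶜ)⁻¹ ≤ k + 2 := by
      rw [one_div] at ha; exact inv_le_of_inv_le₀ (by positivity) ha
    have i2 : (infDist y Wᶜ)⁻¹ ≤ k + 2 := by
      rw [one_div] at hb; exact inv_le_of_inv_le₀ (by positivity) hb
    have e2 : |(infDist x Wᶜ)⁻¹ - (infDist y Wᶜ)⁻¹| ≤ dist x y * ((k + 2) * (k + 2)) := by
      rw [e1, abs_mul, abs_of_pos (mul_pos (inv_pos.2 ha0) (inv_pos.2 hb0))]
      gcongr
    calc |(infDist x Wᶜ)⁻¹ + dist x x0 - ((infDist y Wᶜ)⁻¹ + dist y x0)|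
        = |((infDist x Wᶜ)⁻¹ - (infDist y Wᶜ)⁻¹) + (dist x x0 - dist y x0)| := by congr 1; ring
      _ ≤ _ := abs_add_le _ _
      _ ≤ dist x y * ((k + 2) * (k + 2)) + dist x y := add_le_add e2 hd1
      _ = _ := by ring

lemma loc_approx' {μ : Measure X} [ProperSpace X] [IsLocallyFiniteMeasure μ] {C : Set X}
    (hC : IsCompact C) {ρ : X → ℝ≥0∞}
    (hρ : LowerSemicontinuous ρ) (hpos : ∀ x, 0 < ρ x) {w : X → ℝ} (hUG : UGOn w ρ C)
    {M : ℝ≥0} (h0 : ∀ x ∈ C, 0 ≤ w x) (hM : ∀ x ∈ C, w x ≤ M)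
    (hm : AEMeasurable w (μ.restrict C)) {ε : ℝ≥0∞} (hε : ε ≠ 0) :
    ∃ (φ : X → ℝ) (L : ℝ≥0), LipschitzWith L φ ∧ (∀ x ∈ C, 0 ≤ φ x) ∧ (∀ x ∈ C, φ x ≤ M) ∧
      UGOn φ ρ C ∧ ∫⁻ x in C, ENNReal.ofReal |φ x - w x| ∂μ ≤ ε := by
  obtain ⟨φ, L, h1, h2, h3, h4, h5⟩ := loc_approx hC hρ hpos hUG h0 hM hm hε
  obtain ⟨g, hg, hgφ⟩ := h1.extend_real
  refine ⟨g, L, hg, fun x hx => ?_, fun x hx => ?_, fun γ hγ => ?_, ?_⟩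
  · rw [← hgφ hx]; exact h2 x
  · rw [← hgφ hx]; exact h3 x
  · have := h4 γ hγ
    unfold UGIneq at *
    rwa [← hgφ (hγ 0 ⟨le_rfl, γ.len_nonneg⟩), ← hgφ (hγ _ ⟨γ.len_nonneg, le_rfl⟩)]
  · refine le_trans (le_of_eq ?_) h5
    refine setLIntegral_congr_fun hC.measurableSet fun x hx => ?_
    simp only [← hgφ hx]


lemma comb_abs {a b w θ : ℝ} (h0 : 0 ≤ θ) (h1 : θ ≤ 1) :
    |(1 - θ) * a + θ * b - w| ≤ |a - w| + |b - w| := by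
  have : (1 - θ) * a + θ * b - w = (1 - θ) * (a - w) + θ * (b - w) := by ring
  rw [this]
  refine (abs_add_le _ _).trans ?_
  rw [abs_mul, abs_mul, abs_of_nonneg h0, abs_of_nonneg (sub_nonneg.2 h1)]
  have := abs_nonneg (a - w)
  have := abs_nonneg (b - w)
  nlinarith

lemma comb_lip {a b a' b' θ θ' M : ℝ} (h0 : 0 ≤ θ) (h1 : θ ≤ 1)
    (ha : 0 ≤ a') (haM : a' ≤ M) (hb : 0 ≤ b') (hbM : b' ≤ M) :
    |((1 - θ) * a + θ * b) - ((1 - θ') * a' + θ' * b')| ≤ |a - a'| + |b - b'| + M * |θ - θ'| := by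
  have : ((1 - θ) * a + θ * b) - ((1 - θ') * a' + θ' * b')
      = (1 - θ) * (a - a') + θ * (b - b') + (θ - θ') * (b' - a') := by ring
  rw [this]
  refine (abs_add_three _ _ _).trans ?_
  rw [abs_mul, abs_mul, abs_mul, abs_of_nonneg h0, abs_of_nonneg (sub_nonneg.2 h1)]
  have h3 : |b' - a'| ≤ M := by rw [abs_le]; constructor <;> linarith
  have := abs_nonneg (a - a')
  have := abs_nonneg (b - b')
  have := abs_nonneg (θ - θ')
  have : |θ - θ'| * |b' - a'| ≤ M * |θ - θ'| := by rw [mul_comm]; gcongr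
  nlinarith

/-- clamp -/
def clamp (s : ℝ) : ℝ := max 0 (min 1 s)

lemma clamp_nonneg (s : ℝ) : 0 ≤ clamp s := le_max_left _ _
lemma clamp_le (s : ℝ) : clamp s ≤ 1 := max_le zero_le_one (min_le_left _ _)
lemma clamp_lip (s t : ℝ) : |clamp s - clamp t| ≤ |s - t| := by
  unfold clamp
  refine (abs_max_sub_max_le_max _ _ _ _).trans ?_
  rw [sub_self, abs_zero, max_eq_right (abs_nonneg _)]
  refine (abs_min_sub_min_le_max _ _ _ _).trans ?_
  rw [sub_self, abs_zero, max_eq_right (abs_nonneg _)]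
lemma clamp_zero {s : ℝ} (h : s ≤ 0) : clamp s = 0 := max_eq_left ((min_le_right _ _).trans h)
lemma clamp_one {s : ℝ} (h : 1 ≤ s) : clamp s = 1 := by
  unfold clamp; rw [min_eq_left h]; simp

lemma density {μ : Measure X} [ProperSpace X] [IsLocallyFiniteMeasure μ] {W : Set X}
    (hW : IsOpen W) {ρ : X → ℝ≥0∞}
    (hρ : LowerSemicontinuous ρ) (hpos : ∀ x, 0 < ρ x) {w : X → ℝ} (hUG : UGOn w ρ W)
    {M : ℝ≥0} (h0 : ∀ x ∈ W, 0 ≤ w x) (hM : ∀ x ∈ W, w x ≤ M)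
    (hm : AEMeasurable w (μ.restrict W)) {ε : ℝ≥0∞} (hε : ε ≠ 0) :
    ∃ (φ : X → ℝ) (h : X → ℝ≥0∞), LocLipOn φ W ∧ Measurable h ∧ UGOn φ h W ∧
      ∫⁻ x in W, ENNReal.ofReal |φ x - w x| ∂μ ≤ ε ∧
      ∫⁻ x in W, h x ∂μ ≤ ∫⁻ x, ρ x ∂μ + ε := by
  rcases W.eq_empty_or_nonempty with rfl | ⟨x0, hx0⟩
  · exact ⟨0, 0, fun x hx => hx.elim, measurable_const,
      fun γ hγ => (hγ 0 ⟨le_rfl, γ.len_nonneg⟩).elim, by simp, by simp⟩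
  obtain ⟨τ, C, L, hτ0, hτc, hCc, hCW, hCmem, hτL⟩ := exhaust hW x0
  obtain ⟨δ, hδ, hδs⟩ := ENNReal.exists_pos_sum_of_countable hε ℕ
  set D : ℕ → ℝ≥0∞ := fun k => 1 + 2 * L k + 2 * L (k - 1) with hD
  have hD0 : ∀ k, D k ≠ 0 := fun k => by simp [hD]
  have hDt : ∀ k, D k ≠ ∞ := fun k => by
    simp only [hD]; exact ENNReal.add_ne_top.2 ⟨ENNReal.add_ne_top.2 ⟨by simp,
      ENNReal.mul_ne_top (by simp) (by simp)⟩, ENNReal.mul_ne_top (by simp) (by simp)⟩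
  set e : ℕ → ℝ≥0∞ := fun k => (min (δ k : ℝ≥0∞) (δ (k - 1))) / 2 / D k with he
  have he0 : ∀ k, e k ≠ 0 := fun k => by
    have h1 : min (δ k : ℝ≥0∞) (δ (k - 1)) ≠ 0 := by
      rw [← pos_iff_ne_zero]
      exact lt_min (by exact_mod_cast hδ k) (by exact_mod_cast hδ (k - 1))
    simp only [he]
    exact (ENNReal.div_pos (ENNReal.div_pos h1 (by simp)).ne' (hDt k)).ne'
  have hDe : ∀ k, D k * e k = (min (δ k : ℝ≥0∞) (δ (k - 1))) / 2 := fun k =>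
    ENNReal.mul_div_cancel (hD0 k) (hDt k)
  have hsum : ∀ k, (1 + 2 * (L k : ℝ≥0∞)) * (e k + e (k + 1)) ≤ δ k := by
    intro k
    rw [mul_add]
    calc _ ≤ D k * e k + D (k + 1) * e (k + 1) := by
          gcongr
          · exact le_self_add
          · simp only [hD, Nat.add_sub_cancel]
            rw [add_assoc, add_comm (2 * (L (k + 1) : ℝ≥0∞)), ← add_assoc]
            exact le_self_add
      _ ≤ (δ k : ℝ≥0∞) / 2 + (δ k : ℝ≥0∞) / 2 := by
          rw [hDe, hDe]
          gcongr
          · exact min_le_left _ _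
          · exact min_le_right _ _
      _ = δ k := ENNReal.add_halves _
  choose ψ Lψ hψL hψ0 hψM hψU hψe using fun k => loc_approx' (μ := μ) (hCc k) hρ hpos
    (fun γ hγ => hUG γ fun t ht => hCW k (hγ t ht)) (fun x hx => h0 x (hCW k hx))
    (fun x hx => hM x (hCW k hx)) (hm.mono_set (hCW k)) (he0 k)
  set P : ℕ → Set X := fun k => W ∩ τ ⁻¹' Ioo ((k : ℝ) - 1 / 4) (k + 1) with hP
  have hPo : ∀ k, IsOpen (P k) := fun k => hτc.isOpen_inter_preimage hW isOpen_Ioo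
  have hPC : ∀ k, P k ⊆ C k := fun k x hx => hCmem k x hx.1 (by linarith [hx.2.2])
  have hPC1 : ∀ k, P k ⊆ C (k + 1) := fun k x hx => hCmem (k + 1) x hx.1 (by
    push_cast; linarith [hx.2.2])
  have hPW : ∀ x ∈ W, ∃ k, x ∈ P k := fun x hx => ⟨⌊τ x⌋₊, hx, by
    have := Nat.floor_le (hτ0 x); change _ - _ < _; linarith, Nat.lt_floor_add_one _⟩
  set θ : ℕ → X → ℝ := fun k x => clamp (2 * (τ x - k) - 1 / 2) with hθ
  set φ : X → ℝ := fun x => (1 - θ ⌊τ x⌋₊ x) * ψ ⌊τ x⌋₊ x + θ ⌊τ x⌋₊ x * ψ (⌊τ x⌋₊ + 1) x with hφ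
  have hφP : ∀ k, ∀ x ∈ P k, φ x = (1 - θ k x) * ψ k x + θ k x * ψ (k + 1) x := by
    rintro k x ⟨hxW, hx1, hx2⟩
    rcases le_or_gt (k : ℝ) (τ x) with hk | hk
    · have : ⌊τ x⌋₊ = k := (Nat.floor_eq_iff (hτ0 x)).2 ⟨hk, hx2⟩
      simp only [hφ, this]
    · have hk1 : 1 ≤ k := by
        by_contra hcon
        have : k = 0 := by omega
        subst this
        have := hτ0 x
        simp at hk; linarith
      have hfl : ⌊τ x⌋₊ = k - 1 := by
        refine (Nat.floor_eq_iff (hτ0 x)).2 ?_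
        rw [Nat.cast_sub hk1]
        push_cast
        constructor <;> linarith
      have e1 : θ ⌊τ x⌋₊ x = 1 := by
        rw [hfl]
        refine clamp_one ?_
        rw [Nat.cast_sub hk1]; push_cast; linarith
      have e2 : θ k x = 0 := clamp_zero (by linarith)
      simp only [hφ, e1, e2]
      rw [hfl, Nat.sub_add_cancel hk1]; ring
  have hθL : ∀ k, LipschitzOnWith (2 * L k) (θ k) (P k) := by
    intro k
    refine LipschitzOnWith.of_dist_le_mul fun x hx y hy => ?_
    have h1 := (hτL k).dist_le_mul x (hPC k hx) y (hPC k hy)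
    rw [Real.dist_eq] at *
    refine (clamp_lip _ _).trans ?_
    have : 2 * (τ x - k) - 1 / 2 - (2 * (τ y - k) - 1 / 2) = 2 * (τ x - τ y) := by ring
    rw [this, abs_mul, abs_two]
    push_cast
    linarith
  set h : X → ℝ≥0∞ := fun x => ρ x + ∑' k, (P k).indicator
    (fun x => ENNReal.ofReal |ψ k x - ψ (k + 1) x| * ((2 * L k : ℝ≥0) : ℝ≥0∞)) x with hh
  have hψm : ∀ k, Measurable (ψ k) := fun k => (hψL k).continuous.measurable
  have htm : ∀ k, Measurable ((P k).indicator
    (fun x => ENNReal.ofReal |ψ k x - ψ (k + 1) x| * ((2 * L k : ℝ≥0) : ℝ≥0∞))) := fun k =>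
    Measurable.indicator (((measurable_norm.comp ((hψm k).sub (hψm (k + 1)))).ennreal_ofReal).mul_const _)
      (hPo k).measurableSet
  have hint : ∀ k, ∫⁻ x in P k, (ENNReal.ofReal |ψ k x - w x| + ENNReal.ofReal |ψ (k + 1) x - w x|) ∂μ
      ≤ e k + e (k + 1) := by
    intro k
    have hwm : AEMeasurable w (μ.restrict (P k)) := hm.mono_set inter_subset_left
    have hA : AEMeasurable (fun x => ENNReal.ofReal |ψ k x - w x|) (μ.restrict (P k)) :=
      ((((hψm k).aemeasurable.sub hwm).abs).ennreal_ofReal)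
    rw [lintegral_add_left' hA]
    exact add_le_add ((lintegral_mono_set (hPC k)).trans (hψe k))
      ((lintegral_mono_set (hPC1 k)).trans (hψe (k + 1)))
  refine ⟨φ, h, ?_, hρ.measurable.add (Measurable.ennreal_tsum htm), ?_, ?_, ?_⟩
  · intro x hx
    obtain ⟨k, hk⟩ := hPW x hx
    obtain ⟨r, hr, hrP⟩ := Metric.isOpen_iff.1 (hPo k) x hk
    refine ⟨r, hr, Lψ k + Lψ (k + 1) + M * (2 * L k), ?_⟩
    refine LipschitzOnWith.of_dist_le_mul fun y hy z hz => ?_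
    have hy' := hrP hy.2
    have hz' := hrP hz.2
    rw [hφP k y hy', hφP k z hz', Real.dist_eq]
    refine (comb_lip (M := M) (clamp_nonneg _) (clamp_le _) (hψ0 k z (hPC k hz')) (hψM k z (hPC k hz'))
      (hψ0 (k + 1) z (hPC1 k hz')) (hψM (k + 1) z (hPC1 k hz'))).trans ?_
    have a1 := (hψL k).dist_le_mul y z
    have a2 := (hψL (k + 1)).dist_le_mul y z
    have a3 := (hθL k).dist_le_mul y hy' z hz'
    rw [Real.dist_eq] at a1 a2 a3
    push_cast at *
    have a4 : (M : ℝ) * |θ k y - θ k z| ≤ M * (2 * L k * dist y z) := by gcongr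
    linarith
  · intro γ hγ
    by_cases hfin : γ.integral ρ = ∞
    · unfold UGIneq
      have : γ.integral h = ∞ := by
        refine eq_top_iff.2 ?_
        rw [← hfin]; exact γ.integral_mono fun x => le_self_add
      rw [this]; exact le_top
    refine ugineq_of_dom (dom_cover γ fun t0 ht0 => ?_)
    obtain ⟨k, hk⟩ := hPW _ (hγ t0 ht0)
    refine ⟨P k, γ.nhd (hPo k) ht0 hk, fun p q hp hpq hq hin => ?_⟩
    have d1 := (hψU k).dom γ hp hq (fun t ht => hPC k (hin t ht))
    have d2 := (hψU (k + 1)).dom γ hp hq (fun t ht => hPC1 k (hin t ht))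
    have d3 := dom_lip γ (hθL k) hp hq hin
    have := curve_leibniz γ (b := fun _ => ((2 * L k : ℝ≥0) : ℝ≥0∞))
      (c := fun x => ENNReal.ofReal |ψ k x - ψ (k + 1) x|) hp hq d1 d2 d3
      hρ.measurable hρ.measurable measurable_const hfin hfin (by
        unfold Curve.integral
        simp only [lintegral_const, Measure.restrict_apply MeasurableSet.univ, univ_inter,
          Real.volume_Icc]
        exact ENNReal.mul_ne_top ENNReal.coe_ne_top ENNReal.ofReal_ne_top)
      (fun t _ => ⟨clamp_nonneg _, clamp_le _⟩) (fun t _ => le_rfl)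
    intro s t hs hst ht
    have key := this.mono_right (a' := fun t => h (γ.toFun t)) (fun t ht => by
      simp only [hh]
      rw [← add_mul, ← ENNReal.ofReal_add (sub_nonneg.2 (clamp_le _)) (clamp_nonneg _),
        sub_add_cancel, ENNReal.ofReal_one, one_mul]
      gcongr
      refine le_trans ?_ (ENNReal.le_tsum k)
      rw [indicator_of_mem (hin t ht)]) s t hs hst ht
    simp only at key ⊢
    rwa [hφP k _ (hin s ⟨hs, hst.trans ht⟩), hφP k _ (hin t ⟨hs.trans hst, ht⟩)]
  · calc ∫⁻ x in W, ENNReal.ofReal |φ x - w x| ∂μ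
        ≤ ∫⁻ x in ⋃ k, P k, ENNReal.ofReal |φ x - w x| ∂μ :=
          lintegral_mono_set fun x hx => mem_iUnion.2 (hPW x hx)
      _ ≤ ∑' k, ∫⁻ x in P k, ENNReal.ofReal |φ x - w x| ∂μ := lintegral_iUnion_le _ _
      _ ≤ ∑' k, (δ k : ℝ≥0∞) := by
          refine ENNReal.tsum_le_tsum fun k => ?_
          refine le_trans ?_ ((hint k).trans (le_trans ?_ (hsum k)))
          · refine setLIntegral_mono' (hPo k).measurableSet fun x hx => ?_
            rw [hφP k x hx, ← ENNReal.ofReal_add (abs_nonneg _) (abs_nonneg _)]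
            exact ENNReal.ofReal_le_ofReal (comb_abs (clamp_nonneg _) (clamp_le _))
          · exact le_mul_of_one_le_left bot_le le_self_add
      _ ≤ ε := hδs.le
  · simp only [hh]
    rw [lintegral_add_left hρ.measurable, lintegral_tsum fun k => (htm k).aemeasurable]
    gcongr
    · exact Measure.restrict_le_self
    · refine le_trans (ENNReal.tsum_le_tsum fun k => ?_) hδs.le
      refine le_trans ?_ (hsum k)
      rw [lintegral_indicator (hPo k).measurableSet, lintegral_mul_const' _ _ ENNReal.coe_ne_top,
        mul_comm]
      have : ((2 * L k : ℝ≥0) : ℝ≥0∞) ≤ 1 + 2 * (L k : ℝ≥0∞) := by push_cast; exact le_add_self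
      refine mul_le_mul' this (le_trans ?_ (hint k))
      rw [Measure.restrict_restrict (hPo k).measurableSet, inter_eq_left.2 inter_subset_left]
      refine lintegral_mono fun x => ?_
      rw [← ENNReal.ofReal_add (abs_nonneg _) (abs_nonneg _)]
      refine ENNReal.ofReal_le_ofReal ?_
      rw [abs_sub_comm (ψ (k + 1) x)]
      exact abs_sub_le _ _ _


lemma LocLipOn.aem {μ : Measure X} {φ : X → ℝ} {W : Set X} (hW : IsOpen W) (h : LocLipOn φ W) :
    AEMeasurable φ (μ.restrict W) := by
  have : ContinuousOn φ W := by
    intro x hx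
    obtain ⟨r, hr, K, hK⟩ := h x hx
    have := hK.continuousOn x ⟨hx, mem_ball_self hr⟩
    exact (continuousWithinAt_inter (ball_mem_nhds x hr)).1 this
  exact this.aemeasurable hW.measurableSet

lemma tends_e : Tendsto (fun j : ℕ => ((j : ℝ≥0∞) + 1)⁻¹) atTop (𝓝 0) := by
  have := (tendsto_add_atTop_iff_nat 1).2 ENNReal.tendsto_inv_nat_nhds_zero
  simpa using this

lemma lemmaC {μ : Measure X} [ProperSpace X] {Cd CP lam : ℝ} (hd : Doubling μ Cd)
    (hp : Poincare μ CP lam) {W : Set X} (hW : IsOpen W) {w : ℕ → X → ℝ} {g : ℕ → X → ℝ≥0∞}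
    {M : ℕ → ℝ≥0} (hM : ∀ j, ∀ x ∈ W, |w j x| ≤ M j)
    (hg : ∀ j, IsWeakUpperGradientOn μ (w j) (g j) W) {β : ℝ≥0∞} (hβ : β ≠ ∞)
    (hb : ∀ j, ∫⁻ x in W, g j x ∂μ ≤ β) {u : X → ℝ} (hc : L1LocConv μ W w u) :
    tvOpen μ W u ≤ β := by
  have := hd.locFin
  set e : ℕ → ℝ≥0∞ := fun j => ((j : ℝ≥0∞) + 1)⁻¹ with he
  have he0 : ∀ j, e j ≠ 0 := fun j => by simp [he]
  have het : ∀ j, e j ≠ ∞ := fun j => by simp [he]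
  choose ρ hρ1 hρ2 hρ3 hρ4 using fun j => lemmaR (hg j) (he0 j)
  have hρ5 : ∀ j, ∫⁻ x, ρ j x ∂μ ≤ β + e j := fun j => (hρ3 j).trans (by gcongr; exact hb j)
  have hwm : ∀ j, AEMeasurable (w j) (μ.restrict W) := fun j =>
    mec hd hp hW (hM j) (hρ1 j) ((hρ5 j).trans_lt (ENNReal.add_lt_top.2 ⟨hβ.lt_top, (het j).lt_top⟩)) (hρ4 j)
  choose φ h hφ1 hh1 hh2 hφ2 hh3 using fun j => density (μ := μ) (w := fun x => w j x + M j)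
    (M := 2 * M j) hW (hρ1 j) (hρ2 j)
    (fun γ hγ => by
      have := hρ4 j γ hγ
      unfold UGIneq at *
      rwa [add_sub_add_right_eq_sub])
    (fun x hx => by linarith [(abs_le.1 (hM j x hx)).1])
    (fun x hx => by push_cast; linarith [(abs_le.1 (hM j x hx)).2])
    ((hwm j).add_const _) (he0 j)
  have hh4 : ∀ j, ∫⁻ x in W, h j x ∂μ ≤ β + e j + e j := fun j => (hh3 j).trans (by gcongr; exact hρ5 j)
  have hwug : ∀ j, IsWeakUpperGradientOn μ (fun x => φ j x - M j) (h j) W := fun j =>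
    UGOn.wug (fun γ hγ => by
      have := hh2 j γ hγ
      unfold UGIneq at *
      rwa [sub_sub_sub_cancel_right]) (hh1 j).aemeasurable
  choose m hm1 hm2 using fun j => exists_minimal (hwug j) ((hh4 j).trans_lt
    (ENNReal.add_lt_top.2 ⟨ENNReal.add_lt_top.2 ⟨hβ.lt_top, (het j).lt_top⟩, (het j).lt_top⟩))
  have hlim : Tendsto (fun j => β + e j + e j) atTop (𝓝 β) := by
    have h1 : Tendsto e atTop (𝓝 0) := tends_e
    have := ((tendsto_const_nhds (x := β)).add h1).add h1
    simpa using this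
  have hLL : ∀ j, LocLipOn (fun x => φ j x - M j) W := fun j x hx => by
    obtain ⟨r, hr, K, hK⟩ := hφ1 j x hx
    refine ⟨r, hr, K, fun y hy z hz => ?_⟩
    rw [edist_sub_right]
    exact hK hy hz
  calc tvOpen μ W u ≤ liminf (fun i => ∫⁻ x in W, m i x ∂μ) atTop := by
        unfold tvOpen
        refine iInf_le_of_le _ <| iInf_le_of_le m <| iInf_le_of_le hLL <| iInf_le_of_le hm1 <|
          iInf_le_of_le ?_ le_rfl
        intro x hx
        obtain ⟨r, hr, hrc⟩ := hc x hx
        refine ⟨r, hr, ?_⟩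
        have h1 : Tendsto e atTop (𝓝 0) := tends_e
        have h2 := h1.add hrc
        rw [add_zero] at h2
        refine tendsto_of_tendsto_of_tendsto_of_le_of_le tendsto_const_nhds h2 (fun _ => bot_le) fun j => ?_
        have hA : AEMeasurable (fun x => ENNReal.ofReal |φ j x - (w j x + M j)|)
            (μ.restrict (W ∩ ball x r)) :=
          (((((hφ1 j).aem hW).sub ((hwm j).add_const _)).abs).ennreal_ofReal).mono_set inter_subset_left
        calc _ ≤ ∫⁻ y in W ∩ ball x r, (ENNReal.ofReal |φ j y - (w j y + M j)| +
                  ENNReal.ofReal |w j y - u y|) ∂μ := by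
              refine lintegral_mono fun y => ?_
              rw [← ENNReal.ofReal_add (abs_nonneg _) (abs_nonneg _)]
              refine ENNReal.ofReal_le_ofReal ?_
              change |φ j y - M j - u y| ≤ _
              rw [show φ j y - M j - u y = (φ j y - (w j y + M j)) + (w j y - u y) by ring]
              exact abs_add_le _ _
          _ ≤ _ := by
              rw [lintegral_add_left' hA]
              gcongr
              exact (lintegral_mono_set inter_subset_left).trans (hφ2 j)
    _ ≤ liminf (fun j => β + e j + e j) atTop :=
        liminf_le_liminf (Eventually.of_forall fun j => (hm2 j).trans (hh4 j))
    _ = β := hlim.liminf_eq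


lemma aem_ge {μ : Measure X} {f : X → ℝ≥0∞} (h : AEMeasurable f μ) :
    ∃ f' : X → ℝ≥0∞, Measurable f' ∧ (∀ x, f x ≤ f' x) ∧ ∫⁻ x, f' x ∂μ = ∫⁻ x, f x ∂μ := by
  set N := toMeasurable μ {x | f x ≠ h.mk f x} with hN
  have hN0 : μ N = 0 := by rw [hN, measure_toMeasurable]; exact h.ae_eq_mk
  refine ⟨fun x => h.mk f x + N.indicator (fun _ => ∞) x, h.measurable_mk.add
    (measurable_const.indicator (measurableSet_toMeasurable _ _)), fun x => ?_, ?_⟩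
  · by_cases hx : f x = h.mk f x
    · rw [hx]; exact le_self_add
    · have : x ∈ N := subset_toMeasurable _ _ hx
      simp [this]
  · rw [lintegral_add_left h.measurable_mk, lintegral_indicator (measurableSet_toMeasurable _ _),
      setLIntegral_measure_zero _ _ hN0, add_zero]
    exact (lintegral_congr_ae h.ae_eq_mk).symm

/-- capacity data -/
structure CapData (μ : Measure X) (G : Set X) (ε : ℝ≥0∞) (η : X → ℝ) (ρ f : X → ℝ≥0∞) : Prop where
  nn : ∀ x, 0 ≤ η x
  le1 : ∀ x, η x ≤ 1
  one : ∀ x ∈ G, η x = 1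
  aem : AEMeasurable η μ
  mρ : Measurable ρ
  ug : UGOn η ρ univ
  iρ : ∫⁻ x, ρ x ∂μ ≤ ε
  mf : Measurable f
  lef : ∀ x, ENNReal.ofReal (η x) ≤ f x
  fi : ∫⁻ x, f x ∂μ ≤ ε

lemma cap_data {μ : Measure X} [ProperSpace X] {Cd CP lam : ℝ} (hd : Doubling μ Cd)
    (hp : Poincare μ CP lam) {G : Set X} {ε : ℝ≥0∞} (h : capa1 μ G < ε) :
    ∃ η ρ f, CapData μ G ε η ρ f := by
  have := hd.locFin
  unfold capa1 at h
  simp only [iInf_lt_iff] at h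
  obtain ⟨u, hu, huG, hlt⟩ := h
  obtain ⟨g, hg, hlt⟩ : ∃ g, IsWeakUpperGradientOn μ u g univ ∧
      (∫⁻ x, ENNReal.ofReal |u x| ∂μ) + ∫⁻ x, g x ∂μ < ε := by
    by_contra hcon
    push Not at hcon
    unfold NNorm at hlt
    refine absurd hlt (not_lt.2 ?_)
    simp only [Measure.restrict_univ]
    rw [← tsub_le_iff_left]
    exact le_iInf₂ fun g hg => tsub_le_iff_left.2 (hcon g hg)
  obtain ⟨δ, hδ, hlt⟩ := ENNReal.lt_iff_exists_add_pos_lt.1 hlt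
  obtain ⟨ρ, r1, r2, r3, r4⟩ := lemmaR hg (ENNReal.coe_ne_zero.2 hδ.ne')
  rw [Measure.restrict_univ] at r3
  have r5 : ∫⁻ x, ρ x ∂μ ≤ ε := r3.trans (le_trans (by
    rw [add_assoc]; exact le_add_self) hlt.le)
  have hUG : UGOn (fun x => clamp (u x)) ρ univ := fun γ hγ =>
    (ENNReal.ofReal_le_ofReal (clamp_lip _ _)).trans (r4 γ hγ)
  have hm : AEMeasurable (fun x => clamp (u x)) μ := by
    have := mec hd hp (W := univ) isOpen_univ (w := fun x => clamp (u x)) (M := 1)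
      (fun x _ => by rw [abs_of_nonneg (clamp_nonneg _)]; exact clamp_le _) r1 (r3.trans_lt
        (lt_of_le_of_lt (by rw [add_assoc]; exact le_add_self) (hlt.trans_le le_top))) hUG
    rwa [Measure.restrict_univ] at this
  obtain ⟨f, f1, f2, f3⟩ := aem_ge hm.ennreal_ofReal
  refine ⟨_, ρ, f, fun x => clamp_nonneg _, fun x => clamp_le _, fun x hx => clamp_one (huG x hx), hm,
    r1.measurable, hUG, r5, f1, f2, ?_⟩
  rw [f3]
  refine le_trans (lintegral_mono fun x => ENNReal.ofReal_le_ofReal ?_) (le_trans (by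
    rw [add_assoc]; exact le_self_add) hlt.le)
  exact max_le (abs_nonneg _) ((min_le_right _ _).trans (le_abs_self _))

lemma qdata {μ : Measure X} [ProperSpace X] {Cd CP lam : ℝ} (hd : Doubling μ Cd)
    (hp : Poincare μ CP lam) {U : Set X} (hU : QuasiOpen μ U) :
    ∃ (G : ℕ → Set X) (η : ℕ → X → ℝ) (ρ f : ℕ → X → ℝ≥0∞), (∀ j, IsOpen (G j)) ∧
      (∀ j, IsOpen (U ∪ G j)) ∧ ∀ j, CapData μ (G j) ((1 / 4) ^ j) (η j) (ρ j) (f j) := by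
  choose G g1 g2 g3 using fun j : ℕ => hU ((1 / 4) ^ j) (by positivity)
  choose η ρ f h using fun j => cap_data hd hp (g2 j)
  refine ⟨G, η, ρ, f, g1, g3, fun j => ?_⟩
  convert h j using 1
  rw [ENNReal.ofReal_pow (by norm_num), ENNReal.ofReal_div_of_pos (by norm_num)]
  simp

lemma sum_quarter : ∑' j : ℕ, (1 / 4 : ℝ≥0∞) ^ j ≠ ∞ := by
  rw [ENNReal.tsum_geometric, ENNReal.inv_ne_top, Ne, tsub_eq_zero_iff_le, not_le]
  simp

lemma path_open {μ : Measure X} {U : Set X} {G : ℕ → Set X} {η : ℕ → X → ℝ} {ρ f : ℕ → X → ℝ≥0∞}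
    (hG : ∀ j, IsOpen (U ∪ G j)) (h : ∀ j, CapData μ (G j) ((1 / 4) ^ j) (η j) (ρ j) (f j)) :
    ∃ r : X → ℝ≥0∞, Measurable r ∧ ∫⁻ x, r x ∂μ < ∞ ∧ ∀ γ : Curve X, γ.integral r ≠ ∞ →
      ∀ t0 ∈ Icc 0 γ.len, γ.toFun t0 ∈ U →
        ∃ δ > 0, ∀ t ∈ Icc 0 γ.len, |t - t0| < δ → γ.toFun t ∈ U := by
  have hm : ∀ j, Measurable (fun x => ρ j x + f j x) := fun j => (h j).mρ.add (h j).mf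
  refine ⟨fun x => ∑' j, (ρ j x + f j x), Measurable.ennreal_tsum hm, ?_, ?_⟩
  · rw [lintegral_tsum fun j => (hm j).aemeasurable]
    refine lt_of_le_of_lt (ENNReal.tsum_le_tsum (g := fun j => (1 / 4 : ℝ≥0∞) ^ j + (1 / 4) ^ j) fun j => ?_) ?_
    · rw [lintegral_add_left (h j).mρ]
      exact add_le_add (h j).iρ (h j).fi
    · rw [ENNReal.tsum_add]
      exact ENNReal.add_lt_top.2 ⟨sum_quarter.lt_top, sum_quarter.lt_top⟩
  · intro γ hγ t0 ht0 hU0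
    rcases γ.len_nonneg.eq_or_lt with hl | hl
    · refine ⟨1, one_pos, fun t ht _ => ?_⟩
      have : t = t0 := by linarith [ht.1, ht.2, ht0.1, ht0.2]
      rwa [this]
    have hsum : ∑' j, γ.integral (fun x => ρ j x + f j x) ≠ ∞ := by
      unfold Curve.integral at *
      rwa [lintegral_tsum fun j => γ.measurable_comp (hm j)] at hγ
    have ht := ENNReal.tendsto_atTop_zero_of_tsum_ne_top hsum
    have hpos : 0 < min (1 / 2 : ℝ≥0∞) (1 / 2 * ENNReal.ofReal γ.len) := by
      refine lt_min (by simp) (ENNReal.mul_pos (by simp) (by simpa using hl))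
    obtain ⟨j, hj⟩ := ((tendsto_order.1 ht).2 _ hpos).exists
    have j1 : γ.integral (ρ j) < 1 / 2 :=
      ((γ.integral_mono fun x => le_self_add).trans_lt hj).trans_le (min_le_left _ _)
    have j2 : γ.integral (f j) < 1 / 2 * ENNReal.ofReal γ.len :=
      ((γ.integral_mono fun x => le_add_self).trans_lt hj).trans_le (min_le_right _ _)
    have havoid : ∀ t ∈ Icc 0 γ.len, γ.toFun t ∉ G j := by
      intro t1 ht1 hmem
      refine absurd j2 (not_lt.2 ?_)
      have hD := (h j).ug.dom γ le_rfl le_rfl (fun t _ => mem_univ _)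
      have hf : ∀ t ∈ Icc 0 γ.len, (1 / 2 : ℝ≥0∞) ≤ f j (γ.toFun t) := by
        intro t ht
        refine le_trans ?_ ((h j).lef _)
        have h1 : ENNReal.ofReal |η j (γ.toFun t1) - η j (γ.toFun t)| ≤ 1 / 2 := by
          have hI : ∀ s t, 0 ≤ s → s ≤ t → t ≤ γ.len →
              ENNReal.ofReal |η j (γ.toFun s) - η j (γ.toFun t)| ≤ 1 / 2 := fun s t hs hst ht => by
            refine (hD s t hs hst ht).trans (le_trans ?_ j1.le)
            rw [Curve.integral_Ioc]
            exact lintegral_mono_set (Ioc_subset_Ioc hs ht)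
          rcases le_total t1 t with h' | h'
          · exact hI t1 t ht1.1 h' ht.2
          · rw [abs_sub_comm]; exact hI t t1 ht.1 h' ht1.2
        have e2 : (1 / 2 : ℝ≥0∞) = ENNReal.ofReal (1 / 2) := by
          rw [ENNReal.ofReal_div_of_pos (by norm_num)]; simp
        rw [(h j).one _ hmem, e2, ENNReal.ofReal_le_ofReal_iff (by norm_num), abs_le] at h1
        rw [e2]
        exact ENNReal.ofReal_le_ofReal (by linarith [h1.2])
      calc 1 / 2 * ENNReal.ofReal γ.len = ∫⁻ t in Icc 0 γ.len, (1 / 2 : ℝ≥0∞) := by simp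
        _ ≤ _ := setLIntegral_mono' measurableSet_Icc hf
    obtain ⟨δ, hδ, hδ'⟩ := γ.nhd (hG j) ht0 (Or.inl hU0)
    exact ⟨δ, hδ, fun t ht hlt => (hδ' t ht hlt).resolve_right (havoid t ht)⟩

lemma qU_null {μ : Measure X} {U : Set X} {G : ℕ → Set X} {η : ℕ → X → ℝ} {ρ f : ℕ → X → ℝ≥0∞}
    (hG : ∀ j, IsOpen (U ∪ G j)) (h : ∀ j, CapData μ (G j) ((1 / 4) ^ j) (η j) (ρ j) (f j)) :
    NullMeasurableSet U μ := by
  have hz : μ (⋂ j, G j) = 0 := by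
    have hle : ∀ j, μ (⋂ j, G j) ≤ (1 / 4) ^ j := fun j => by
      refine (measure_mono (iInter_subset G j)).trans (le_trans ?_ (h j).fi)
      refine le_trans (measure_mono (t := {x | 1 ≤ f j x}) fun x hx => ?_) ?_
      · have := (h j).lef x
        rwa [(h j).one x hx, ENNReal.ofReal_one] at this
      · have := mul_meas_ge_le_lintegral₀ (μ := μ) (h j).mf.aemeasurable 1
        rwa [one_mul] at this
    have ht : Tendsto (fun j : ℕ => (1 / 4 : ℝ≥0∞) ^ j) atTop (𝓝 0) :=
      ENNReal.tendsto_pow_atTop_nhds_zero_of_lt_one (by simp)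
    exact le_antisymm (ge_of_tendsto' ht hle) bot_le
  have hm : MeasurableSet (⋂ j, (U ∪ G j)) := MeasurableSet.iInter fun j => (hG j).measurableSet
  refine NullMeasurableSet.congr hm.nullMeasurableSet ?_
  rw [← union_iInter]
  exact union_ae_eq_left_of_ae_eq_empty (ae_eq_empty.2 hz)

lemma glue {μ : Measure X} {U G Ω : Set X} (hG : IsOpen G) (hΩ : IsOpen Ω) (hUΩ : U ⊆ Ω)
    {v φ η : X → ℝ} {ρv ρφ ρη b r : X → ℝ≥0∞} (hv : UGOn v ρv U) (hφ : UGOn φ ρφ Ω)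
    (hη : UGOn η ρη univ) (h0 : ∀ x, 0 ≤ η x) (h1 : ∀ x, η x ≤ 1) (hηG : ∀ x ∈ G, η x = 1)
    (hηm : AEMeasurable η μ) (mv : Measurable ρv) (mφ : Measurable ρφ) (mη : Measurable ρη)
    (mb : AEMeasurable b μ) (mr : Measurable r)
    (iv : ∫⁻ x, ρv x ∂μ < ∞) (iφ : ∫⁻ x, ρφ x ∂μ < ∞) (iη : ∫⁻ x, ρη x ∂μ < ∞)
    (ir : ∫⁻ x, r x ∂μ < ∞) (hb : ∀ x ∈ U, ENNReal.ofReal |v x - φ x| ≤ b x)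
    (hr : ∀ γ : Curve X, γ.integral r ≠ ∞ →
      ∀ t0 ∈ Icc 0 γ.len, γ.toFun t0 ∈ U →
        ∃ δ > 0, ∀ t ∈ Icc 0 γ.len, |t - t0| < δ → γ.toFun t ∈ U) :
    IsWeakUpperGradientOn μ (fun x => (1 - η x) * v x + η x * φ x)
      (fun x => ENNReal.ofReal (1 - η x) * ρv x + ENNReal.ofReal (η x) * ρφ x + b x * ρη x)
      (U ∪ (G ∩ Ω)) := by
  refine ⟨((((hηm.const_sub 1).ennreal_ofReal).mul mv.aemeasurable).add
    ((hηm.ennreal_ofReal).mul mφ.aemeasurable)).add (mb.mul mη.aemeasurable), ?_⟩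
  refine zeroMod_of (fun x => (r x + ρv x) + (ρφ x + ρη x)) ((mr.add mv).add (mφ.add mη)) ?_ ?_
  · have hA : Measurable fun x => r x + ρv x := mr.add mv
    rw [lintegral_add_left hA, lintegral_add_left mr, lintegral_add_left mφ]
    exact ENNReal.add_lt_top.2 ⟨ENNReal.add_lt_top.2 ⟨ir, iv⟩, ENNReal.add_lt_top.2 ⟨iφ, iη⟩⟩
  · rintro γ ⟨hγ, hnot⟩ hfin
    obtain ⟨c1, c2⟩ := integral_add_ne_top hfin
    obtain ⟨cr, cv⟩ := integral_add_ne_top c1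
    obtain ⟨cφ, cη⟩ := integral_add_ne_top c2
    refine hnot (ugineq_of_dom (dom_cover γ (f := fun x => (1 - η x) * v x + η x * φ x)
      (a := fun x => ENNReal.ofReal (1 - η x) * ρv x + ENNReal.ofReal (η x) * ρφ x + b x * ρη x) fun t0 ht0 => ?_))
    by_cases hU : γ.toFun t0 ∈ U
    · refine ⟨U, hr γ cr t0 ht0 hU, fun p q hp hpq hq hin => ?_⟩
      exact curve_leibniz γ hp hq (hv.dom γ hp hq hin) (hφ.dom γ hp hq fun t ht => hUΩ (hin t ht))
        (hη.dom γ hp hq fun t _ => mem_univ _) mv mφ mη cv cφ cη (fun t _ => ⟨h0 _, h1 _⟩)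
        (fun t ht => hb _ (hin t ht))
    · have hGΩ := (hγ t0 ht0).resolve_left hU
      refine ⟨G ∩ Ω, γ.nhd (hG.inter hΩ) ht0 hGΩ, fun p q hp hpq hq hin => ?_⟩
      intro s t hs hst ht
      have := (hφ.dom γ hp hq fun t ht => (hin t ht).2).mono_right
        (a' := fun t => ENNReal.ofReal (1 - η (γ.toFun t)) * ρv (γ.toFun t) +
          ENNReal.ofReal (η (γ.toFun t)) * ρφ (γ.toFun t) + b (γ.toFun t) * ρη (γ.toFun t))
        (fun t ht => by
          rw [hηG _ (hin t ht).1, ENNReal.ofReal_one, one_mul]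
          exact le_self_add.trans' le_add_self) s t hs hst ht
      have e1 : ∀ t ∈ Icc p q, (1 - η (γ.toFun t)) * v (γ.toFun t) + η (γ.toFun t) * φ (γ.toFun t)
          = φ (γ.toFun t) := fun t ht => by rw [hηG _ (hin t ht).1]; ring
      simp only at this ⊢
      rw [e1 s ⟨hs, hst.trans ht⟩, e1 t ⟨hs.trans hst, ht⟩]
      exact this


/-- truncation -/
def tr (M s : ℝ) : ℝ := max (-M) (min M s)

lemma tr_lip (M s t : ℝ) : |tr M s - tr M t| ≤ |s - t| := by
  unfold tr
  refine (abs_max_sub_max_le_max _ _ _ _).trans ?_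
  rw [sub_self, abs_zero, max_eq_right (abs_nonneg _)]
  refine (abs_min_sub_min_le_max _ _ _ _).trans ?_
  rw [sub_self, abs_zero, max_eq_right (abs_nonneg _)]
lemma tr_abs {M : ℝ} (hM : 0 ≤ M) (s : ℝ) : |tr M s| ≤ M :=
  abs_le.2 ⟨le_max_left _ _, max_le (by linarith) (min_le_left _ _)⟩
lemma tr_eq {M s : ℝ} (h : |s| ≤ M) : tr M s = s := by
  rw [abs_le] at h
  unfold tr
  rw [min_eq_right h.2, max_eq_right h.1]
lemma tr_sub {M : ℝ} (hM : 0 ≤ M) (s : ℝ) : |tr M s - s| ≤ |s| := by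
  rcases le_total |s| M with h | h
  · rw [tr_eq h]; simp
  · unfold tr
    rcases le_total 0 s with hs | hs
    · rw [abs_of_nonneg hs] at *
      rw [min_eq_left h, max_eq_right (by linarith), abs_le]; constructor <;> linarith
    · rw [abs_of_nonpos hs] at *
      rw [min_eq_right (by linarith), max_eq_left (by linarith), abs_le]; constructor <;> linarith
lemma tr_cont (M : ℝ) : Continuous (tr M) := by unfold tr; fun_prop

lemma tr_tendsto (s : ℝ) {M : ℕ → ℝ} (hM : Tendsto M atTop atTop) :
    Tendsto (fun n => tr (M n) s) atTop (𝓝 s) := by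
  refine tendsto_const_nhds.congr' ?_
  filter_upwards [hM.eventually_ge_atTop |s|] with n hn
  exact (tr_eq hn).symm

lemma UGOn.tr {v : X → ℝ} {ρ : X → ℝ≥0∞} {A : Set X} (h : UGOn v ρ A) (M : ℝ) :
    UGOn (fun x => tr M (v x)) ρ A := fun γ hγ =>
  (ENNReal.ofReal_le_ofReal (tr_lip _ _ _)).trans (h γ hγ)

lemma cap_tends {μ : Measure X} {G : ℕ → Set X} {η : ℕ → X → ℝ} {ρ f : ℕ → X → ℝ≥0∞}
    (h : ∀ j, CapData μ (G j) ((1 / 4) ^ j) (η j) (ρ j) (f j)) :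
    ∀ᵐ x ∂μ, Tendsto (fun j => η j x) atTop (𝓝 0) := by
  have h1 : ∫⁻ x, ∑' j, f j x ∂μ ≠ ∞ := by
    rw [lintegral_tsum fun j => (h j).mf.aemeasurable]
    exact ne_top_of_le_ne_top sum_quarter (ENNReal.tsum_le_tsum fun j => (h j).fi)
  filter_upwards [ae_lt_top' (Measurable.ennreal_tsum fun j => (h j).mf).aemeasurable h1] with x hx
  have := ENNReal.tendsto_atTop_zero_of_tsum_ne_top hx.ne
  have h2 : Tendsto (fun j => ENNReal.ofReal (η j x)) atTop (𝓝 0) :=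
    tendsto_of_tendsto_of_tendsto_of_le_of_le tendsto_const_nhds this (fun _ => bot_le)
      fun j => (h j).lef x
  have h3 := (ENNReal.tendsto_toReal ENNReal.zero_ne_top).comp h2
  refine h3.congr fun j => ?_
  simp [(h j).nn x]

lemma aem_U {μ : Measure X} [ProperSpace X] {Cd CP lam : ℝ} (hd : Doubling μ Cd)
    (hp : Poincare μ CP lam) {U : Set X}
    {G : ℕ → Set X} {η : ℕ → X → ℝ} {ρ f : ℕ → X → ℝ≥0∞} (hGo : ∀ j, IsOpen (G j))
    (hG : ∀ j, IsOpen (U ∪ G j)) (h : ∀ j, CapData μ (G j) ((1 / 4) ^ j) (η j) (ρ j) (f j))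
    {v : X → ℝ} {ρv : X → ℝ≥0∞} (hv : UGOn v ρv U) (mv : Measurable ρv) (iv : ∫⁻ x, ρv x ∂μ < ∞) :
    AEMeasurable v (μ.restrict U) := by
  have := hd.locFin
  obtain ⟨r, r1, r2, r3⟩ := path_open hG h
  have key : ∀ M : ℕ, AEMeasurable (fun x => tr M (v x)) (μ.restrict U) := by
    intro M
    have hMn : (0 : ℝ) ≤ M := M.cast_nonneg
    have hj : ∀ j, AEMeasurable (fun x => (1 - η j x) * tr M (v x) + η j x * 0) (μ.restrict U) := by
      intro j
      have hρt : ∫⁻ x, ρ j x ∂μ < ∞ := lt_of_le_of_lt (h j).iρ (ENNReal.pow_lt_top (by simp))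
      have hw := glue (μ := μ) (hGo j) isOpen_univ (subset_univ U) (hv.tr M) (φ := fun _ => 0) (ρφ := 0)
        (fun γ _ => by unfold UGIneq; simp) (h j).ug (h j).nn (h j).le1 (h j).one (h j).aem mv
        measurable_const (h j).mρ (b := fun _ => ENNReal.ofReal M) aemeasurable_const r1 iv (by simp)
        hρt r2
        (fun x _ => ENNReal.ofReal_le_ofReal (by rw [sub_zero]; exact tr_abs hMn _)) r3
      rw [inter_univ] at hw
      obtain ⟨σ, s1, s2, s3, s4⟩ := lemmaR hw (ε := 1) one_ne_zero
      have hfin : ∫⁻ x, σ x ∂μ < ∞ := by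
        refine s3.trans_lt (ENNReal.add_lt_top.2 ⟨?_, by simp⟩)
        calc _ ≤ ∫⁻ x, (ρv x + ENNReal.ofReal M * ρ j x) ∂μ := by
              refine (lintegral_mono' Measure.restrict_le_self fun x => ?_)
              simp only [Pi.zero_apply, mul_zero, add_zero]
              gcongr
              refine mul_le_of_le_one_left bot_le ?_
              rw [ENNReal.ofReal_le_one]; linarith [(h j).nn x]
          _ < ∞ := by
              rw [lintegral_add_left mv, lintegral_const_mul _ (h j).mρ]
              exact ENNReal.add_lt_top.2 ⟨iv, ENNReal.mul_lt_top (by simp) hρt⟩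
      refine (mec hd hp (hG j) (M := M) (fun x _ => ?_) s1 hfin s4).mono_set subset_union_left
      rw [mul_zero, add_zero, abs_mul, abs_of_nonneg (by linarith [(h j).le1 x])]
      refine le_trans (mul_le_of_le_one_left (abs_nonneg _) (by linarith [(h j).nn x])) (tr_abs hMn _)
    refine aemeasurable_of_tendsto_metrizable_ae atTop hj ?_
    filter_upwards [ae_restrict_of_ae (cap_tends h)] with x hx
    have := ((hx.const_sub 1).mul_const (tr M (v x))).add (hx.mul_const 0)
    simpa using this
  refine aemeasurable_of_tendsto_metrizable_ae' key (ae_of_all _ fun x => ?_)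
  exact tr_tendsto _ tendsto_natCast_atTop_atTop

lemma conv_mul {ν : Measure X} {f : ℕ → X → ℝ≥0∞} {C : ℝ≥0∞} (hC : C ≠ ∞) (hf : ∀ i x, f i x ≤ C)
    {S : ℕ → Set X} (hS : ∀ k, MeasurableSet (S k)) (hcov : ∀ᵐ x ∂ν, ∃ k, x ∈ S k)
    (hlim : ∀ k, Tendsto (fun i => ∫⁻ x in S k, f i x ∂ν) atTop (𝓝 0))
    {ρ : X → ℝ≥0∞} (mρ : Measurable ρ) (iρ : ∫⁻ x, ρ x ∂ν ≠ ∞) :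
    Tendsto (fun i => ∫⁻ x, f i x * ρ x ∂ν) atTop (𝓝 0) := by
  set E : ℕ → Set X := fun n => {x | ρ x ≤ n} ∩ ⋃ k : Fin n, S k with hE
  have hEm : ∀ n, MeasurableSet (E n) := fun n =>
    (measurableSet_le mρ measurable_const).inter (MeasurableSet.iUnion fun k => hS k)
  have htail : Tendsto (fun n => ∫⁻ x in (E n)ᶜ, ρ x ∂ν) atTop (𝓝 0) := by
    have h1 : Tendsto (fun n => ∫⁻ x, (E n)ᶜ.indicator ρ x ∂ν) atTop (𝓝 (∫⁻ x, 0 ∂ν)) := by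
      refine tendsto_lintegral_of_dominated_convergence ρ (fun n => mρ.indicator (hEm n).compl)
        (fun n => ae_of_all _ fun x => indicator_le_self _ _ _) iρ ?_
      filter_upwards [hcov, ae_lt_top mρ iρ] with x ⟨k, hk⟩ hx
      refine tendsto_const_nhds.congr' ?_
      obtain ⟨n0, hn0⟩ := ENNReal.exists_nat_gt hx.ne
      filter_upwards [eventually_ge_atTop (max n0 (k + 1))] with n hn
      rw [indicator_of_notMem]
      rw [notMem_compl_iff]
      refine ⟨?_, mem_iUnion.2 ⟨⟨k, by have := le_max_right n0 (k + 1); omega⟩, hk⟩⟩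
      refine hn0.le.trans ?_
      exact_mod_cast (le_max_left _ _).trans hn
    rw [lintegral_zero] at h1
    exact h1.congr fun n => lintegral_indicator (hEm n).compl _
  have hCt : Tendsto (fun n => C * ∫⁻ x in (E n)ᶜ, ρ x ∂ν) atTop (𝓝 0) := by
    have := ENNReal.Tendsto.const_mul htail (Or.inr hC)
    rwa [mul_zero] at this
  refine ENNReal.tendsto_nhds_zero.2 fun ε hε => ?_
  have hε2 : 0 < ε / 2 := ENNReal.half_pos hε.ne'
  obtain ⟨n, hn⟩ := (ENNReal.tendsto_nhds_zero.1 hCt _ hε2).exists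
  have hsum : Tendsto (fun i => n * ∑ k : Fin n, ∫⁻ x in S k, f i x ∂ν) atTop (𝓝 0) := by
    have h1 := tendsto_finsetSum Finset.univ (fun (k : Fin n) _ => hlim k)
    rw [Finset.sum_const_zero] at h1
    have := ENNReal.Tendsto.const_mul h1 (Or.inr (ENNReal.natCast_ne_top n))
    rwa [mul_zero] at this
  filter_upwards [ENNReal.tendsto_nhds_zero.1 hsum _ hε2] with i hi
  rw [← lintegral_add_compl _ (hEm n), ← ENNReal.add_halves ε]
  refine add_le_add (le_trans ?_ hi) (le_trans ?_ hn)
  · calc _ ≤ ∫⁻ x in E n, n * f i x ∂ν := setLIntegral_mono' (hEm n) fun x hx => by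
          rw [mul_comm]; gcongr; exact hx.1
      _ = n * ∫⁻ x in E n, f i x ∂ν := lintegral_const_mul' _ _ (ENNReal.natCast_ne_top n)
      _ ≤ _ := by
          gcongr
          refine (lintegral_mono_set inter_subset_right).trans ((lintegral_iUnion_le _ _).trans ?_)
          rw [tsum_fintype]
  · rw [← lintegral_const_mul' _ _ hC]
    exact lintegral_mono fun x => by gcongr; exact hf i x


lemma L1LocConv.mono {μ : Measure X} {A B : Set X} {v : ℕ → X → ℝ} {u : X → ℝ}
    (h : L1LocConv μ A v u) (hBA : B ⊆ A) : L1LocConv μ B v u := fun x hx => by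
  obtain ⟨r, hr, ht⟩ := h x (hBA hx)
  exact ⟨r, hr, tendsto_of_tendsto_of_tendsto_of_le_of_le tendsto_const_nhds ht (fun _ => bot_le)
    fun i => lintegral_mono_set (inter_subset_inter_left _ hBA)⟩

lemma L1LocConv.sub {μ : Measure X} {A : Set X} {v : ℕ → X → ℝ} {u : X → ℝ}
    (h : L1LocConv μ A v u) {k : ℕ → ℕ} (hk : ∀ n, n ≤ k n) : L1LocConv μ A (fun n => v (k n)) u :=
  fun x hx => by
  obtain ⟨r, hr, ht⟩ := h x hx
  exact ⟨r, hr, ht.comp (tendsto_atTop_mono hk tendsto_id)⟩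

lemma tr_conv {μ : Measure X} {A Ω : Set X} {v : ℕ → X → ℝ} {u : X → ℝ} (hu : MemL1Loc μ Ω u)
    (hA : A ⊆ Ω) (h : L1LocConv μ A v u) {M : ℕ → ℝ} (hM : Tendsto M atTop atTop)
    (hM0 : ∀ n, 0 ≤ M n) : L1LocConv μ A (fun n x => tr (M n) (v n x)) u := by
  intro x hx
  obtain ⟨r, hr, ht⟩ := h x hx
  obtain ⟨r', hr', hi⟩ := hu.2 x (hA hx)
  have hum : AEMeasurable u (μ.restrict (A ∩ ball x (min r r'))) :=
    hu.1.mono_set (inter_subset_left.trans hA)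
  have hm : ∀ n, AEMeasurable (fun y => ENNReal.ofReal |tr (M n) (u y) - u y|)
      (μ.restrict (A ∩ ball x (min r r'))) := fun n =>
    ((((tr_cont _).measurable.comp_aemeasurable hum).sub hum).abs).ennreal_ofReal
  have h1 : Tendsto (fun n => ∫⁻ y in A ∩ ball x (min r r'), ENNReal.ofReal |tr (M n) (u y) - u y| ∂μ)
      atTop (𝓝 (∫⁻ y in A ∩ ball x (min r r'), 0 ∂μ)) := by
    refine tendsto_lintegral_of_dominated_convergence' (fun y => ENNReal.ofReal |u y|) hm
      (fun n => ae_of_all _ fun y => ENNReal.ofReal_le_ofReal (tr_sub (hM0 n) _)) ?_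
      (ae_of_all _ fun y => ?_)
    · exact ((lintegral_mono_set (inter_subset_inter hA (ball_subset_ball (min_le_right _ _)))).trans_lt hi).ne
    · have := ((tr_tendsto (u y) hM).sub_const (u y)).abs
      have := ENNReal.tendsto_ofReal this
      simpa using this
  rw [lintegral_zero] at h1
  have h2 := h1.add ht
  rw [add_zero] at h2
  refine ⟨min r r', lt_min hr hr', tendsto_of_tendsto_of_tendsto_of_le_of_le tendsto_const_nhds h2
    (fun _ => bot_le) fun n => ?_⟩
  calc _ ≤ ∫⁻ y in A ∩ ball x (min r r'), (ENNReal.ofReal |tr (M n) (u y) - u y| +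
            ENNReal.ofReal |v n y - u y|) ∂μ := lintegral_mono fun y => by
          rw [← ENNReal.ofReal_add (abs_nonneg _) (abs_nonneg _)]
          refine ENNReal.ofReal_le_ofReal ?_
          change |tr (M n) (v n y) - u y| ≤ _
          have h3 := tr_lip (M n) (v n y) (u y)
          have h4 := abs_sub_le (tr (M n) (v n y)) (tr (M n) (u y)) (u y)
          linarith
    _ ≤ _ := by
          rw [lintegral_add_left' (hm n)]
          gcongr
          exact min_le_left _ _

lemma abs_cont {μ : Measure X} [ProperSpace X] {Cd CP lam : ℝ} (hd : Doubling μ Cd)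
    (hp : Poincare μ CP lam) {Ω : Set X} (hΩ : IsOpen Ω) {u : X → ℝ} (hu : MemL1Loc μ Ω u)
    {G : ℕ → Set X} {η : ℕ → X → ℝ} {ρ f : ℕ → X → ℝ≥0∞}
    (h : ∀ j, CapData μ (G j) ((1 / 4) ^ j) (η j) (ρ j) (f j))
    {φ : ℕ → X → ℝ} {ρφ : ℕ → X → ℝ≥0∞} (hφ : ∀ i, UGOn (φ i) (ρφ i) Ω) (mφ : ∀ i, Measurable (ρφ i))
    {s : ℝ≥0∞} (hs : s ≠ 0) (hst : s ≠ ∞) (hν : tvOpen μ Ω u ≠ ∞)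
    (hi : ∀ i, ∫⁻ x, ρφ i x ∂μ ≤ tvOpen μ Ω u + s / 2) (hc : L1LocConv μ Ω φ u) :
    ∃ j, ∀ᶠ i in atTop, ∫⁻ x in Ω, ENNReal.ofReal (η j x) * ρφ i x ∂μ ≤ s := by
  by_contra hcon
  push Not at hcon
  have hs2t : s / 2 ≠ ∞ := ENNReal.div_ne_top hst (by simp)
  have hs4 : s / 4 ≠ 0 := (ENNReal.div_pos hs (by simp)).ne'
  choose k hk1 hk2 using fun j => ((hcon j).and_eventually (eventually_ge_atTop j)).exists
  have hhalf : Tendsto (fun j : ℕ => (1 / 2 : ℝ≥0∞) ^ j) atTop (𝓝 0) :=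
    ENNReal.tendsto_pow_atTop_nhds_zero_of_lt_one (by simp)
  obtain ⟨J, hJ⟩ := eventually_atTop.1 (ENNReal.tendsto_nhds_zero.1 hhalf (s / 4) (pos_iff_ne_zero.2 hs4))
  have hmul : ∀ j : ℕ, (2 : ℝ≥0∞) ^ j * (1 / 4) ^ j = (1 / 2) ^ j := fun j => by
    rw [← mul_pow]
    congr 1
    rw [one_div, one_div, show (4 : ℝ≥0∞) = 2 * 2 by norm_num, ENNReal.mul_inv (by simp) (by simp),
      ← mul_assoc, ENNReal.mul_inv_cancel (by simp) (by simp), one_mul]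
  have hofr : ∀ j : ℕ, ENNReal.ofReal ((2 : ℝ) ^ j) = 2 ^ j := fun j => by
    rw [ENNReal.ofReal_pow (by norm_num)]; simp
  have hA : ∀ j, ∫⁻ x in Ω, ENNReal.ofReal (1 - η j x) * ρφ (k j) x ∂μ + s / 2 ≤ tvOpen μ Ω u := by
    intro j
    have e1 : ∫⁻ x in Ω, ENNReal.ofReal (1 - η j x) * ρφ (k j) x ∂μ
        + ∫⁻ x in Ω, ENNReal.ofReal (η j x) * ρφ (k j) x ∂μ ≤ tvOpen μ Ω u + s / 2 := by
      have hm : AEMeasurable (fun x => ENNReal.ofReal (1 - η j x) * ρφ (k j) x) (μ.restrict Ω) :=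
        (((((h j).aem.const_sub 1).ennreal_ofReal).mul (mφ _).aemeasurable).restrict)
      rw [← lintegral_add_left' hm]
      refine le_trans (lintegral_mono' Measure.restrict_le_self fun x => ?_) (hi (k j))
      change _ * _ + _ * _ ≤ _
      rw [← add_mul, ← ENNReal.ofReal_add (by linarith [(h j).le1 x]) ((h j).nn x), sub_add_cancel,
        ENNReal.ofReal_one, one_mul]
    have e2 : ∫⁻ x in Ω, ENNReal.ofReal (1 - η j x) * ρφ (k j) x ∂μ + s ≤ tvOpen μ Ω u + s / 2 :=
      le_trans (by gcongr; exact (hk1 j).le) e1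
    have e3 : s = s / 2 + s / 2 := (ENNReal.add_halves s).symm
    rw [e3, ← add_assoc, ← e3] at e2
    exact (ENNReal.add_le_add_iff_right hs2t).1 e2
  have hs42 : s / 4 + s / 4 = s / 2 := by
    rw [← ENNReal.add_halves (s / 2), ENNReal.div_eq_inv_mul, ENNReal.div_eq_inv_mul,
      ENNReal.div_eq_inv_mul, ← mul_assoc, ← ENNReal.mul_inv (by simp) (by simp)]
    norm_num
  have hs4t : s / 4 ≠ ∞ := ENNReal.div_ne_top hst (by simp)
  have hle : s / 4 ≤ tvOpen μ Ω u := le_trans (by rw [← hs42]; exact le_self_add) (le_add_self.trans (hA 0))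
  have hfin := lemmaC hd hp hΩ (M := fun n => 2 ^ (n + J)) (β := tvOpen μ Ω u - s / 4)
    (w := fun n x => (1 - η (n + J) x) * tr (2 ^ (n + J)) (φ (k (n + J)) x) + η (n + J) x * 0)
    (g := fun n x => ENNReal.ofReal (1 - η (n + J) x) * ρφ (k (n + J)) x +
      ENNReal.ofReal (η (n + J) x) * 0 + 2 ^ (n + J) * ρ (n + J) x) (u := u) ?_ ?_
      (ENNReal.sub_ne_top hν) ?_ ?_
  · have := ENNReal.sub_lt_self hν (ne_of_gt (lt_of_lt_of_le (pos_iff_ne_zero.2 hs4) hle)) hs4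
    exact absurd hfin (not_le.2 this)
  · intro n x hx
    have := (h (n + J)).nn x
    have := (h (n + J)).le1 x
    rw [mul_zero, add_zero, abs_mul, abs_of_nonneg (by linarith)]
    push_cast
    exact le_trans (mul_le_of_le_one_left (abs_nonneg _) (by linarith)) (tr_abs (by positivity) _)
  · intro n
    have H := h (n + J)
    have := glue (μ := μ) (U := Ω) (G := ∅) isOpen_empty hΩ subset_rfl ((hφ (k (n + J))).tr (2 ^ (n + J)))
      (φ := fun _ => 0) (ρφ := fun _ => 0) (fun γ _ => by unfold UGIneq; simp) H.ug H.nn H.le1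
      (fun x hx => hx.elim) H.aem (mφ _) measurable_const H.mρ (b := fun _ => 2 ^ (n + J))
      aemeasurable_const (r := fun _ => 0) measurable_const
      ((hi _).trans_lt (ENNReal.add_lt_top.2 ⟨hν.lt_top, hs2t.lt_top⟩)) (by simp)
      (H.iρ.trans_lt (ENNReal.pow_lt_top (by simp))) (by simp)
      (fun x _ => by
        rw [← hofr]
        exact ENNReal.ofReal_le_ofReal (by rw [sub_zero]; exact tr_abs (by positivity) _))
      (fun γ _ t0 ht0 hm => γ.nhd hΩ ht0 hm)
    rwa [empty_inter, union_empty] at this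
  · intro n
    have H := h (n + J)
    refine ENNReal.le_sub_of_add_le_right hs4t ?_
    refine le_trans ?_ (hA (n + J))
    rw [← hs42, ← add_assoc]
    gcongr
    simp only [mul_zero, add_zero]
    have hm : AEMeasurable (fun x => ENNReal.ofReal (1 - η (n + J) x) * ρφ (k (n + J)) x) (μ.restrict Ω) :=
      ((((H.aem.const_sub 1).ennreal_ofReal).mul (mφ _).aemeasurable).restrict)
    rw [lintegral_add_left' hm]
    gcongr
    rw [lintegral_const_mul _ H.mρ]
    refine le_trans ?_ (hJ (n + J) (by omega))
    rw [← hmul]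
    gcongr
    exact (lintegral_mono' Measure.restrict_le_self le_rfl).trans H.iρ
  · have hpow : Tendsto (fun n : ℕ => (2 : ℝ) ^ (n + J)) atTop atTop :=
      (tendsto_add_atTop_iff_nat J).2 (tendsto_pow_atTop_atTop_of_one_lt (by norm_num))
    have hcv := tr_conv hu subset_rfl (hc.sub (k := fun n => k (n + J)) (fun n => by
      have := hk2 (n + J); omega)) hpow (fun n => by positivity)
    intro x hx
    obtain ⟨r, hr, ht⟩ := hcv x hx
    have h2 := ((tendsto_add_atTop_iff_nat J).2 hhalf).add ht
    rw [add_zero] at h2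
    refine ⟨r, hr, tendsto_of_tendsto_of_tendsto_of_le_of_le tendsto_const_nhds h2
      (fun _ => bot_le) fun n => ?_⟩
    have H := h (n + J)
    calc _ ≤ ∫⁻ y in Ω ∩ ball x r, (2 ^ (n + J) * f (n + J) y +
          ENNReal.ofReal |tr (2 ^ (n + J)) (φ (k (n + J)) y) - u y|) ∂μ := lintegral_mono fun y => by
            refine le_trans ?_ (add_le_add_left (mul_le_mul_right (H.lef y) _) _)
            rw [← hofr, ← ENNReal.ofReal_mul (by positivity),
              ← ENNReal.ofReal_add (mul_nonneg (by positivity) (H.nn y)) (abs_nonneg _)]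
            refine ENNReal.ofReal_le_ofReal ?_
            set T := tr (2 ^ (n + J)) (φ (k (n + J)) y) with hT
            change |(1 - η (n + J) y) * T + η (n + J) y * 0 - u y| ≤ _
            rw [show (1 - η (n + J) y) * T + η (n + J) y * 0 - u y
              = -(T * η (n + J) y) + (T - u y) by ring]
            refine (abs_add_le _ _).trans ?_
            rw [abs_neg, abs_mul, abs_of_nonneg (H.nn y)]
            gcongr
            · exact H.nn y
            · exact tr_abs (by positivity) _
      _ ≤ _ := by
            rw [lintegral_add_left (H.mf.const_mul _), lintegral_const_mul _ H.mf, ← hmul]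
            gcongr
            exact (lintegral_mono' Measure.restrict_le_self le_rfl).trans H.fi


lemma extract_lt {F : ℕ → ℝ≥0∞} {a : ℝ≥0∞} (h : liminf F atTop < a) :
    ∃ k : ℕ → ℕ, StrictMono k ∧ ∀ n, F (k n) < a :=
  extraction_of_frequently_atTop (frequently_lt_of_liminf_lt (by isBoundedDefault) h)

lemma upper {μ : Measure X} [ProperSpace X] [IsLocallyFiniteMeasure μ] {U Ω : Set X} {u : X → ℝ}
    (hΩ : IsOpen Ω) (hUΩ : U ⊆ Ω) :
    (⨅ (v : ℕ → X → ℝ) (g : ℕ → X → ℝ≥0∞) (_ : ∀ i, MemN11Loc μ U (v i))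
        (_ : ∀ i, IsMinimalWUG μ (v i) (g i) U) (_ : L1LocConv μ U v u),
        Filter.liminf (fun i => ∫⁻ x in U, g i x ∂μ) Filter.atTop) ≤ tvOpen μ Ω u := by
  unfold tvOpen
  refine le_iInf fun v => le_iInf fun g => le_iInf fun h1 => le_iInf fun h2 => le_iInf fun h3 => ?_
  refine le_of_forall_gt_imp_ge_of_dense fun a ha => ?_
  obtain ⟨k, hk, hka⟩ := extract_lt ha
  have hfin : ∀ n, ∫⁻ x in U, g (k n) x ∂μ < a := fun n => (lintegral_mono_set hUΩ).trans_lt (hka n)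
  choose m hm1 hm2 using fun n => exists_minimal ((h2 (k n)).1.mono hUΩ) ((hfin n).trans_le le_top)
  refine iInf_le_of_le (fun n => v (k n)) <| iInf_le_of_le m <| iInf_le_of_le (fun n x hx => ?_) <|
    iInf_le_of_le hm1 <| iInf_le_of_le ((h3.mono hUΩ).sub (fun n => hk.le_apply)) ?_
  · obtain ⟨r, hr, K, hK⟩ := h1 (k n) x (hUΩ hx)
    refine ⟨r, hr, ?_⟩
    unfold NNorm
    refine ENNReal.add_lt_top.2 ⟨?_, ?_⟩
    · have hb : ∀ y ∈ Ω ∩ ball x r, ENNReal.ofReal |v (k n) y| ≤ ENNReal.ofReal (|v (k n) x| + K * r) := by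
        intro y hy
        refine ENNReal.ofReal_le_ofReal ?_
        have e1 := hK.dist_le_mul y hy x ⟨hUΩ hx, mem_ball_self hr⟩
        rw [Real.dist_eq] at e1
        have e2 : (K : ℝ) * dist y x ≤ K * r := by gcongr; exact (mem_ball.1 hy.2).le
        have e3 := abs_sub_abs_le_abs_sub (v (k n) y) (v (k n) x)
        linarith
      calc _ ≤ ∫⁻ y in Ω ∩ ball x r, ENNReal.ofReal |v (k n) y| ∂μ :=
            lintegral_mono_set (inter_subset_inter_left _ hUΩ)
        _ ≤ ∫⁻ y in Ω ∩ ball x r, ENNReal.ofReal (|v (k n) x| + K * r) ∂μ :=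
            setLIntegral_mono' (hΩ.measurableSet.inter measurableSet_ball) hb
        _ < ∞ := by
            rw [setLIntegral_const]
            exact ENNReal.mul_lt_top (by simp)
              (lt_of_le_of_lt (measure_mono inter_subset_right) measure_ball_lt_top)
    · refine lt_of_le_of_lt (iInf₂_le (g (k n)) ((h2 (k n)).1.mono (inter_subset_left.trans hUΩ))) ?_
      exact lt_of_le_of_lt (lintegral_mono_set inter_subset_left) ((hfin n).trans_le le_top)
  · refine liminf_le_of_le (by isBoundedDefault) fun b hb => ?_
    obtain ⟨n, hn⟩ := hb.exists
    exact hn.trans ((hm2 n).trans (hfin n).le)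

lemma conv_U {μ : Measure X} [SecondCountableTopology X] {U : Set X} (hU : NullMeasurableSet U μ)
    {F : ℕ → X → ℝ≥0∞} {C : ℝ≥0∞} (hC : C ≠ ∞) (hF : ∀ i x, F i x ≤ C)
    (hl : ∀ x ∈ U, ∃ r > (0 : ℝ), Tendsto (fun i => ∫⁻ y in U ∩ ball x r, F i y ∂μ) atTop (𝓝 0))
    {ρ : X → ℝ≥0∞} (mρ : Measurable ρ) (iρ : ∫⁻ x, ρ x ∂μ ≠ ∞) :
    Tendsto (fun i => ∫⁻ x in U, F i x * ρ x ∂μ) atTop (𝓝 0) := by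
  rcases U.eq_empty_or_nonempty with rfl | hne
  · simp
  choose! R hR hRt using hl
  obtain ⟨t, htU, htc, hcov⟩ := TopologicalSpace.countable_cover_nhdsWithin (s := U)
    (f := fun x => ball x (R x)) fun x hx => mem_nhdsWithin_of_mem_nhds (ball_mem_nhds x (hR x hx))
  have htn : t.Nonempty := by
    obtain ⟨x, hx⟩ := hne
    obtain ⟨y, hy, -⟩ := mem_iUnion₂.1 (hcov hx)
    exact ⟨y, hy⟩
  obtain ⟨c, rfl⟩ := htc.exists_eq_range htn
  refine conv_mul hC hF (S := fun k => ball (c k) (R (c k))) (fun k => measurableSet_ball) ?_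
    (fun k => ?_) mρ (ne_top_of_le_ne_top iρ (lintegral_mono' Measure.restrict_le_self le_rfl))
  · filter_upwards [ae_restrict_mem₀ hU] with x hx
    simpa using hcov hx
  · have := hRt (c k) (htU (mem_range_self k))
    simp only [Measure.restrict_restrict measurableSet_ball]
    simpa only [inter_comm] using this

lemma L1LocConv.both {μ : Measure X} {A B : Set X} {v w : ℕ → X → ℝ} {u : X → ℝ}
    (h1 : L1LocConv μ A v u) (h2 : L1LocConv μ B w u) {x : X} (hA : x ∈ A) (hB : x ∈ B) :
    ∃ r > (0 : ℝ), Tendsto (fun i => ∫⁻ y in A ∩ ball x r, ENNReal.ofReal |v i y - u y| ∂μ) atTop (𝓝 0) ∧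
      Tendsto (fun i => ∫⁻ y in B ∩ ball x r, ENNReal.ofReal |w i y - u y| ∂μ) atTop (𝓝 0) := by
  obtain ⟨r, hr, t1⟩ := h1 x hA
  obtain ⟨r', hr', t2⟩ := h2 x hB
  refine ⟨min r r', lt_min hr hr', tendsto_of_tendsto_of_tendsto_of_le_of_le tendsto_const_nhds t1
    (fun _ => bot_le) fun i => ?_, tendsto_of_tendsto_of_tendsto_of_le_of_le tendsto_const_nhds t2
    (fun _ => bot_le) fun i => ?_⟩
  · exact lintegral_mono_set (inter_subset_inter_right _ (ball_subset_ball (min_le_left _ _)))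
  · exact lintegral_mono_set (inter_subset_inter_right _ (ball_subset_ball (min_le_right _ _)))

lemma glue_conv {μ : Measure X} {U G Ω : Set X} (hG : IsOpen G) (hΩ : IsOpen Ω) (hUΩ : U ⊆ Ω)
    {v φ : ℕ → X → ℝ} {η u : X → ℝ} (h0 : ∀ x, 0 ≤ η x) (h1 : ∀ x, η x ≤ 1)
    (hηG : ∀ x ∈ G, η x = 1) (hum : AEMeasurable u (μ.restrict U))
    (hvm : ∀ i, AEMeasurable (v i) (μ.restrict U)) (hv : L1LocConv μ U v u) (hφ : L1LocConv μ Ω φ u) :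
    L1LocConv μ (U ∪ (G ∩ Ω)) (fun i x => (1 - η x) * v i x + η x * φ i x) u := by
  intro x hx
  have hsub : U ∪ (G ∩ Ω) ⊆ Ω := union_subset hUΩ inter_subset_right
  have hGe : ∀ i, ∀ y ∈ G, (1 - η y) * v i y + η y * φ i y = φ i y := fun i y hy => by
    rw [hηG y hy]; ring
  by_cases hxG : x ∈ G
  · obtain ⟨r, hr, ht⟩ := hφ x (hsub hx)
    obtain ⟨r', hr', hb⟩ := Metric.isOpen_iff.1 hG x hxG
    refine ⟨min r r', lt_min hr hr', tendsto_of_tendsto_of_tendsto_of_le_of_le tendsto_const_nhds ht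
      (fun _ => bot_le) fun i => ?_⟩
    refine (lintegral_mono_set (inter_subset_inter_left _ hsub)).trans
      ((setLIntegral_mono' (g := fun y => ENNReal.ofReal |φ i y - u y|)
        (hΩ.measurableSet.inter measurableSet_ball) fun y hy => ?_).trans
      (lintegral_mono_set (inter_subset_inter_right _ (ball_subset_ball (min_le_left _ _)))))
    change ENNReal.ofReal |(1 - η y) * v i y + η y * φ i y - u y| ≤ _
    rw [hGe i y (hb (ball_subset_ball (min_le_right _ _) hy.2))]
  · have hxU : x ∈ U := hx.resolve_right fun h => hxG h.1
    obtain ⟨r, hr, t1, t2⟩ := hv.both hφ hxU (hUΩ hxU)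
    have h2 := (t1.add t2).add t2
    rw [add_zero, add_zero] at h2
    refine ⟨r, hr, tendsto_of_tendsto_of_tendsto_of_le_of_le tendsto_const_nhds h2
      (fun _ => bot_le) fun i => ?_⟩
    have hm : AEMeasurable (fun y => ENNReal.ofReal |v i y - u y|) (μ.restrict (U ∩ ball x r)) :=
      (((hvm i).sub hum).abs).ennreal_ofReal.mono_set inter_subset_left
    rw [union_inter_distrib_right]
    refine (lintegral_union_le _ _ _).trans (add_le_add ?_ ?_)
    · calc _ ≤ ∫⁻ y in U ∩ ball x r, (ENNReal.ofReal |v i y - u y| + ENNReal.ofReal |φ i y - u y|) ∂μ :=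
            lintegral_mono fun y => by
              rw [← ENNReal.ofReal_add (abs_nonneg _) (abs_nonneg _)]
              exact ENNReal.ofReal_le_ofReal (comb_abs (h0 _) (h1 _))
        _ ≤ _ := by
            rw [lintegral_add_left' hm]
            gcongr
    · refine (setLIntegral_mono' (g := fun y => ENNReal.ofReal |φ i y - u y|)
        ((hG.inter hΩ).measurableSet.inter measurableSet_ball) fun y hy => ?_).trans
        (lintegral_mono_set (inter_subset_inter_left _ inter_subset_right))
      change ENNReal.ofReal |(1 - η y) * v i y + η y * φ i y - u y| ≤ _
      rw [hGe i y hy.1.1]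

lemma lower {μ : Measure X} [ProperSpace X] {Cd CP lam : ℝ} (hd : Doubling μ Cd)
    (hp : Poincare μ CP lam) {U Ω : Set X} (hU : QuasiOpen μ U) {u : X → ℝ}
    (hΩ : IsOpen Ω) (hUΩ : U ⊆ Ω) (hu : MemL1Loc μ Ω u) (hν : tvOpen μ Ω u < ∞)
    {v : ℕ → X → ℝ} {g : ℕ → X → ℝ≥0∞} (hg : ∀ i, IsWeakUpperGradientOn μ (v i) (g i) U)
    (hc : L1LocConv μ U v u) {a : ℝ≥0∞} (ha : a ≠ ∞) (hga : ∀ i, ∫⁻ x in U, g i x ∂μ ≤ a) :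
    tv μ U u ≤ a := by
  have := hd.locFin
  refine ENNReal.le_of_forall_pos_le_add fun ε hε _ => ?_
  set s : ℝ≥0∞ := (ε : ℝ≥0∞) / 3 with hsdef
  have hs0 : s ≠ 0 := (ENNReal.div_pos (by exact_mod_cast hε.ne') (by simp)).ne'
  have hst : s ≠ ∞ := ENNReal.div_ne_top (by simp) (by simp)
  have hs2 : s / 2 / 2 ≠ 0 := by simp [hs0]
  obtain ⟨G, η, ρ, f, hGo, hUG, H⟩ := qdata hd hp hU
  have hUn := qU_null hUG H
  obtain ⟨r, r1, r2, r3⟩ := path_open hUG H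
  -- the approximating sequence in `Ω`
  obtain ⟨φ, ρφ, hφL, hφc, mφ, hφU, hφi⟩ : ∃ (φ : ℕ → X → ℝ) (ρφ : ℕ → X → ℝ≥0∞),
      (∀ i, LocLipOn (φ i) Ω) ∧ L1LocConv μ Ω φ u ∧ (∀ i, Measurable (ρφ i)) ∧
      (∀ i, UGOn (φ i) (ρφ i) Ω) ∧ ∀ i, ∫⁻ x, ρφ i x ∂μ ≤ tvOpen μ Ω u + s / 2 := by
    have hlt : tvOpen μ Ω u < tvOpen μ Ω u + s / 2 / 2 := ENNReal.lt_add_right hν.ne hs2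
    conv_lhs at hlt => unfold tvOpen
    simp only [iInf_lt_iff] at hlt
    obtain ⟨φ, gφ, a1, a2, a3, a4⟩ := hlt
    obtain ⟨k, hk, hka⟩ := extract_lt a4
    choose ρφ b1 b2 b3 b4 using fun n => lemmaR (a2 (k n)).1 hs2
    refine ⟨fun n => φ (k n), ρφ, fun n => a1 _, a3.sub (fun n => hk.le_apply), fun n => (b1 n).measurable, b4,
      fun n => (b3 n).trans ?_⟩
    calc _ ≤ (tvOpen μ Ω u + s / 2 / 2) + s / 2 / 2 := by gcongr; exact (hka n).le
      _ = _ := by rw [add_assoc, ENNReal.add_halves]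
  obtain ⟨j, hj⟩ := abs_cont hd hp hΩ hu H hφU mφ hs0 hst hν.ne hφi hφc
  have hφt : ∀ i, ∫⁻ x, ρφ i x ∂μ < ∞ := fun i => (hφi i).trans_lt
    (ENNReal.add_lt_top.2 ⟨hν, ENNReal.div_lt_top hst (by simp)⟩)
  have K := H j
  have hρt : ∫⁻ x, ρ j x ∂μ < ∞ := lt_of_le_of_lt K.iρ (ENNReal.pow_lt_top (by simp))
  choose ρv b1 b2 b3 b4 using fun n => lemmaR (hg n) hs0
  have hvi : ∀ i, ∫⁻ x, ρv i x ∂μ ≤ a + s := fun i => (b3 i).trans (by gcongr; exact hga i)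
  have hvt : ∀ i, ∫⁻ x, ρv i x ∂μ < ∞ := fun i => (hvi i).trans_lt
    (ENNReal.add_lt_top.2 ⟨ha.lt_top, hst.lt_top⟩)
  have hvm : ∀ i, AEMeasurable (v i) (μ.restrict U) := fun i =>
    aem_U hd hp hGo hUG H (b4 i) (b1 i).measurable (hvt i)
  have hum : AEMeasurable u (μ.restrict U) := hu.1.mono_set hUΩ
  have hφm : ∀ i, AEMeasurable (φ i) (μ.restrict U) := fun i => ((hφL i).aem hΩ).mono_set hUΩ
  have hex : ∀ M : ℕ, ∃ i, M ≤ i ∧ ∫⁻ x in Ω, ENNReal.ofReal (η j x) * ρφ i x ∂μ ≤ s ∧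
      ∫⁻ x in U, ENNReal.ofReal |tr M (v i x) - tr M (φ i x)| * ρ j x ∂μ ≤ s := by
    intro M
    have hMn : (0 : ℝ) ≤ M := M.cast_nonneg
    have ht := conv_U hUn (F := fun i x => ENNReal.ofReal |tr M (v i x) - tr M (φ i x)|)
      (C := ENNReal.ofReal (M + M)) ENNReal.ofReal_ne_top (fun i x => ENNReal.ofReal_le_ofReal
        ((abs_sub _ _).trans (add_le_add (tr_abs hMn _) (tr_abs hMn _)))) (fun x hx => by
        obtain ⟨r, hr, t1, t2⟩ := hc.both (hφc.mono hUΩ) hx hx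
        have h2 := t1.add t2
        rw [add_zero] at h2
        refine ⟨r, hr, tendsto_of_tendsto_of_tendsto_of_le_of_le tendsto_const_nhds h2
          (fun _ => bot_le) fun i => ?_⟩
        have hm : AEMeasurable (fun y => ENNReal.ofReal |v i y - u y|) (μ.restrict (U ∩ ball x r)) :=
          (((hvm i).sub hum).abs).ennreal_ofReal.mono_set inter_subset_left
        change _ ≤ (∫⁻ y in U ∩ ball x r, ENNReal.ofReal |v i y - u y| ∂μ) + _
        rw [← lintegral_add_left' hm]
        refine lintegral_mono fun y => ?_
        change _ ≤ ENNReal.ofReal _ + ENNReal.ofReal _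
        rw [← ENNReal.ofReal_add (abs_nonneg _) (abs_nonneg _)]
        refine ENNReal.ofReal_le_ofReal ((tr_lip _ _ _).trans ?_)
        rw [abs_sub_comm (φ i y)]
        exact abs_sub_le _ _ _) K.mρ hρt.ne
    obtain ⟨i, hi1, hi2, hi3⟩ := ((eventually_ge_atTop M).and (hj.and
      (ENNReal.tendsto_nhds_zero.1 ht s (pos_iff_ne_zero.2 hs0)))).exists
    exact ⟨i, hi1, hi2, hi3⟩
  choose k hk1 hk2 hk3 using hex
  have hW : IsOpen (U ∪ (G j ∩ Ω)) := by
    have : U ∪ (G j ∩ Ω) = (U ∪ G j) ∩ Ω := by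
      rw [union_inter_distrib_left, union_eq_right.2 hUΩ]
    rw [this]; exact (hUG j).inter hΩ
  have hWΩ : U ∪ (G j ∩ Ω) ⊆ Ω := union_subset hUΩ inter_subset_right
  have hsum : a + s + s + s = a + ε := by
    rw [add_assoc, add_assoc, ← add_assoc s, hsdef, ENNReal.add_thirds]
  have hF : ∀ M : ℕ, AEMeasurable (U.indicator fun x =>
      ENNReal.ofReal |tr M (v (k M) x) - tr M (φ (k M) x)|) μ := fun M =>
    (aemeasurable_indicator_iff₀ hUn).2 (((((tr_cont M).measurable.comp_aemeasurable (hvm _)).sub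
      ((tr_cont M).measurable.comp_aemeasurable (hφm _))).abs).ennreal_ofReal)
  refine (iInf_le_of_le _ (iInf_le_of_le hW (iInf_le_of_le subset_union_left ?_)) :
    tv μ U u ≤ a + ε)
  refine lemmaC hd hp hW (M := fun M => (M : ℝ≥0))
    (w := fun M x => (1 - η j x) * tr M (v (k M) x) + η j x * tr M (φ (k M) x))
    (g := fun M x => ENNReal.ofReal (1 - η j x) * ρv (k M) x + ENNReal.ofReal (η j x) * ρφ (k M) x +
      (U.indicator fun x => ENNReal.ofReal |tr M (v (k M) x) - tr M (φ (k M) x)|) x * ρ j x)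
    ?_ ?_ (ENNReal.add_ne_top.2 ⟨ha, by simp⟩) ?_ ?_
  · intro M x hx
    have hMn : (0 : ℝ) ≤ M := M.cast_nonneg
    have e0 := K.nn x
    have e1 := K.le1 x
    have e2 := tr_abs hMn (v (k M) x)
    have e3 := tr_abs hMn (φ (k M) x)
    refine (abs_add_le _ _).trans ?_
    rw [abs_mul, abs_mul, abs_of_nonneg e0, abs_of_nonneg (sub_nonneg.2 e1)]
    push_cast
    nlinarith
  · intro M
    exact glue (hGo j) hΩ hUΩ ((b4 (k M)).tr M) ((hφU (k M)).tr M) K.ug K.nn K.le1 K.one K.aem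
      (b1 _).measurable (mφ _) K.mρ (hF M) r1 (hvt _) (hφt _) hρt r2
      (fun x hx => by rw [indicator_of_mem hx]) r3
  · intro M
    have mA : AEMeasurable (fun x => ENNReal.ofReal (1 - η j x) * ρv (k M) x) μ :=
      (((K.aem.const_sub 1).ennreal_ofReal).mul (b1 _).measurable.aemeasurable)
    have mB : AEMeasurable (fun x => ENNReal.ofReal (η j x) * ρφ (k M) x) μ :=
      ((K.aem.ennreal_ofReal).mul (mφ _).aemeasurable)
    have mAB : AEMeasurable (fun x => ENNReal.ofReal (1 - η j x) * ρv (k M) x +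
      ENNReal.ofReal (η j x) * ρφ (k M) x) μ := mA.add mB
    rw [lintegral_add_left' mAB.restrict, lintegral_add_left' mA.restrict, ← hsum]
    refine add_le_add (add_le_add ?_ ?_) ?_
    · refine (lintegral_mono' Measure.restrict_le_self fun x => ?_).trans (hvi (k M))
      refine mul_le_of_le_one_left bot_le ?_
      rw [ENNReal.ofReal_le_one]; linarith [K.nn x]
    · exact (lintegral_mono_set hWΩ).trans (hk2 M)
    · refine le_trans ?_ (hk3 M)
      rw [← lintegral_indicator₀ hUn]
      refine lintegral_mono' Measure.restrict_le_self fun x => ?_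
      by_cases hx : x ∈ U <;> simp [hx]
  · exact glue_conv (hGo j) hΩ hUΩ (v := fun M x => tr M (v (k M) x)) (φ := fun M x => tr M (φ (k M) x))
      K.nn K.le1 K.one hum
      (fun M => (tr_cont M).measurable.comp_aemeasurable (hvm _))
      (tr_conv hu hUΩ (hc.sub hk1) tendsto_natCast_atTop_atTop fun n => n.cast_nonneg)
      (tr_conv hu subset_rfl (hφc.sub hk1) tendsto_natCast_atTop_atTop fun n => n.cast_nonneg)

theorem total_variation_char_in_quasiopen
    (μ : Measure X) (hcomp : CompleteSpace X)
    (hdoub : ∃ Cd : ℝ, Doubling μ Cd) (hpoin : ∃ CP lam : ℝ, Poincare μ CP lam)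
    (U : Set X) (hU : QuasiOpen μ U) (u : X → ℝ)
    (hfin : ∃ Ω : Set X, IsOpen Ω ∧ U ⊆ Ω ∧ MemL1Loc μ Ω u ∧ tvOpen μ Ω u < ∞) :
    tv μ U u =
      ⨅ (v : ℕ → X → ℝ) (g : ℕ → X → ℝ≥0∞) (_ : ∀ i, MemN11Loc μ U (v i))
        (_ : ∀ i, IsMinimalWUG μ (v i) (g i) U) (_ : L1LocConv μ U v u),
        Filter.liminf (fun i => ∫⁻ x in U, g i x ∂μ) Filter.atTop := by
  obtain ⟨Cd, hd⟩ := hdoub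
  obtain ⟨CP, lam, hp⟩ := hpoin
  obtain ⟨Ω, hΩ, hUΩ, hu, hν⟩ := hfin
  have := hd.locFin
  have := hd.proper hcomp
  apply le_antisymm
  · refine le_iInf fun v => le_iInf fun g => le_iInf fun h1 => le_iInf fun h2 => le_iInf fun h3 => ?_
    refine le_of_forall_gt_imp_ge_of_dense fun a ha => ?_
    rcases eq_or_ne a ∞ with rfl | hat
    · exact le_top
    obtain ⟨k, hk, hka⟩ := extract_lt ha
    exact lower hd hp hU hΩ hUΩ hu hν (fun n => (h2 (k n)).1) (h3.sub (fun n => hk.le_apply)) hat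
      fun n => (hka n).le
  · exact le_iInf fun Ω' => le_iInf fun h1 => le_iInf fun h2 => upper h1 h2

end PaperBV
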